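/- If G is a connected simple graph on n vertices such that every vertex of even degree has at most 3 neighbors of even degree (i.e., the E-subgraph of G has maximum degree at most 3), then pn(G) ≤ ⌈n/2⌉. -/

import Mathlib

open SimpleGraph

variable {V : Type*}

/-- A path decomposition of a simple graph `G`: a list of nontrivial paths of `G`
that are pairwise edge-disjoint and together cover every edge of `G`. -/
structure PathDecomp (G : SimpleGraph V) where
  paths : List (Σ a b : V, G.Walk a b)
  nontrivial : ∀ p ∈ paths, 0 < p.2.2.length
  isPath : ∀ p ∈ paths, p.2.2.IsPath
  edgeDisjoint : paths.Pairwise fun p q => ∀ e, e ∈ p.2.2.edges → e ∉ q.2.2.edges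
  covers : ∀ e ∈ G.edgeSet, ∃ p ∈ paths, e ∈ p.2.2.edges

/-- Cardinality of a path decomposition. -/
def pdCard {G : SimpleGraph V} (D : PathDecomp G) : ℕ := D.paths.length

/-- `ends D u` is the number of paths in `D` having `u` as an end vertex. -/
def ends [DecidableEq V] {G : SimpleGraph V} (D : PathDecomp G) (u : V) : ℕ :=
  (D.paths.filter fun p => p.1 = u ∨ p.2.1 = u).length

/-- The path number: minimum cardinality of a path decomposition. -/
noncomputable def pn (G : SimpleGraph V) : ℕ :=
  sInf {n | ∃ D : PathDecomp G, pdCard D = n}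

/-- Degree as the `ncard` of the neighbor set (no decidability needed). -/
noncomputable def ndeg (G : SimpleGraph V) (v : V) : ℕ := {w | G.Adj v w}.ncard

/-- A SET graph: the set of even-degree vertices consists of exactly three
mutually adjacent vertices, and every odd-degree vertex has at least two
even-degree neighbors. -/
def IsSETGraph (G : SimpleGraph V) : Prop :=
  (∃ a b c : V, a ≠ b ∧ a ≠ c ∧ b ≠ c ∧
      {v : V | Even (ndeg G v)} = {a, b, c} ∧
      G.Adj a b ∧ G.Adj a c ∧ G.Adj b c) ∧
  ∀ v : V, Odd (ndeg G v) →
    ∃ w₁ w₂ : V, w₁ ≠ w₂ ∧ G.Adj v w₁ ∧ G.Adj v w₂ ∧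
      Even (ndeg G w₁) ∧ Even (ndeg G w₂)

section PathLists

/-- The edge joining `a` to the first vertex of a list, as a multiset. -/
def headEdge (a : V) : List V → Multiset (Sym2 V)
  | [] => 0
  | x :: _ => {s(a, x)}

/-- The edges between consecutive vertices of a list. -/
def listEdges : List V → Multiset (Sym2 V)
  | [] => 0
  | x :: l => headEdge x l + listEdges l

theorem listEdges_reverse_append_cons (P : List V) :
    ∀ (a : V) (R : List V), listEdges (P.reverse ++ a :: R) =
      listEdges P + listEdges R + headEdge a P + headEdge a R := by
  induction P with
  | nil => intro a R; simp [listEdges, headEdge, add_comm]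
  | cons x P ih =>
    intro a R
    have h := ih x (a :: R)
    simp only [List.reverse_cons, List.append_assoc, List.singleton_append]
    rw [h]
    simp only [listEdges, headEdge]
    rw [Sym2.eq_swap (a := x) (b := a)]
    abel

theorem listEdges_reverse (l : List V) : listEdges l.reverse = listEdges l := by
  cases l with
  | nil => rfl
  | cons x l =>
    rw [List.reverse_cons, listEdges_reverse_append_cons]
    simp [listEdges, headEdge, add_comm]

theorem mem_of_mem_listEdges {l : List V} {e : Sym2 V} (he : e ∈ listEdges l) {v : V}
    (hv : v ∈ e) : v ∈ l := by
  induction l with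
  | nil => simp [listEdges] at he
  | cons x l ih =>
    simp only [listEdges, Multiset.mem_add] at he
    rcases he with he | he
    · cases l with
      | nil => simp [headEdge] at he
      | cons y l =>
        simp only [headEdge, Multiset.mem_singleton] at he
        subst he
        simp only [Sym2.mem_iff] at hv
        rcases hv with rfl | rfl <;> simp
    · exact List.mem_cons_of_mem _ (ih he)

open Classical in
/-- How many of the two end positions of a list are occupied by `v`. -/
noncomputable def endCount (l : List V) (v : V) : ℕ :=
  (if l.head? = some v then 1 else 0) + (if l.getLast? = some v then 1 else 0)

theorem endCount_reverse (l : List V) (v : V) : endCount l.reverse v = endCount l v := by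
  have h1 : l.reverse.head? = l.getLast? := List.head?_reverse
  have h2 : l.reverse.getLast? = l.head? := List.getLast?_reverse
  rw [endCount, h1, h2, add_comm, endCount]

open Classical in
theorem endCount_through {P R : List V} {a v : V} (hv : v ≠ a) :
    endCount (P.reverse ++ a :: R) v + ((if P.head? = some v then 1 else 0) +
      (if R.head? = some v then 1 else 0)) = endCount P v + endCount R v := by
  have h1 : (P.reverse ++ a :: R).head? = some v ↔ P.getLast? = some v := by
    rcases List.eq_nil_or_concat P with rfl | ⟨Q, x, rfl⟩
    · simp [hv.symm]
    · simp
  have h2 : (P.reverse ++ a :: R).getLast? = some v ↔ R.getLast? = some v := by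
    rcases List.eq_nil_or_concat R with rfl | ⟨Q, x, rfl⟩
    · simp [hv.symm]
    · rw [List.concat_eq_append, ← List.cons_append, ← List.append_assoc, List.getLast?_concat,
        List.getLast?_concat]
  simp only [endCount, h1, h2]
  omega

theorem sum_endCount [Fintype V] {l : List V} (hl : l ≠ []) : ∑ v, endCount l v = 2 := by
  classical
  simp only [endCount, Finset.sum_add_distrib]
  rw [List.head?_eq_some_head hl, List.getLast?_eq_some_getLast hl]
  simp

open Classical in
theorem card_headEdge [Fintype V] {a : V} {l : List V} (v : V) (hl : (a :: l).Nodup) :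
    (∑ w, (headEdge a l).count s(v, w)) =
      (if l = [] then 0 else if v = a then 1 else 0) + (if l.head? = some v then 1 else 0) := by
  cases l with
  | nil => simp [headEdge]
  | cons x l =>
    have hax : a ≠ x := by simp at hl; tauto
    simp only [headEdge, Multiset.count_singleton, List.head?_cons, Option.some.injEq, reduceCtorEq,
      if_false]
    by_cases h1 : v = a
    · subst h1
      have : ∀ w, (s(v, w) = s(v, x)) ↔ w = x := by
        intro w; constructor
        · intro h
          rcases Sym2.eq_iff.mp h with ⟨_, h⟩ | ⟨h, _⟩
          · exact h
          · exact absurd h hax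
        · rintro rfl; rfl
      simp [this, hax.symm]
    · by_cases h2 : x = v
      · subst h2
        have : ∀ w, (s(x, w) = s(a, x)) ↔ w = a := by
          intro w; rw [Sym2.eq_swap (a := a)]
          constructor
          · intro h
            rcases Sym2.eq_iff.mp h with ⟨_, h⟩ | ⟨h, _⟩
            · exact h
            · exact absurd h h1
          · rintro rfl; rfl
        simp [this, h1]
      · have : ∀ w, ¬ (s(v, w) = s(a, x)) := by
          intro w h
          rcases Sym2.eq_iff.mp h with ⟨h, _⟩ | ⟨h, _⟩
          · exact h1 h
          · exact h2 h.symm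
        simp [this, h1, h2]

open Classical in
theorem sum_count_listEdges_add_endCount [Fintype V] {l : List V} (hl : l.Nodup) (v : V) :
    (∑ w, (listEdges l).count s(v, w)) + endCount l v = 2 * l.count v := by
  induction l with
  | nil => simp [listEdges, endCount]
  | cons a l ih =>
    have ih := ih (List.nodup_cons.mp hl).2
    simp only [listEdges, Multiset.count_add, Finset.sum_add_distrib]
    rw [card_headEdge v hl, List.count_cons]
    cases l with
    | nil => simp [listEdges, endCount]; split_ifs <;> simp_all
    | cons x l =>
      simp only [endCount, List.head?_cons, List.getLast?_cons_cons] at ih ⊢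
      simp only [Option.some.injEq, beq_iff_eq, reduceCtorEq, if_false] at ih ⊢
      have : (v = a) = (a = v) := propext eq_comm
      rw [this]
      generalize (∑ w, Multiset.count s(v, w) (listEdges (x :: l))) = A at *
      split_ifs at * <;> omega

end PathLists

open Classical in
/-- `HasEnds G d`: the edges of `G` can be decomposed into paths (some possibly reduced to a
single vertex) such that each `v` occurs exactly `d v` times as an end of a path. -/
def HasEnds (G : SimpleGraph V) (d : V → ℕ) : Prop :=
  ∃ (k : ℕ) (p : Fin k → List V), (∀ i, p i ≠ [] ∧ (p i).Nodup) ∧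
    (∀ e : Sym2 V, ∑ i, (listEdges (p i)).count e = if e ∈ G.edgeSet then 1 else 0) ∧
    ∀ v, ∑ i, endCount (p i) v = d v

section Nbr
variable [Fintype V]

open Classical in
/-- The neighbours of `v`, as a finset. -/
noncomputable def nbr (G : SimpleGraph V) (v : V) : Finset V := Finset.univ.filter (G.Adj v)

theorem mem_nbr {G : SimpleGraph V} {v w : V} : w ∈ nbr G v ↔ G.Adj v w := by simp [nbr]

theorem not_mem_nbr_self {G : SimpleGraph V} {v : V} : v ∉ nbr G v := by simp [mem_nbr]

theorem HasEnds.even {G : SimpleGraph V} {d : V → ℕ} (h : HasEnds G d) (v : V) :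
    Even (d v + (nbr G v).card) := by
  classical
  obtain ⟨k, p, hp, he, hd⟩ := h
  have h1 : (nbr G v).card = ∑ w, ∑ i, (listEdges (p i)).count s(v, w) := by
    rw [nbr, Finset.card_filter]
    refine Finset.sum_congr rfl fun w _ => ?_
    rw [he s(v, w)]
    simp
  rw [Finset.sum_comm] at h1
  have h2 : ∀ i, endCount (p i) v + ∑ w, (listEdges (p i)).count s(v, w) =
      2 * (p i).count v := by
    intro i
    rw [add_comm]
    convert sum_count_listEdges_add_endCount (hp i).2 v
  rw [h1, ← hd, ← Finset.sum_add_distrib, Finset.sum_congr rfl fun i _ => h2 i, ← Finset.mul_sum]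
  exact even_two_mul _

end Nbr

section Rewire

open Classical in
theorem count_headEdge (a x : V) (l : List V) :
    (headEdge a l).count s(a, x) = if l.head? = some x then 1 else 0 := by
  cases l with
  | nil => simp [headEdge]
  | cons y l =>
    simp only [headEdge, Multiset.count_singleton, List.head?_cons, Option.some.injEq]
    congr 1
    rw [Sym2.congr_right]
    exact propext eq_comm

open Classical in
theorem count_headEdge_of_notMem {a : V} {e : Sym2 V} (he : a ∉ e) (l : List V) :
    (headEdge a l).count e = 0 := by
  rw [Multiset.count_eq_zero]
  cases l with
  | nil => simp [headEdge]
  | cons y l =>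
    simp only [headEdge, Multiset.mem_singleton]
    rintro rfl
    simp at he

open Classical in
theorem count_listEdges_of_notMem {a : V} {l : List V} (ha : a ∉ l) (x : V) :
    (listEdges l).count s(a, x) = 0 := by
  rw [Multiset.count_eq_zero]
  intro h
  exact ha (mem_of_mem_listEdges h (by simp))

open Classical in
/-- `p'` is a nonempty path with the same edges away from `a` as `p`; `hd` and `hd'` count the
edges at `a`, and ends are exchanged accordingly. -/
structure Reattached (a : V) (p p' : List V) (hd hd' : V → ℕ) : Prop where
  ne_nil : p' ≠ []
  nodup : p'.Nodup
  count_eq : ∀ e : Sym2 V, a ∉ e → (listEdges p').count e = (listEdges p).count e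
  count_old : ∀ v, (listEdges p).count s(a, v) = hd v
  count_new : ∀ v, (listEdges p').count s(a, v) = hd' v
  ends : ∀ v, v ≠ a → endCount p' v + hd' v = endCount p v + hd v

open Classical in
theorem reattached_through {a : V} {L R L' R' : List V} (hn : (L.reverse ++ a :: R).Nodup)
    (hL : L' = L ∨ L' = L.reverse) (hR : R' = R ∨ R' = R.reverse) :
    Reattached a (L.reverse ++ a :: R) (L'.reverse ++ a :: R')
      (fun v => (if L.head? = some v then 1 else 0) + (if R.head? = some v then 1 else 0))
      (fun v => (if L'.head? = some v then 1 else 0) + (if R'.head? = some v then 1 else 0)) := by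
  have hLp : L'.Perm L := by
    rcases hL with rfl | rfl
    · rfl
    · exact List.reverse_perm L
  have hRp : R'.Perm R := by
    rcases hR with rfl | rfl
    · rfl
    · exact List.reverse_perm R
  have hLe : listEdges L' = listEdges L := by
    rcases hL with rfl | rfl
    · rfl
    · exact listEdges_reverse L
  have hRe : listEdges R' = listEdges R := by
    rcases hR with rfl | rfl
    · rfl
    · exact listEdges_reverse R
  have hLc : ∀ v, endCount L' v = endCount L v := by
    rcases hL with rfl | rfl
    · intro; rfl
    · exact endCount_reverse L
  have hRc : ∀ v, endCount R' v = endCount R v := by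
    rcases hR with rfl | rfl
    · intro; rfl
    · exact endCount_reverse R
  have haL : a ∉ L := by
    intro h
    have := List.nodup_append.mp hn
    exact this.2.2 a (by simpa using h) a (by simp) rfl
  have haR : a ∉ R := (List.nodup_cons.mp (List.nodup_append.mp hn).2.1).1
  refine ⟨by simp, ?_, ?_, ?_, ?_, ?_⟩
  · refine (List.Perm.nodup_iff ?_).mpr hn
    refine List.Perm.append ?_ (List.Perm.cons _ hRp)
    exact (List.reverse_perm _).trans (hLp.trans (List.reverse_perm _).symm)
  · intro e he
    simp [listEdges_reverse_append_cons, hLe, hRe, count_headEdge_of_notMem he]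
  · intro v
    simp [listEdges_reverse_append_cons, count_listEdges_of_notMem haL,
      count_listEdges_of_notMem haR, count_headEdge]
  · intro v
    simp [listEdges_reverse_append_cons, hLe, hRe, count_listEdges_of_notMem haL,
      count_listEdges_of_notMem haR, count_headEdge]
  · intro v hv
    rw [endCount_through hv, endCount_through hv, hLc, hRc]

open Classical in
theorem reattached_free {a : V} {p q : List V} (hn : p.Nodup) (ha : a ∉ p)
    (hq : q = p ∨ q = p.reverse) :
    Reattached a p (a :: q) (fun _ => 0) (fun v => if q.head? = some v then 1 else 0) := by
  have hqp : q.Perm p := by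
    rcases hq with rfl | rfl
    · rfl
    · exact List.reverse_perm p
  have hqe : listEdges q = listEdges p := by
    rcases hq with rfl | rfl
    · rfl
    · exact listEdges_reverse p
  have hqc : ∀ v, endCount q v = endCount p v := by
    rcases hq with rfl | rfl
    · intro; rfl
    · exact endCount_reverse p
  refine ⟨by simp, ?_, ?_, ?_, ?_, ?_⟩
  · rw [List.nodup_cons, hqp.mem_iff, hqp.nodup_iff]
    exact ⟨ha, hn⟩
  · intro e he
    simp [listEdges, hqe, count_headEdge_of_notMem he]
  · intro v
    exact count_listEdges_of_notMem ha v
  · intro v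
    simp [listEdges, hqe, count_listEdges_of_notMem ha, count_headEdge]
  · intro v hv
    have := endCount_through (P := []) (R := q) hv
    simp only [List.reverse_nil, List.nil_append, List.head?_nil, reduceCtorEq, if_false] at this
    rw [← hqc]
    simp only [endCount, List.head?_nil, List.getLast?_nil, reduceCtorEq, if_false] at this ⊢
    omega

theorem reattached_refl {a : V} {p : List V} (hp : p ≠ []) (hn : p.Nodup) (ha : a ∉ p) :
    Reattached a p p (fun _ => 0) (fun _ => 0) :=
  ⟨hp, hn, fun _ _ => rfl, count_listEdges_of_notMem ha, count_listEdges_of_notMem ha,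
    fun _ _ => rfl⟩

/-- The shape of a path decomposition seen from a vertex `a`. Each neighbour `x` of `a` begins a
segment, whose other end is `lam x`; the paths in `free` avoid `a`, and run from `first` to
`last`. -/
structure Fan (V : Type*) where
  k : ℕ
  lam : V → V
  free : Finset (Fin k)
  first : Fin k → V
  last : Fin k → V

/-- `v` is the far end of the segment `inl x`, or an end of the free path `inr j`. -/
def Fan.Att (F : Fan V) (N : Finset V) (v : V) : V ⊕ Fin F.k → Prop
  | .inl x => x ∈ N ∧ F.lam x = v
  | .inr j => j ∈ F.free ∧ (F.first j = v ∨ F.last j = v)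

variable [Fintype V]

open Classical in
theorem HasEnds.rewire {H : SimpleGraph V} {d : V → ℕ} (hd : HasEnds H d) (a : V) :
    ∃ F : Fan V, (∀ v, v ≠ a → d v = ((nbr H a).filter fun x => F.lam x = v).card +
        ∑ j ∈ F.free, ((if F.first j = v then 1 else 0) + (if F.last j = v then 1 else 0))) ∧
      ∀ H' : SimpleGraph V, (∀ u v, u ≠ a → v ≠ a → (H'.Adj u v ↔ H.Adj u v)) →
      ∀ φ : V → V ⊕ Fin F.k,
        (∀ v ∈ nbr H' a, (φ v = .inl v ∧ v ∈ nbr H a) ∨ F.Att (nbr H a) v (φ v)) →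
        Set.InjOn φ (nbr H' a) → (∀ x ∈ nbr H a, ∃ v ∈ nbr H' a, φ v = .inl x) →
        ∃ d', HasEnds H' d' ∧
          (∀ v, v ≠ a → d' v + (if v ∈ nbr H' a then 1 else 0) =
            d v + (if v ∈ nbr H a then 1 else 0)) ∧
          d' a + (nbr H a).card = d a + (nbr H' a).card ∧ ∑ v, d' v = ∑ v, d v := by
  obtain ⟨k, p, hp, he, hdv⟩ := hd
  have hdec : ∀ i, ∃ S : Bool → List V, (a ∈ p i → p i = (S false).reverse ++ a :: S true) ∧
      (a ∉ p i → ∀ b, S b = []) := by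
    intro i
    by_cases ha : a ∈ p i
    · obtain ⟨s, t, hst⟩ := List.append_of_mem ha
      exact ⟨fun b => if b then t else s.reverse, by simp [hst], fun h => absurd ha h⟩
    · exact ⟨fun _ => [], fun h => absurd h ha, by simp⟩
  choose S hthr hfree using hdec
  have hold : ∀ i v, (listEdges (p i)).count s(a, v) =
      ∑ b, if (S i b).head? = some v then 1 else 0 := by
    intro i v
    by_cases ha : a ∈ p i
    · have h1 := hthr i ha
      have h2 := (reattached_through (L' := S i false) (R' := S i true) (h1 ▸ (hp i).2)
        (Or.inl rfl) (Or.inl rfl)).count_old v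
      rw [← h1] at h2
      rw [h2, Fintype.sum_bool, add_comm]
    · rw [count_listEdges_of_notMem ha]
      simp [hfree i ha]
  have hhead : ∀ v, ∑ i, ∑ b, (if (S i b).head? = some v then 1 else 0) =
      if v ∈ nbr H a then 1 else 0 := by
    intro v
    have := he s(a, v)
    rw [Finset.sum_congr rfl fun i _ => hold i v] at this
    rw [this]
    simp [mem_nbr]
  have hmem : ∀ {i b x}, (S i b).head? = some x → x ∈ nbr H a := by
    intro i b x hx
    by_contra hxN
    have h0 := hhead x
    rw [if_neg hxN, Finset.sum_eq_zero_iff] at h0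
    have h1 := h0 i (Finset.mem_univ _)
    rw [Finset.sum_eq_zero_iff] at h1
    have h2 := h1 b (Finset.mem_univ _)
    simp [hx] at h2
  have hlam : ∀ x, ∃ y, ∀ i b, (S i b).head? = some x → (S i b).getLast? = some y := by
    intro x
    by_cases hx : ∃ i b, (S i b).head? = some x
    · obtain ⟨i, b, hib⟩ := hx
      have hne : S i b ≠ [] := by rintro h; simp [h] at hib
      refine ⟨(S i b).getLast hne, fun j c hjc => ?_⟩
      have hij : (i, b) = (j, c) := by
        by_contra hij
        have h0 := hhead x
        rw [if_pos (hmem hib), ← Fintype.sum_prod_type'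
          (f := fun i b => if (S i b).head? = some x then 1 else 0)] at h0
        have h1 : ∑ z ∈ ({(i, b), (j, c)} : Finset (Fin k × Bool)),
            (if (S z.1 z.2).head? = some x then 1 else 0) = 2 := by
          rw [Finset.sum_pair hij]; simp [hib, hjc]
        have h2 := Finset.sum_le_sum_of_subset (f := fun z : Fin k × Bool =>
          if (S z.1 z.2).head? = some x then 1 else 0)
          (Finset.subset_univ ({(i, b), (j, c)} : Finset (Fin k × Bool)))
        omega
      cases hij
      exact List.getLast?_eq_some_getLast hne
    · exact ⟨x, fun i b h => absurd ⟨i, b, h⟩ hx⟩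
  choose lam hlam using hlam
  let fr : Finset (Fin k) := Finset.univ.filter fun i => a ∉ p i
  let F : Fan V := ⟨k, lam, fr, fun i => (p i).head (hp i).1, fun i => (p i).getLast (hp i).1⟩
  refine ⟨F, ?_, ?_⟩
  · intro v hv
    have h1 : ∀ i, endCount (p i) v = (∑ b, if (S i b).getLast? = some v then 1 else 0) +
        if i ∈ fr then ((if F.first i = v then 1 else 0) + (if F.last i = v then 1 else 0))
          else 0 := by
      intro i
      by_cases ha : a ∈ p i
      · have h1 := endCount_through (P := S i false) (R := S i true) hv
        rw [← hthr i ha] at h1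
        have : i ∉ fr := by simp [fr, ha]
        rw [if_neg this]
        simp only [endCount, Fintype.sum_bool] at h1 ⊢
        omega
      · have : i ∈ fr := by simp [fr, ha]
        rw [if_pos this]
        simp [hfree i ha, endCount, List.head?_eq_some_head (hp i).1,
          List.getLast?_eq_some_getLast (hp i).1, F]
    rw [← hdv, Finset.sum_congr rfl fun i _ => h1 i, Finset.sum_add_distrib]
    congr 1
    · have h2 : ∀ i b, (if (S i b).getLast? = some v then 1 else 0) =
          ∑ x, if F.lam x = v then (if (S i b).head? = some x then 1 else 0) else 0 := by
        intro i b
        rcases hS : (S i b).head? with _ | x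
        · have : S i b = [] := by simpa using hS
          simp [this]
        · rw [hlam x i b hS, Finset.sum_eq_single x]
          · simp [F]
          · intro y _ hy
            simp [hy.symm]
          · simp
      simp only [h2]
      rw [Finset.sum_congr rfl fun i _ => Finset.sum_comm, Finset.sum_comm, Finset.card_filter,
        ← Finset.sum_filter_add_sum_filter_not Finset.univ (fun x => x ∈ nbr H a)]
      rw [Finset.filter_mem_eq_inter, Finset.univ_inter]
      have h3 : ∑ x ∈ Finset.univ.filter (fun x => x ∉ nbr H a), ∑ i, ∑ b,
          (if F.lam x = v then (if (S i b).head? = some x then 1 else 0) else 0) = 0 := by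
        refine Finset.sum_eq_zero fun x hx => ?_
        have hx : x ∉ nbr H a := by simpa using hx
        refine Finset.sum_eq_zero fun i _ => Finset.sum_eq_zero fun b _ => ?_
        rw [if_neg fun h => hx (hmem h)]
        simp
      rw [h3, add_zero]
      refine Finset.sum_congr rfl fun x hx => ?_
      have := hhead x
      rw [if_pos hx] at this
      split_ifs with h
      · exact this
      · simp
    · rw [Finset.sum_ite_mem, Finset.univ_inter]
  · intro H' hH' φ hφ hinj hsurj
    have hlast : ∀ {x y}, x ∈ nbr H a → ∀ i b, (S i b).head? = some x →
        ((S i b).reverse.head? = some y ↔ lam x = y) := by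
      intro x y _ i b h
      rw [List.head?_reverse, hlam x i b h]
      simp
    let S' : Fin k → Bool → List V := fun i b =>
      if ∃ x, (S i b).head? = some x ∧ x ∈ nbr H' a ∧ φ x = .inl x then S i b
        else (S i b).reverse
    let Q : Fin k → List V := fun i =>
      if ∃ v ∈ nbr H' a, φ v = .inr i ∧ F.first i = v then p i else (p i).reverse
    let p' : Fin k → List V := fun i =>
      if a ∈ p i then (S' i false).reverse ++ a :: S' i true
        else if ∃ v ∈ nbr H' a, φ v = .inr i then a :: Q i else p i
    have hS' : ∀ i b, S' i b = S i b ∨ S' i b = (S i b).reverse := by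
      intro i b
      simp only [S']
      split_ifs
      · exact Or.inl rfl
      · exact Or.inr rfl
    have hS'head : ∀ i b v, (S' i b).head? = some v ↔
        v ∈ nbr H' a ∧ ∃ x, φ v = .inl x ∧ (S i b).head? = some x := by
      intro i b v
      constructor
      · intro hv
        rcases hS : (S i b).head? with _ | x
        · have h0 : S i b = [] := by simpa using hS
          rcases hS' i b with h | h <;> simp [h, h0] at hv
        · have hxN := hmem hS
          by_cases hc : x ∈ nbr H' a ∧ φ x = .inl x
          · have : S' i b = S i b := if_pos ⟨x, hS, hc⟩
            rw [this, hS] at hv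
            obtain rfl : x = v := by simpa using hv
            exact ⟨hc.1, x, hc.2, rfl⟩
          · have : S' i b = (S i b).reverse := if_neg (by
              rintro ⟨y, hy, hy'⟩
              obtain rfl : x = y := by simpa [hS] using hy
              exact hc hy')
            rw [this, hlast hxN i b hS] at hv
            obtain ⟨w, hw, hwx⟩ := hsurj x hxN
            rcases hφ w hw with ⟨h1, _⟩ | h1
            · obtain rfl : x = w := by
                rw [h1] at hwx
                exact (Sum.inl.inj hwx).symm
              exact absurd ⟨hw, hwx⟩ hc
            · rw [hwx] at h1
              obtain rfl : w = v := h1.2.symm.trans hv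
              exact ⟨hw, x, hwx, rfl⟩
      · rintro ⟨hv, x, hvx, hS⟩
        have hxN := hmem hS
        have hcase : v = x ∨ lam x = v := by
          rcases hφ v hv with ⟨h1, _⟩ | h1
          · left
            rw [h1] at hvx
            exact Sum.inl.inj hvx
          · right
            rw [hvx] at h1
            exact h1.2
        by_cases hc : x ∈ nbr H' a ∧ φ x = .inl x
        · have : S' i b = S i b := if_pos ⟨x, hS, hc⟩
          rw [this, hS, hinj hc.1 hv (hc.2.trans hvx.symm)]
        · have : S' i b = (S i b).reverse := if_neg (by
            rintro ⟨y, hy, hy'⟩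
            obtain rfl : x = y := by simpa [hS] using hy
            exact hc hy')
          rw [this, hlast hxN i b hS]
          rcases hcase with rfl | h
          · exact absurd ⟨hv, hvx⟩ hc
          · exact h
    have hfr : ∀ {v i}, v ∈ nbr H' a → φ v = .inr i →
        i ∈ fr ∧ (F.first i = v ∨ F.last i = v) := by
      intro v i hv hvi
      rcases hφ v hv with ⟨h1, _⟩ | h1
      · rw [h1] at hvi; cases hvi
      · rw [hvi] at h1; exact h1
    have hQ : ∀ i, Q i = p i ∨ Q i = (p i).reverse := by
      intro i
      simp only [Q]
      split_ifs
      · exact Or.inl rfl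
      · exact Or.inr rfl
    have hQhead : ∀ i w, w ∈ nbr H' a → φ w = .inr i → ∀ v,
        ((Q i).head? = some v ↔ v ∈ nbr H' a ∧ φ v = .inr i) := by
      intro i w hw hwi v
      have hwv : (v ∈ nbr H' a ∧ φ v = .inr i) ↔ w = v := by
        constructor
        · rintro ⟨h1, h2⟩
          exact hinj hw h1 (hwi.trans h2.symm)
        · rintro rfl
          exact ⟨hw, hwi⟩
      rw [hwv]
      by_cases hc : F.first i = w
      · have : Q i = p i := if_pos ⟨w, hw, hwi, hc⟩
        rw [this, List.head?_eq_some_head (hp i).1, ← hc]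
        simp [F]
      · have : Q i = (p i).reverse := if_neg (by
          rintro ⟨u, hu, hui, h⟩
          exact hc (h.trans (hinj hu hw (hui.trans hwi.symm))))
        have hl := (hfr hw hwi).2.resolve_left hc
        rw [this, List.head?_reverse, List.getLast?_eq_some_getLast (hp i).1, ← hl]
        simp [F]
    have hR : ∀ i, Reattached a (p i) (p' i)
        (fun v => ∑ b, if (S i b).head? = some v then 1 else 0)
        (fun v => (∑ b, if (S' i b).head? = some v then 1 else 0) +
          if v ∈ nbr H' a ∧ φ v = .inr i then 1 else 0) := by
      intro i
      by_cases ha : a ∈ p i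
      · have h1 := reattached_through (hthr i ha ▸ (hp i).2) (hS' i false) (hS' i true)
        rw [← hthr i ha] at h1
        have h2 : p' i = (S' i false).reverse ++ a :: S' i true := if_pos ha
        rw [h2]
        convert h1 using 2 with v v
        · rw [Fintype.sum_bool, add_comm]
        · have h3 : ¬ (v ∈ nbr H' a ∧ φ v = .inr i) := by
            rintro ⟨h3, h4⟩
            have := (hfr h3 h4).1
            simp [fr, ha] at this
          rw [Fintype.sum_bool, if_neg h3, add_zero, add_comm]
      · have hS0 : ∀ b, S' i b = [] := by
          intro b
          rcases hS' i b with h | h <;> simp [h, hfree i ha]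
        simp only [hfree i ha, hS0, List.head?_nil, reduceCtorEq, if_false, Finset.sum_const_zero,
          zero_add]
        by_cases hc : ∃ v ∈ nbr H' a, φ v = .inr i
        · have h2 : p' i = a :: Q i := (if_neg ha).trans (if_pos hc)
          rw [h2]
          obtain ⟨w, hw, hwi⟩ := hc
          convert reattached_free (hp i).2 ha (hQ i) using 3 with v
          exact (hQhead i w hw hwi v).symm
        · have h2 : p' i = p i := (if_neg ha).trans (if_neg hc)
          rw [h2]
          convert reattached_refl (hp i).1 (hp i).2 ha using 2 with v
          exact if_neg fun h => hc ⟨v, h⟩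
    have hnew : ∀ v, ∑ i, ((∑ b, if (S' i b).head? = some v then 1 else 0) +
          if v ∈ nbr H' a ∧ φ v = .inr i then 1 else 0) = if v ∈ nbr H' a then 1 else 0 := by
      intro v
      simp only [hS'head]
      by_cases hv : v ∈ nbr H' a
      · simp only [hv, true_and, if_true]
        rcases hφv : φ v with x | j
        · have hx : x ∈ nbr H a := by
            rcases hφ v hv with ⟨h1, h2⟩ | h1
            · rw [hφv] at h1
              obtain rfl := Sum.inl.inj h1
              exact h2
            · rw [hφv] at h1
              exact h1.1
          have := hhead x
          rw [if_pos hx] at this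
          simpa using this
        · simp
      · simp [hv]
    refine ⟨fun v => ∑ i, endCount (p' i) v, ⟨k, p', fun i => ⟨(hR i).ne_nil, (hR i).nodup⟩, ?_,
      fun _ => rfl⟩, ?_⟩
    · intro e
      by_cases hae : a ∈ e
      · obtain ⟨v, rfl⟩ := Sym2.mem_iff_exists.mp hae
        rw [Finset.sum_congr rfl fun i _ => (hR i).count_new v, hnew]
        simp [mem_nbr]
      · rw [Finset.sum_congr rfl fun i _ => (hR i).count_eq e hae, he]
        induction e using Sym2.ind with
        | _ u v =>
          simp only [Sym2.mem_iff, not_or] at hae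
          simp only [mem_edgeSet, hH' u v (Ne.symm hae.1) (Ne.symm hae.2)]
    have hoff : ∀ v, v ≠ a → (∑ i, endCount (p' i) v) + (if v ∈ nbr H' a then 1 else 0) =
        d v + (if v ∈ nbr H a then 1 else 0) := by
      intro v hv
      rw [← hnew v, ← hhead v, ← hdv v, ← Finset.sum_add_distrib, ← Finset.sum_add_distrib]
      exact Finset.sum_congr rfl fun i _ => (hR i).ends v hv
    have hsum : ∑ v, ∑ i, endCount (p' i) v = ∑ v, d v := by
      simp only [← hdv]
      rw [Finset.sum_comm, Finset.sum_congr rfl fun i _ => sum_endCount (hR i).ne_nil]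
      rw [Finset.sum_comm, Finset.sum_congr rfl fun i _ => sum_endCount (hp i).1]
    refine ⟨hoff, ?_, hsum⟩
    have hcard : ∀ K : SimpleGraph V, (nbr K a).card =
        ∑ v ∈ Finset.univ.erase a, if v ∈ nbr K a then 1 else 0 := by
      intro K
      rw [← Finset.card_filter]
      congr 1
      ext v
      simp only [Finset.mem_filter, Finset.mem_erase, Finset.mem_univ, and_true]
      refine ⟨fun h => ⟨?_, h⟩, fun h => h.2⟩
      rintro rfl
      exact not_mem_nbr_self h
    have h1 := Finset.sum_congr rfl fun v (hv : v ∈ Finset.univ.erase a) =>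
      hoff v (Finset.ne_of_mem_erase hv)
    rw [Finset.sum_add_distrib, Finset.sum_add_distrib, ← hcard, ← hcard] at h1
    rw [← Finset.add_sum_erase _ _ (Finset.mem_univ a),
      ← Finset.add_sum_erase _ _ (Finset.mem_univ a)] at hsum
    dsimp only at hsum ⊢
    omega

end Rewire

section Cut

/-- The graph obtained from `G` by removing the edges joining `x` to `T`. -/
def cut (G : SimpleGraph V) (x : V) (T : Finset V) : SimpleGraph V where
  Adj u v := G.Adj u v ∧ ¬ (u = x ∧ v ∈ T) ∧ ¬ (v = x ∧ u ∈ T)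
  symm := ⟨fun _ _ h => ⟨h.1.symm, h.2.2, h.2.1⟩⟩
  loopless := ⟨fun _ h => G.loopless.irrefl _ h.1⟩

theorem cut_adj {G : SimpleGraph V} {x : V} {T : Finset V} {u v : V} :
    (cut G x T).Adj u v ↔ G.Adj u v ∧ ¬ (u = x ∧ v ∈ T) ∧ ¬ (v = x ∧ u ∈ T) := Iff.rfl

theorem cut_adj_of_ne {G : SimpleGraph V} {x : V} {T : Finset V} {u v : V} (hu : u ≠ x)
    (hv : v ≠ x) : (cut G x T).Adj u v ↔ G.Adj u v := by
  simp [cut_adj, hu, hv]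

theorem cut_adj_self {G : SimpleGraph V} {x : V} {T : Finset V} {v : V} :
    (cut G x T).Adj x v ↔ G.Adj x v ∧ v ∉ T := by
  rw [cut_adj]
  constructor
  · rintro ⟨h1, h2, h3⟩
    exact ⟨h1, fun h => h2 ⟨rfl, h⟩⟩
  · rintro ⟨h1, h2⟩
    refine ⟨h1, fun h => h2 h.2, ?_⟩
    rintro ⟨rfl, h⟩
    exact G.loopless.irrefl _ h1

theorem cut_swap {G : SimpleGraph V} {a b : V} : cut G a {b} = cut G b {a} := by
  ext u v
  simp only [cut_adj, Finset.mem_singleton]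
  tauto

theorem cut_comm {G : SimpleGraph V} {x y : V} {S T : Finset V} :
    cut (cut G x S) y T = cut (cut G y T) x S := by
  ext u v
  simp only [cut_adj]
  tauto

theorem cut_le {G : SimpleGraph V} {x : V} {T : Finset V} : cut G x T ≤ G := fun _ _ h => h.1

theorem cut_empty {G : SimpleGraph V} {x : V} : cut G x ∅ = G := by
  ext u v
  simp [cut_adj]

open Classical in
theorem cut_cut_union {G : SimpleGraph V} {x : V} {S T : Finset V} :
    cut (cut G x S) x T = cut G x (S ∪ T) := by
  ext u v
  simp only [cut_adj, Finset.mem_union]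
  tauto

end Cut

section Augment
variable [Fintype V]

open Classical in
theorem HasEnds.rewire_chain {H : SimpleGraph V} {d : V → ℕ} {a : V} {F : Fan V}
    (hF : ∀ H' : SimpleGraph V, (∀ u v, u ≠ a → v ≠ a → (H'.Adj u v ↔ H.Adj u v)) →
      ∀ φ : V → V ⊕ Fin F.k,
        (∀ v ∈ nbr H' a, (φ v = .inl v ∧ v ∈ nbr H a) ∨ F.Att (nbr H a) v (φ v)) →
        Set.InjOn φ (nbr H' a) → (∀ x ∈ nbr H a, ∃ v ∈ nbr H' a, φ v = .inl x) →
        ∃ d', HasEnds H' d' ∧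
          (∀ v, v ≠ a → d' v + (if v ∈ nbr H' a then 1 else 0) =
            d v + (if v ∈ nbr H a then 1 else 0)) ∧
          d' a + (nbr H a).card = d a + (nbr H' a).card ∧ ∑ v, d' v = ∑ v, d v)
    {W : Set V} {s : V → V ⊕ Fin F.k}
    (hs : ∀ v ∈ W, F.Att (nbr H a) v (s v) ∧ ∀ x, s v = .inl x → x ∈ W)
    {B : Finset V} (hBW : ∀ b ∈ B, b ∈ W) (hBN : ∀ b ∈ B, b ∉ nbr H a)
    (hconf : ∀ b ∈ B, ∀ b' ∈ B, ∀ v w, Relation.ReflTransGen (fun u x => s u = .inl x) b v →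
      Relation.ReflTransGen (fun u x => s u = .inl x) b' w →
      ∀ j, s v = .inr j → s w = .inr j → v = w)
    {H' : SimpleGraph V} (hoff : ∀ u v, u ≠ a → v ≠ a → (H'.Adj u v ↔ H.Adj u v))
    (hN' : nbr H' a = nbr H a ∪ B) :
    ∃ d', HasEnds H' d' ∧ d' a = d a + B.card ∧ (∀ v ∈ B, d' v + 1 = d v) ∧
      (∀ v, v ≠ a → v ∉ B → d' v = d v) ∧ ∑ v, d' v = ∑ v, d v := by
  let R : V → V → Prop := fun u x => s u = .inl x
  let C : Set V := {v | ∃ b ∈ B, Relation.ReflTransGen R b v}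
  have hCW : ∀ v ∈ C, v ∈ W := by
    rintro v ⟨b, hb, hbv⟩
    induction hbv with
    | refl => exact hBW b hb
    | tail _ h ih => exact (hs _ ih).2 _ h
  have hCN : ∀ v ∈ C, v ∈ nbr H a ∪ B := by
    rintro v ⟨b, hb, hbv⟩
    rcases Relation.ReflTransGen.cases_tail hbv with rfl | ⟨w, hw, hwv⟩
    · exact Finset.mem_union_right _ hb
    · have h1 := (hs w (hCW w ⟨b, hb, hw⟩)).1
      rw [show s w = .inl v from hwv] at h1
      exact Finset.mem_union_left _ h1.1
  obtain ⟨d', h1, h2, h3, h4⟩ := hF H' hoff (fun v => if v ∈ C then s v else .inl v) (by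
      intro v hv
      by_cases hvC : v ∈ C
      · right
        simp only [hvC, if_true]
        exact (hs v (hCW v hvC)).1
      · left
        simp only [hvC, if_false, true_and]
        rw [hN', Finset.mem_union] at hv
        exact hv.resolve_right fun h => hvC ⟨v, h, Relation.ReflTransGen.refl⟩) (by
      intro v hv w hw hvw
      by_cases hvC : v ∈ C <;> by_cases hwC : w ∈ C <;> simp only [hvC, hwC, if_true, if_false] at hvw
      · rcases hsv : s v with x | j
        · have e1 := (hs v (hCW v hvC)).1
          have e2 := (hs w (hCW w hwC)).1
          rw [hsv] at e1
          rw [← hvw, hsv] at e2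
          exact e1.2.symm.trans e2.2
        · obtain ⟨b, hb, hbv⟩ := hvC
          obtain ⟨b', hb', hbw⟩ := hwC
          exact hconf b hb b' hb' v w hbv hbw j hsv (hvw ▸ hsv)
      · obtain ⟨b, hb, hbv⟩ := hvC
        exact absurd ⟨b, hb, hbv.tail hvw⟩ hwC
      · obtain ⟨b, hb, hbw⟩ := hwC
        exact absurd ⟨b, hb, hbw.tail hvw.symm⟩ hvC
      · exact Sum.inl.inj hvw) (by
      intro x hx
      by_cases hxC : x ∈ C
      · obtain ⟨b, hb, hbx⟩ := hxC
        rcases Relation.ReflTransGen.cases_tail hbx with rfl | ⟨w, hw, hwx⟩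
        · exact absurd hx (hBN _ hb)
        · have hwC : w ∈ C := ⟨b, hb, hw⟩
          refine ⟨w, hN' ▸ hCN w hwC, ?_⟩
          simp only [hwC, if_true]
          exact hwx
      · refine ⟨x, hN' ▸ Finset.mem_union_left _ hx, ?_⟩
        simp [hxC])
  refine ⟨d', h1, ?_, ?_, ?_, h4⟩
  · rw [hN', Finset.card_union_of_disjoint] at h3
    · omega
    · rw [Finset.disjoint_right]
      exact hBN
  · intro v hv
    have hva : v ≠ a := by
      rintro rfl
      have : v ∈ nbr H' v := hN' ▸ Finset.mem_union_right _ hv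
      exact not_mem_nbr_self this
    have := h2 v hva
    rw [if_pos (hN' ▸ Finset.mem_union_right _ hv), if_neg (hBN v hv)] at this
    omega
  · intro v hva hv
    have := h2 v hva
    simp only [hN', Finset.mem_union, hv, or_false] at this
    omega

theorem reflTransGen_eq_of_terminal {α β : Type*} {s : α → α ⊕ β} {b v w : α}
    (hv : Relation.ReflTransGen (fun u x => s u = .inl x) b v)
    (hw : Relation.ReflTransGen (fun u x => s u = .inl x) b w) {j j' : β}
    (hvj : s v = .inr j) (hwj : s w = .inr j') : v = w := by
  have hU : Relator.RightUnique (fun u x => s u = .inl x) := by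
    intro u x y h1 h2
    exact Sum.inl.inj (h1.symm.trans h2)
  have key : ∀ {v w : α} {j}, s v = .inr j →
      Relation.ReflTransGen (fun u x => s u = .inl x) v w → v = w := by
    intro v w j hvj h
    rcases Relation.ReflTransGen.cases_head h with h | ⟨c, hc, -⟩
    · exact h
    · rw [hvj] at hc; cases hc
  rcases Relation.ReflTransGen.total_of_right_unique hU hv hw with h | h
  · exact key hvj h
  · exact (key hwj h).symm

theorem nbr_cut_self {G : SimpleGraph V} {x : V} {T : Finset V} {v : V} :
    v ∈ nbr (cut G x T) x ↔ v ∈ nbr G x ∧ v ∉ T := by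
  rw [mem_nbr, mem_nbr, cut_adj_self]

open Classical in
/-- Adding one edge `ab` at `a`: this is possible if more paths end at `b` than there are
other neighbours of `a` at which no path ends. -/
theorem HasEnds.aug {G : SimpleGraph V} {a b : V} {d : V → ℕ} (hab : G.Adj a b)
    (hd : HasEnds (cut G a {b}) d)
    (hz : ((nbr G a).filter fun v => v ≠ b ∧ d v = 0).card < d b) :
    ∃ d', HasEnds G d' ∧ d' a = d a + 1 ∧ d' b + 1 = d b ∧
      (∀ v, v ≠ a → v ≠ b → d' v = d v) ∧ ∑ v, d' v = ∑ v, d v := by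
  obtain ⟨F, hF1, hF2⟩ := hd.rewire a
  set N := nbr (cut G a {b}) a with hN
  have hNmem : ∀ v, v ∈ N ↔ G.Adj a v ∧ v ≠ b := by
    intro v
    rw [hN, nbr_cut_self, mem_nbr, Finset.mem_singleton]
  have hne : ∀ v ∈ nbr G a, v ≠ a := by
    rintro v hv rfl
    exact not_mem_nbr_self hv
  let closed : Set V → Prop := fun S => ∀ v ∈ S, v ∈ nbr G a ∧ ∃ o, F.Att N v o ∧
    ∀ x, o = .inl x → x ∈ S
  let W : Set V := {v | ∃ S, closed S ∧ v ∈ S}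
  have hW : closed W := by
    rintro v ⟨S, hS, hv⟩
    obtain ⟨h1, o, h2, h3⟩ := hS v hv
    exact ⟨h1, o, h2, fun x hx => ⟨S, hS, h3 x hx⟩⟩
  have hWmax : ∀ v ∈ nbr G a, ∀ o, F.Att N v o → (∀ x, o = .inl x → x ∈ W) → v ∈ W := by
    intro v hv o ho hx
    refine ⟨insert v W, ?_, Set.mem_insert _ _⟩
    rintro u (rfl | hu)
    · exact ⟨hv, o, ho, fun x h => Set.mem_insert_of_mem _ (hx x h)⟩
    · obtain ⟨h1, o, h2, h3⟩ := hW u hu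
      exact ⟨h1, o, h2, fun x h => Set.mem_insert_of_mem _ (h3 x h)⟩
  have hbW : b ∈ W := by
    by_contra hbW
    let L := (nbr G a).filter fun v => v ∉ W
    have hbL : b ∈ L := by simp [L, mem_nbr, hab, hbW]
    have hdL : ∀ v ∈ L, d v = (N.filter fun x => F.lam x = v).card := by
      intro v hv
      have hv' := Finset.mem_filter.mp hv
      rw [hF1 v (hne v hv'.1), Nat.add_eq_left]
      refine Finset.sum_eq_zero fun j hj => ?_
      have h1 : F.first j ≠ v := fun h => hv'.2 (hWmax v hv'.1 (.inr j) ⟨hj, Or.inl h⟩ (by simp))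
      have h2 : F.last j ≠ v := fun h => hv'.2 (hWmax v hv'.1 (.inr j) ⟨hj, Or.inr h⟩ (by simp))
      simp [h1, h2]
    have h1 : ∑ v ∈ L, d v ≤ (L.erase b).card := by
      rw [Finset.sum_congr rfl hdL, ← Finset.card_biUnion]
      · refine Finset.card_le_card fun x hx => ?_
        simp only [Finset.mem_biUnion, Finset.mem_filter] at hx
        obtain ⟨v, hv, hxN, rfl⟩ := hx
        have hv' := Finset.mem_filter.mp hv
        have := (hNmem x).mp hxN
        refine Finset.mem_erase.mpr
          ⟨this.2, Finset.mem_filter.mpr ⟨mem_nbr.mpr this.1, fun hxW => ?_⟩⟩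
        refine hv'.2 (hWmax _ hv'.1 (.inl x) ⟨hxN, rfl⟩ ?_)
        intro y hy
        cases hy
        exact hxW
      · intro u _ v _ huv
        rw [Function.onFun, Finset.disjoint_left]
        intro x hx hx'
        exact huv ((Finset.mem_filter.mp hx).2.symm.trans (Finset.mem_filter.mp hx').2)
    rw [← Finset.add_sum_erase _ _ hbL] at h1
    have h2 : (L.erase b).card ≤ ∑ v ∈ L.erase b, d v +
        ((L.erase b).filter fun v => d v = 0).card := by
      rw [Finset.card_filter, ← Finset.sum_add_distrib, Finset.card_eq_sum_ones]
      refine Finset.sum_le_sum fun v _ => ?_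
      split_ifs <;> omega
    have h3 : ((L.erase b).filter fun v => d v = 0).card ≤
        ((nbr G a).filter fun v => v ≠ b ∧ d v = 0).card := by
      refine Finset.card_le_card fun v hv => ?_
      simp only [L, Finset.mem_filter, Finset.mem_erase] at hv ⊢
      tauto
    omega
  have hs : ∀ v, ∃ o, v ∈ W → F.Att N v o ∧ ∀ x, o = .inl x → x ∈ W := by
    intro v
    by_cases hv : v ∈ W
    · obtain ⟨-, o, ho⟩ := hW v hv
      exact ⟨o, fun _ => ho⟩
    · exact ⟨.inl v, fun h => absurd h hv⟩
  choose s hs using hs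
  obtain ⟨d', h1, h2, h3, h4, h5⟩ := HasEnds.rewire_chain hF2 hs (B := {b}) (by simpa using hbW)
    (by simp [nbr_cut_self]) (by
      simp only [Finset.mem_singleton]
      rintro _ rfl _ rfl v w hv hw j hvj hwj
      exact reflTransGen_eq_of_terminal hv hw hvj hwj) (H' := G)
    (fun u v hu hv => (cut_adj_of_ne hu hv).symm) (by
      ext v
      simp only [Finset.mem_union, nbr_cut_self, Finset.mem_singleton]
      by_cases hv : v = b
      · simp [hv, mem_nbr, hab]
      · simp [hv])
  refine ⟨d', h1, by simpa using h2, h3 b (by simp), ?_, h5⟩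
  intro v hva hvb
  exact h4 v hva (by simpa using hvb)

open Classical in
/-- Adding several edges at `a`, joining it to a set `B` containing at most one vertex of each
orbit of some involution. -/
theorem HasEnds.multi {G : SimpleGraph V} {a : V} {T : Finset V} {d : V → ℕ}
    (hT : T ⊆ nbr G a) (hd : HasEnds (cut G a T) d) (hpos : ∀ v ∈ nbr G a, 1 ≤ d v) :
    ∃ σ : V → V, (∀ t ∈ T, σ t ∈ T ∧ σ (σ t) = t) ∧
      ∀ B ⊆ T, (∀ t ∈ B, σ t ∈ B → σ t = t) →
        ∃ d', HasEnds (cut G a (T \ B)) d' ∧ d' a = d a + B.card ∧ (∀ v ∈ B, d' v + 1 = d v) ∧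
          (∀ v, v ≠ a → v ∉ B → d' v = d v) ∧ ∑ v, d' v = ∑ v, d v := by
  obtain ⟨F, hF1, hF2⟩ := hd.rewire a
  set N := nbr (cut G a T) a with hN
  have hNmem : ∀ v, v ∈ N ↔ v ∈ nbr G a ∧ v ∉ T := by
    intro v
    rw [hN, nbr_cut_self]
  have hne : ∀ v ∈ nbr G a, v ≠ a := by
    rintro v hv rfl
    exact not_mem_nbr_self hv
  have hs : ∀ v, ∃ o, v ∈ nbr G a → F.Att N v o ∧ ∀ x, o = .inl x → x ∈ nbr G a := by
    intro v
    by_cases hv : v ∈ nbr G a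
    · have hv1 := hpos v hv
      rw [hF1 v (hne v hv)] at hv1
      by_cases h0 : (N.filter fun x => F.lam x = v).card = 0
      · have h1 : ∑ j ∈ F.free, ((if F.first j = v then 1 else 0) +
            (if F.last j = v then 1 else 0)) ≠ 0 := by omega
        obtain ⟨j, hj, hj'⟩ := Finset.exists_ne_zero_of_sum_ne_zero h1
        refine ⟨.inr j, fun _ => ⟨⟨hj, ?_⟩, by simp⟩⟩
        by_contra hcon
        rw [not_or] at hcon
        simp [hcon.1, hcon.2] at hj'
      · obtain ⟨x, hx⟩ := Finset.card_pos.mp (Nat.pos_of_ne_zero h0)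
        have hx := Finset.mem_filter.mp hx
        refine ⟨.inl x, fun _ => ⟨hx, ?_⟩⟩
        intro y hy
        cases hy
        exact ((hNmem x).mp hx.1).1
    · exact ⟨.inl v, fun h => absurd h hv⟩
  choose s hs using hs
  let R : V → V → Prop := fun u x => s u = .inl x
  have hreach : ∀ {b v}, b ∈ nbr G a → Relation.ReflTransGen R b v → v ∈ nbr G a := by
    intro b v hb h
    induction h with
    | refl => exact hb
    | tail _ h ih => exact (hs _ ih).2 _ h
  have hroot : ∀ {b v}, b ∈ nbr G a → Relation.ReflTransGen R b v → v ∈ T → b = v := by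
    intro b v hb h hv
    rcases Relation.ReflTransGen.cases_tail h with h | ⟨w, hw, hwv⟩
    · exact h.symm
    · have := (hs w (hreach hb hw)).1
      rw [show s w = .inl v from hwv] at this
      exact absurd hv ((hNmem v).mp this.1).2
  have hback : ∀ {b b' v}, b ∈ T → b' ∈ T → Relation.ReflTransGen R b v →
      Relation.ReflTransGen R b' v → b = b' := by
    intro b b' v hb hb' h
    induction h generalizing b' with
    | refl => intro h'; exact (hroot (hT hb') h' hb).symm
    | @tail u v hu huv ih =>
      intro h'
      rcases Relation.ReflTransGen.cases_tail h' with h'' | ⟨w, hw, hwv⟩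
      · subst h''
        exact hroot (hT hb) (hu.tail huv) hb'
      · have e1 := (hs u (hreach (hT hb) hu)).1
        have e2 := (hs w (hreach (hT hb') hw)).1
        rw [show s u = .inl v from huv] at e1
        rw [show s w = .inl v from hwv] at e2
        have : w = u := e2.2.symm.trans e1.2
        exact ih hb' (this ▸ hw)
  let conf : V → V → Prop := fun t t' => t' ∈ T ∧ ∃ j v w, v ≠ w ∧ Relation.ReflTransGen R t v ∧
    Relation.ReflTransGen R t' w ∧ s v = .inr j ∧ s w = .inr j
  have hsymm : ∀ {t t'}, t ∈ T → conf t t' → conf t' t := by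
    rintro t t' ht ⟨-, j, v, w, h1, h2, h3, h4, h5⟩
    exact ⟨ht, j, w, v, h1.symm, h3, h2, h5, h4⟩
  have huniq : ∀ {t t' t''}, t ∈ T → conf t t' → conf t t'' → t' = t'' := by
    rintro t t' t'' ht ⟨h0, j, v, w, h1, h2, h3, h4, h5⟩ ⟨g0, i, x, y, g1, g2, g3, g4, g5⟩
    obtain rfl := reflTransGen_eq_of_terminal h2 g2 h4 g4
    obtain rfl : j = i := Sum.inr.inj (h4.symm.trans g4)
    have e1 := (hs v (hreach (hT ht) h2)).1
    have e2 := (hs w (hreach (hT h0) h3)).1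
    have e3 := (hs y (hreach (hT g0) g3)).1
    rw [h4] at e1
    rw [h5] at e2
    rw [g5] at e3
    have : w = y := by
      rcases e1.2 with e1 | e1
      · exact (e2.2.resolve_left fun h => h1 (e1.symm.trans h)).symm.trans
          (e3.2.resolve_left fun h => g1 (e1.symm.trans h))
      · exact (e2.2.resolve_right fun h => h1 (e1.symm.trans h)).symm.trans
          (e3.2.resolve_right fun h => g1 (e1.symm.trans h))
    subst this
    exact hback h0 g0 h3 g3
  let σ : V → V := fun t => if h : ∃ t', conf t t' then h.choose else t
  have hσ : ∀ {t t'}, t ∈ T → conf t t' → σ t = t' := by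
    intro t t' ht h
    have hex : ∃ t', conf t t' := ⟨t', h⟩
    have : σ t = hex.choose := dif_pos hex
    rw [this]
    exact huniq ht hex.choose_spec h
  have hσ0 : ∀ {t}, (¬ ∃ t', conf t t') → σ t = t := fun h => dif_neg h
  refine ⟨σ, ?_, ?_⟩
  · intro t ht
    by_cases h : ∃ t', conf t t'
    · obtain ⟨t', h⟩ := h
      rw [hσ ht h]
      exact ⟨h.1, hσ h.1 (hsymm ht h)⟩
    · rw [hσ0 h]
      exact ⟨ht, hσ0 h⟩
  · intro B hBT hB
    refine HasEnds.rewire_chain hF2 (W := {v | v ∈ nbr G a}) (s := s) hs (B := B)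
      (fun b hb => hT (hBT hb)) (fun b hb h => ((hNmem b).mp h).2 (hBT hb)) ?_
      (fun u v hu hv => by rw [cut_adj_of_ne hu hv, cut_adj_of_ne hu hv]) ?_
    · intro b hb b' hb' v w hv hw j hvj hwj
      by_contra hvw
      have hc : conf b b' := ⟨hBT hb', j, v, w, hvw, hv, hw, hvj, hwj⟩
      have h1 := hσ (hBT hb) hc
      have h2 := hB b hb (h1.symm ▸ hb')
      have h3 : b = b' := h2.symm.trans h1
      subst h3
      exact hvw (reflTransGen_eq_of_terminal hv hw hvj hwj)
    · ext v
      simp only [Finset.mem_union, nbr_cut_self, Finset.mem_sdiff]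
      by_cases hv : v ∈ B
      · simp [hv, hT (hBT hv)]
      · simp [hv]

end Augment

section Degrees
variable [Fintype V]

open Classical in
theorem card_nbr_cut_self {G : SimpleGraph V} {x : V} {T : Finset V} (hT : T ⊆ nbr G x) :
    (nbr (cut G x T) x).card + T.card = (nbr G x).card := by
  rw [← Finset.card_sdiff_add_card_eq_card hT]
  congr 2
  ext v
  rw [nbr_cut_self, Finset.mem_sdiff]

theorem ne_of_mem_nbr {G : SimpleGraph V} {x t : V} (h : t ∈ nbr G x) : t ≠ x := by
  rintro rfl
  exact not_mem_nbr_self h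

open Classical in
theorem card_nbr_cut_mem {G : SimpleGraph V} {x t : V} {T : Finset V} (hT : T ⊆ nbr G x)
    (ht : t ∈ T) : (nbr (cut G x T) t).card + 1 = (nbr G t).card := by
  have hx : x ∈ nbr G t := mem_nbr.mpr (mem_nbr.mp (hT ht)).symm
  rw [← Finset.card_erase_add_one hx]
  congr 2
  ext v
  have := ne_of_mem_nbr (hT ht)
  rw [mem_nbr, cut_adj, Finset.mem_erase, mem_nbr]
  tauto

theorem nbr_cut_of_notMem {G : SimpleGraph V} {x v : V} {T : Finset V} (hv : v ≠ x)
    (hvT : v ∉ T) : nbr (cut G x T) v = nbr G v := by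
  ext w
  rw [mem_nbr, mem_nbr, cut_adj]
  tauto

theorem nbr_mono {G H : SimpleGraph V} (h : H ≤ G) (v : V) : nbr H v ⊆ nbr G v := by
  intro w hw
  exact mem_nbr.mpr (h (mem_nbr.mp hw))

/-- Twice the number of edges. -/
noncomputable def esize (G : SimpleGraph V) : ℕ := ∑ v, (nbr G v).card

theorem esize_lt {G H : SimpleGraph V} (h : H ≤ G) {u v : V} (hG : G.Adj u v)
    (hH : ¬ H.Adj u v) : esize H < esize G := by
  refine Finset.sum_lt_sum (fun w _ => Finset.card_le_card (nbr_mono h w))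
    ⟨u, Finset.mem_univ _, Finset.card_lt_card ⟨nbr_mono h u, fun h' => hH ?_⟩⟩
  exact mem_nbr.mp (h' (mem_nbr.mpr hG))

end Degrees

section Prescribed

open Classical in
theorem HasEnds.of_fintype {G : SimpleGraph V} {d : V → ℕ} {ι : Type*} [Fintype ι]
    (p : ι → List V) (hp : ∀ i, p i ≠ [] ∧ (p i).Nodup)
    (he : ∀ e : Sym2 V, ∑ i, (listEdges (p i)).count e = if e ∈ G.edgeSet then 1 else 0)
    (hd : ∀ v, ∑ i, endCount (p i) v = d v) : HasEnds G d := by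
  let f := (Fintype.equivFin ι).symm
  refine ⟨Fintype.card ι, fun i => p (f i), fun i => hp _, fun e => ?_, fun v => ?_⟩
  · rw [← he]
    exact Equiv.sum_comp f fun i => (listEdges (p i)).count e
  · rw [← hd]
    exact Equiv.sum_comp f fun i => endCount (p i) v

variable [Fintype V]

theorem hasEnds_of_isolated {G : SimpleGraph V} {d : V → ℕ} (hG : ∀ u v, ¬ G.Adj u v)
    (hd : ∀ v, Even (d v)) : HasEnds G d := by
  classical
  refine HasEnds.of_fintype (ι := Σ v : V, Fin (d v / 2)) (fun i => [i.1]) (by simp) ?_ ?_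
  · intro e
    induction e using Sym2.ind with
    | _ u v => simp [listEdges, headEdge, hG]
  · intro v
    rw [Fintype.sum_sigma, Finset.sum_eq_single v]
    · obtain ⟨k, hk⟩ := hd v
      simp [endCount]
      omega
    · intro w _ hw
      simp [endCount, hw]
    · simp

/-- Any `d` of the right parity that vanishes on at most one non-isolated vertex is realised. -/
theorem hasEnds_of_parity {G : SimpleGraph V} {d : V → ℕ}
    (hpar : ∀ v, Even (d v + (nbr G v).card))
    (hz : ∀ u v, d u = 0 → d v = 0 → (nbr G u).Nonempty → (nbr G v).Nonempty → u = v) :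
    HasEnds G d := by
  classical
  induction hn : esize G using Nat.strong_induction_on generalizing G d with
  | _ n ih =>
  by_cases hE : ∀ u v, ¬ G.Adj u v
  · refine hasEnds_of_isolated hE fun v => ?_
    have h0 : nbr G v = ∅ := by
      ext w
      simp [mem_nbr, hE]
    simpa [h0] using hpar v
  have hab : ∃ a b, G.Adj a b ∧ ∀ v, d v = 0 → (nbr G v).Nonempty → v = b := by
    by_cases hb : ∃ b, d b = 0 ∧ (nbr G b).Nonempty
    · obtain ⟨b, hb0, a, ha⟩ := hb
      exact ⟨a, b, (mem_nbr.mp ha).symm, fun v hv hvn => hz v b hv hb0 hvn ⟨a, ha⟩⟩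
    · push Not at hE
      obtain ⟨a, b, hab⟩ := hE
      exact ⟨a, b, hab, fun v h1 h2 => absurd ⟨v, h1, h2⟩ hb⟩
  obtain ⟨a, b, hab, hz'⟩ := hab
  have hne : a ≠ b := hab.ne
  have ha1 : d a ≠ 0 := fun h => hne (hz' a h ⟨b, mem_nbr.mpr hab⟩)
  have hbT : ({b} : Finset V) ⊆ nbr G a := by simpa [mem_nbr] using hab
  let e : V → ℕ := fun v => if v = a then d a - 1 else if v = b then d b + 1 else d v
  have ea : e a = d a - 1 := if_pos rfl
  have eb : e b = d b + 1 := by simp [e, hne.symm]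
  have eo : ∀ v, v ≠ a → v ≠ b → e v = d v := by
    intro v h1 h2
    simp [e, h1, h2]
  have hlt : esize (cut G a {b}) < n := by
    rw [← hn]
    refine esize_lt cut_le hab ?_
    simp [cut_adj]
  have hzero : ∀ v, e v = 0 → (nbr G v).Nonempty → v = a := by
    intro v h0 hv
    by_contra hva
    by_cases hvb : v = b
    · subst hvb
      omega
    · rw [eo v hva hvb] at h0
      exact hvb (hz' v h0 hv)
  have hH : HasEnds (cut G a {b}) e := by
    refine ih _ hlt ?_ ?_ rfl
    · intro v
      have hv := hpar v
      by_cases hva : v = a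
      · subst hva
        have := card_nbr_cut_self hbT
        simp only [Finset.card_singleton] at this
        rw [ea]
        rw [Nat.even_iff] at *
        omega
      · by_cases hvb : v = b
        · subst hvb
          have := card_nbr_cut_mem hbT (Finset.mem_singleton_self _)
          rw [eb]
          rw [Nat.even_iff] at *
          omega
        · rw [eo v hva hvb, nbr_cut_of_notMem hva (by simpa using hvb)]
          exact hv
    · intro u v hu hv hun hvn
      rw [hzero u hu (hun.mono (nbr_mono cut_le u)), hzero v hv (hvn.mono (nbr_mono cut_le v))]
  obtain ⟨d', h1, h2, h3, h4, -⟩ := HasEnds.aug hab hH (by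
    have : (nbr G a).filter (fun v => v ≠ b ∧ e v = 0) = ∅ := by
      refine Finset.filter_eq_empty_iff.mpr ?_
      rintro v hv ⟨_, hv0⟩
      have hva := hzero v hv0 ⟨a, mem_nbr.mpr (mem_nbr.mp hv).symm⟩
      exact ne_of_mem_nbr hv hva
    rw [this]
    simp
    omega)
  have : d' = d := by
    funext v
    by_cases hva : v = a
    · subst hva; omega
    · by_cases hvb : v = b
      · subst hvb; omega
      · rw [h4 v hva hvb, eo v hva hvb]
  exact this ▸ h1

end Prescribed

section Fill
variable [Fintype V]

open Classical in
/-- Adding the edges joining `x` to `M`, one at a time, using the paths that end at `x`. -/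
theorem HasEnds.fill {G : SimpleGraph V} {x : V} {c : ℕ} {M : Finset V} {d : V → ℕ}
    (hM : M ⊆ nbr G x) (hd : HasEnds (cut G x M) d)
    (hz : ∀ t ∈ M, ((nbr G t).filter fun v => v ≠ x ∧ d v = 0).card ≤ c)
    (hx : M.Nonempty → M.card + c ≤ d x) :
    ∃ d', HasEnds G d' ∧ d' x + M.card = d x ∧ (∀ t ∈ M, d' t = d t + 1) ∧
      (∀ v, v ≠ x → v ∉ M → d' v = d v) ∧ ∑ v, d' v = ∑ v, d v := by
  induction M using Finset.induction_on generalizing d with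
  | empty => exact ⟨d, by rwa [cut_empty] at hd, by simp, by simp, by simp, rfl⟩
  | insert t M ht ih =>
    have hx' := hx ⟨t, by simp⟩
    rw [Finset.card_insert_of_notMem ht] at hx'
    have htx : t ∈ nbr G x := hM (Finset.mem_insert_self _ _)
    have hne := ne_of_mem_nbr htx
    have hcut : cut G x (insert t M) = cut (cut G x M) t {x} := by
      rw [← cut_swap, cut_cut_union, Finset.union_comm]
      rfl
    have hadj : (cut G x M).Adj t x :=
      (cut_adj_self.mpr ⟨mem_nbr.mp htx, ht⟩).symm
    obtain ⟨d₁, h1, h2, h3, h4, h5⟩ := HasEnds.aug hadj (hcut ▸ hd) (by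
      have h1 := hz t (Finset.mem_insert_self _ _)
      have h2 : ((nbr (cut G x M) t).filter fun v => v ≠ x ∧ d v = 0).card ≤
          ((nbr G t).filter fun v => v ≠ x ∧ d v = 0).card :=
        Finset.card_le_card (Finset.filter_subset_filter _ (nbr_mono cut_le t))
      omega)
    obtain ⟨d₂, k1, k2, k3, k4, k5⟩ := ih ((Finset.subset_insert _ _).trans hM) h1 (by
      intro s hs
      refine le_trans (Finset.card_le_card ?_) (hz s (Finset.mem_insert_of_mem hs))
      intro v hv
      simp only [Finset.mem_filter] at hv ⊢
      refine ⟨hv.1, hv.2.1, ?_⟩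
      by_cases hvt : v = t
      · subst hvt; omega
      · rw [← h4 v hvt hv.2.1]; exact hv.2.2) (by
      intro _
      omega)
    refine ⟨d₂, k1, ?_, ?_, ?_, k5.trans h5⟩
    · rw [Finset.card_insert_of_notMem ht]
      omega
    · intro s hs
      rcases Finset.mem_insert.mp hs with rfl | hs
      · rw [k4 s hne ht]
        omega
      · have hst : s ≠ t := fun h => ht (h ▸ hs)
        have hsx := ne_of_mem_nbr (hM (Finset.mem_insert_of_mem hs))
        rw [k3 s hs, h4 s hst hsx]
    · intro v hvx hv
      rw [Finset.mem_insert, not_or] at hv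
      rw [k4 v hvx hv.2, h4 v hv.1 hvx]

open Classical in
/-- A set containing exactly one element of each orbit of an involution, avoiding the elements
of `S` whose orbit leaves `S`. -/
theorem exists_selection {T : Finset V} {σ : V → V} (hσ : ∀ t ∈ T, σ t ∈ T ∧ σ (σ t) = t)
    (S : Finset V) :
    ∃ B ⊆ T, (∀ t ∈ B, σ t ∈ B → σ t = t) ∧ (∀ t ∈ S, σ t ∉ S → t ∉ B) ∧
      B.card = (T \ B).card + (T.filter fun t => σ t = t).card := by
  let r := Fintype.equivFin V
  let P : V → Prop := fun t => σ t = t ∨ (t ∉ S ∧ σ t ∈ S) ∨ ((t ∈ S ↔ σ t ∈ S) ∧ r t < r (σ t))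
  have hr : ∀ t, σ t ≠ t → r t < r (σ t) ∨ r (σ t) < r t := by
    intro t ht
    exact lt_or_gt_of_ne fun h => ht (r.injective h).symm
  have hP1 : ∀ t ∈ T, P t → P (σ t) → σ t = t := by
    intro t ht h1 h2
    simp only [P, (hσ t ht).2] at h1 h2
    by_contra hne
    have hne' : t ≠ σ t := fun h => hne h.symm
    have := lt_asymm (a := r t) (b := r (σ t))
    tauto
  have hP2 : ∀ t ∈ T, ¬ P t → P (σ t) := by
    intro t ht h1
    simp only [P, (hσ t ht).2] at h1 ⊢
    rw [not_or] at h1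
    have := hr t h1.1
    tauto
  refine ⟨T.filter P, Finset.filter_subset _ _, ?_, ?_, ?_⟩
  · intro t ht hst
    rw [Finset.mem_filter] at ht hst
    exact hP1 t ht.1 ht.2 hst.2
  · intro t ht hst h
    have h := (Finset.mem_filter.mp h).2
    have : σ t ≠ t := fun h => hst (h.symm ▸ ht)
    simp only [P] at h
    tauto
  · rw [← Finset.card_filter_add_card_filter_not (s := T.filter P) (fun t => σ t = t)]
    rw [add_comm]
    congr 1
    · refine Finset.card_bij' (fun t _ => σ t) (fun t _ => σ t) ?_ ?_ ?_ ?_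
      · intro t ht
        simp only [Finset.mem_filter, Finset.mem_sdiff] at ht ⊢
        refine ⟨(hσ t ht.1.1).1, fun h => ht.2 (hP1 t ht.1.1 ht.1.2 h.2)⟩
      · intro t ht
        simp only [Finset.mem_filter, Finset.mem_sdiff] at ht ⊢
        have h1 : ¬ P t := fun h => ht.2 ⟨ht.1, h⟩
        refine ⟨⟨(hσ t ht.1).1, hP2 t ht.1 h1⟩, ?_⟩
        rw [(hσ t ht.1).2]
        exact fun h => h1 (Or.inl h.symm)
      · intro t ht
        exact (hσ t (Finset.mem_filter.mp (Finset.mem_filter.mp ht).1).1).2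
      · intro t ht
        exact (hσ t (Finset.mem_sdiff.mp ht).1).2
    · congr 1
      ext t
      simp only [Finset.mem_filter, P]
      tauto

end Fill

section Star
variable [Fintype V]

open Classical in
theorem card_fixed_mod_two {T : Finset V} {σ : V → V} (hσ : ∀ t ∈ T, σ t ∈ T ∧ σ (σ t) = t) :
    (T.filter fun t => σ t = t).card % 2 = T.card % 2 := by
  obtain ⟨B, hB, -, -, h⟩ := exists_selection hσ ∅
  have := Finset.card_sdiff_add_card_eq_card hB
  omega

open Classical in
/-- The condition on an involution `σ` of `T` under which the edges from `x` to `T` can be added: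
either enough paths become available at `x`, or some missing edge is easy to add. -/
def Selectable (G : SimpleGraph V) (x : V) (T : Finset V) (d : V → ℕ) (σ : V → V) : Prop :=
  2 ≤ d x + (T.filter fun t => σ t = t).card ∨ (T.filter fun t => σ t = t).card = T.card ∨
    (1 ≤ d x + (T.filter fun t => σ t = t).card ∧ ∃ S ⊆ T, ∃ t ∈ S, σ t ∉ S ∧
      ∀ B ⊆ T, (∀ u ∈ B, σ u ∈ B → σ u = u) → (∀ u ∈ S, σ u ∉ S → u ∉ B) →
        ((nbr G t).filter fun v => v ≠ x ∧ (d v = 0 ∨ v ∈ B)).card ≤ 1)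

open Classical in
theorem HasEnds.star_of_selectable {G : SimpleGraph V} {x : V} {T : Finset V} {d : V → ℕ}
    (hT : T ⊆ nbr G x) (hd : HasEnds (cut G x T) d) (hpos : ∀ v ∈ nbr G x, 1 ≤ d v)
    (hZ : ∀ t ∈ T, ((nbr G t).filter fun v => v ≠ x ∧ (d v = 0 ∨ v ∈ T)).card ≤ 2)
    (hsel : ∀ σ : V → V, (∀ t ∈ T, σ t ∈ T ∧ σ (σ t) = t) → Selectable G x T d σ) :
    ∃ d', HasEnds G d' ∧ d x ≤ d' x ∧ (∀ v, v ≠ x → v ∉ T → d' v = d v) ∧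
      ∑ v, d' v = ∑ v, d v := by
  obtain ⟨σ, hσ, hB⟩ := hd.multi hT hpos
  have finish : ∀ (S : Finset V), (∀ B ⊆ T, (∀ u ∈ B, σ u ∈ B → σ u = u) →
      (∀ u ∈ S, σ u ∉ S → u ∉ B) →
      B.card = (T \ B).card + (T.filter fun t => σ t = t).card →
      ∀ d₁, HasEnds (cut G x (T \ B)) d₁ → d₁ x = d x + B.card →
        (∀ v, v ≠ x → d₁ v = 0 → d v = 0 ∨ v ∈ B) →
        ∃ d', HasEnds G d' ∧ d' x + (T \ B).card = d₁ x ∧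
          (∀ v, v ≠ x → v ∉ T \ B → d' v = d₁ v) ∧ ∑ v, d' v = ∑ v, d₁ v) →
      ∃ d', HasEnds G d' ∧ d x ≤ d' x ∧ (∀ v, v ≠ x → v ∉ T → d' v = d v) ∧
        ∑ v, d' v = ∑ v, d v := by
    intro S hS
    obtain ⟨B, hBT, hB1, hB2, hB3⟩ := exists_selection hσ S
    obtain ⟨d₁, h1, h2, h3, h4, h5⟩ := hB B hBT hB1
    obtain ⟨d₂, k1, k2, k3, k4⟩ := hS B hBT hB1 hB2 hB3 d₁ h1 h2 (by
      intro v hvx hv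
      by_cases hvB : v ∈ B
      · exact Or.inr hvB
      · rw [h4 v hvx hvB] at hv
        exact Or.inl hv)
    refine ⟨d₂, k1, by omega, ?_, k4.trans h5⟩
    intro v hvx hvT
    rw [k3 v hvx fun h => hvT (Finset.mem_sdiff.mp h).1, h4 v hvx fun h => hvT (hBT h)]
  rcases hsel σ hσ with h | h | ⟨h, S, hST, t, htS, htσ, hlow⟩
  · refine finish ∅ ?_
    intro B hBT _ _ hB3 d₁ h1 h2 hz
    obtain ⟨d', k1, k2, -, k3, k4⟩ := HasEnds.fill (c := 2) (Finset.sdiff_subset.trans hT) h1 (by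
      intro t ht
      refine le_trans (Finset.card_le_card ?_) (hZ t (Finset.mem_sdiff.mp ht).1)
      intro v hv
      rw [Finset.mem_filter] at hv ⊢
      exact ⟨hv.1, hv.2.1, (hz v hv.2.1 hv.2.2).imp_right fun h => hBT h⟩) (by intro; omega)
    exact ⟨d', k1, k2, k3, k4⟩
  · refine finish ∅ ?_
    intro B hBT _ _ hB3 d₁ h1 h2 hz
    have hc := Finset.card_sdiff_add_card_eq_card hBT
    have h0 : T \ B = ∅ := by
      rw [← Finset.card_eq_zero]
      omega
    rw [h0, cut_empty] at h1
    exact ⟨d₁, h1, by simp [h0], fun _ _ _ => rfl, rfl⟩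
  · refine finish S ?_
    intro B hBT hB1 hB2 hB3 d₁ h1 h2 hz
    have htM : t ∈ T \ B := Finset.mem_sdiff.mpr ⟨hST htS, hB2 t htS htσ⟩
    have hcut : cut G x (T \ B) = cut (cut G x {t}) x ((T \ B).erase t) := by
      rw [cut_cut_union]
      congr 1
      rw [← Finset.insert_eq, Finset.insert_erase htM]
    have hcard := Finset.card_erase_add_one htM
    rw [hcut] at h1
    obtain ⟨d₂, k1, k2, k3, k4, k5⟩ := HasEnds.fill (c := 2) (by
      intro s hs
      rw [Finset.mem_erase] at hs
      rw [nbr_cut_self, Finset.mem_singleton]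
      exact ⟨hT (Finset.mem_sdiff.mp hs.2).1, hs.1⟩) h1 (by
      intro s hs
      refine le_trans (Finset.card_le_card ?_)
        (hZ s (Finset.mem_sdiff.mp (Finset.mem_erase.mp hs).2).1)
      intro v hv
      rw [Finset.mem_filter] at hv ⊢
      exact ⟨nbr_mono cut_le s hv.1, hv.2.1, (hz v hv.2.1 hv.2.2).imp_right fun h => hBT h⟩)
      (by intro; omega)
    obtain ⟨d₃, l1, l2, l3, l4, l5⟩ := HasEnds.fill (c := 1) (M := {t}) (by
      rw [Finset.singleton_subset_iff]
      exact hT (hST htS)) k1 (by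
      intro s hs
      rw [Finset.mem_singleton] at hs
      subst hs
      refine le_trans (Finset.card_le_card ?_) (hlow B hBT hB1 hB2)
      intro v hv
      rw [Finset.mem_filter] at hv ⊢
      refine ⟨hv.1, hv.2.1, hz v hv.2.1 ?_⟩
      by_cases hvM : v ∈ (T \ B).erase s
      · have := k3 v hvM
        omega
      · rw [← k4 v hv.2.1 hvM]
        exact hv.2.2) (by
      intro
      rw [Finset.card_singleton]
      omega)
    refine ⟨d₃, l1, ?_, ?_, l5.trans k5⟩
    · rw [Finset.card_singleton] at l2
      omega
    · intro v hvx hv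
      have hvt : v ≠ t := fun h => hv (h ▸ htM)
      rw [l4 v hvx (by simpa using hvt), k4 v hvx fun h => hv (Finset.mem_erase.mp h).2]

open Classical in
/-- The number of neighbours `v ≠ x` of `t` with `d v = 0` or `v ∈ T`. -/
noncomputable def zcount (G : SimpleGraph V) (x : V) (T : Finset V) (d : V → ℕ) (t : V) : ℕ :=
  ((nbr G t).filter fun v => v ≠ x ∧ (d v = 0 ∨ v ∈ T)).card

theorem Selectable.of_odd {G : SimpleGraph V} {x : V} {T : Finset V} {d : V → ℕ} {σ : V → V}
    (hσ : ∀ t ∈ T, σ t ∈ T ∧ σ (σ t) = t) (hodd : T.card % 2 = 1) (hx : 1 ≤ d x) :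
    Selectable G x T d σ := by
  classical
  have := card_fixed_mod_two hσ
  left
  omega

theorem Selectable.of_card_one {G : SimpleGraph V} {x : V} {T : Finset V} {d : V → ℕ}
    {σ : V → V} (hσ : ∀ t ∈ T, σ t ∈ T ∧ σ (σ t) = t) (hT : T.card = 1) :
    Selectable G x T d σ := by
  classical
  have := card_fixed_mod_two hσ
  have h2 := Finset.card_filter_le T fun t => σ t = t
  right; left
  omega

open Classical in
theorem Selectable.of_low_not_fixed {G : SimpleGraph V} {x t : V} {T : Finset V} {d : V → ℕ}
    {σ : V → V} (h1 : 1 ≤ d x + (T.filter fun t => σ t = t).card) (ht : t ∈ T) (htσ : σ t ≠ t)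
    (hlow : zcount G x T d t ≤ 1) : Selectable G x T d σ := by
  right; right
  refine ⟨h1, {t}, by simpa using ht, t, by simp, by simpa using htσ, ?_⟩
  intro B hB _ _
  refine le_trans (Finset.card_le_card ?_) hlow
  intro v hv
  rw [Finset.mem_filter] at hv ⊢
  exact ⟨hv.1, hv.2.1, hv.2.2.imp_right fun h => hB h⟩

theorem Selectable.of_even {G : SimpleGraph V} {x t : V} {T : Finset V} {d : V → ℕ}
    {σ : V → V} (hσ : ∀ t ∈ T, σ t ∈ T ∧ σ (σ t) = t) (heven : T.card % 2 = 0) (hx : 1 ≤ d x)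
    (ht : t ∈ T) (hlow : zcount G x T d t ≤ 1) : Selectable G x T d σ := by
  classical
  by_cases htσ : σ t = t
  · have := card_fixed_mod_two hσ
    have h2 : 0 < (T.filter fun t => σ t = t).card :=
      Finset.card_pos.mpr ⟨t, Finset.mem_filter.mpr ⟨ht, htσ⟩⟩
    left
    omega
  · exact Selectable.of_low_not_fixed (by omega) ht htσ hlow

theorem Selectable.of_two_low {G : SimpleGraph V} {x t t' : V} {T : Finset V} {d : V → ℕ}
    {σ : V → V} (hσ : ∀ t ∈ T, σ t ∈ T ∧ σ (σ t) = t) (hx : T.card % 2 = 0 → 1 ≤ d x)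
    (ht : t ∈ T) (ht' : t' ∈ T) (hne : t ≠ t') (hlow : zcount G x T d t ≤ 1)
    (hlow' : zcount G x T d t' ≤ 1) : Selectable G x T d σ := by
  classical
  have := card_fixed_mod_two hσ
  by_cases htσ : σ t = t
  · by_cases htσ' : σ t' = t'
    · left
      have h2 : ({t, t'} : Finset V) ⊆ T.filter fun t => σ t = t := by
        intro v hv
        rw [Finset.mem_insert, Finset.mem_singleton] at hv
        rcases hv with rfl | rfl <;> simp [*]
      have h3 := Finset.card_le_card h2
      rw [Finset.card_pair hne] at h3
      omega
    · exact Selectable.of_low_not_fixed (by omega) ht' htσ' hlow'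
  · exact Selectable.of_low_not_fixed (by omega) ht htσ hlow

open Classical in
theorem Selectable.of_triple {G : SimpleGraph V} {x p : V} {T K : Finset V} {d : V → ℕ}
    {σ : V → V} (hσ : ∀ t ∈ T, σ t ∈ T ∧ σ (σ t) = t)
    (h1 : 1 ≤ d x + (T.filter fun t => σ t = t).card) (hpos : ∀ t ∈ T, 1 ≤ d t)
    (hK : K ⊆ T) (hKc : K.card = 3)
    (hz : ∀ t ∈ K, ∀ v ∈ nbr G t, v ≠ x → d v = 0 ∨ v ∈ T → v ∈ K)
    (hp : p ∈ K) (hpσ : σ p ∉ K) : Selectable G x T d σ := by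
  by_cases hf : 2 ≤ (T.filter fun t => σ t = t).card
  · left; omega
  right; right
  refine ⟨h1, K, hK, p, hp, hpσ, ?_⟩
  intro B hB hB1 hB2
  by_contra hcon
  rw [not_le, Finset.one_lt_card] at hcon
  have key : ∀ v ∈ (nbr G p).filter (fun v => v ≠ x ∧ (d v = 0 ∨ v ∈ B)),
      v ∈ K ∧ v ≠ p ∧ v ∈ B := by
    intro v hv
    rw [Finset.mem_filter] at hv
    have hvK := hz p hp v hv.1 hv.2.1 (hv.2.2.imp_right fun h => hB h)
    have := hpos v (hK hvK)
    exact ⟨hvK, ne_of_mem_nbr hv.1, hv.2.2.resolve_left (by omega)⟩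
  obtain ⟨q, hq, r, hr, hqr⟩ := hcon
  obtain ⟨hqK, hqp, hqB⟩ := key q hq
  obtain ⟨hrK, hrp, hrB⟩ := key r hr
  have hKeq : ({p, q, r} : Finset V) = K := by
    refine Finset.eq_of_subset_of_card_le ?_ ?_
    · intro v hv
      simp only [Finset.mem_insert, Finset.mem_singleton] at hv
      rcases hv with rfl | rfl | rfl <;> assumption
    · rw [hKc, Finset.card_eq_three.mpr ⟨p, q, r, hqp.symm, hrp.symm, hqr, rfl⟩]
  have fix : ∀ u, u ∈ K → u ∈ B → u ≠ p → σ u = u := by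
    intro u hu huB hup
    have h2 : σ u ∈ K := by
      by_contra h
      exact hB2 u hu h huB
    have h3 : σ u ≠ p := by
      intro h
      have := (hσ u (hK hu)).2
      rw [h] at this
      exact hpσ (this ▸ hu)
    refine hB1 u huB ?_
    rw [← hKeq] at h2
    simp only [Finset.mem_insert, Finset.mem_singleton] at h2
    rcases h2 with h2 | h2 | h2
    · exact absurd h2 h3
    · rw [h2]; exact hqB
    · rw [h2]; exact hrB
  apply hf
  have h2 : ({q, r} : Finset V) ⊆ T.filter fun t => σ t = t := by
    intro v hv
    rw [Finset.mem_insert, Finset.mem_singleton] at hv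
    rw [Finset.mem_filter]
    rcases hv with rfl | rfl
    · exact ⟨hK hqK, fix _ hqK hqB hqp⟩
    · exact ⟨hK hrK, fix _ hrK hrB hrp⟩
  have h3 := Finset.card_le_card h2
  rwa [Finset.card_pair hqr] at h3

theorem Selectable.of_two_triples {G : SimpleGraph V} {x : V} {T K K' : Finset V} {d : V → ℕ}
    {σ : V → V} (hσ : ∀ t ∈ T, σ t ∈ T ∧ σ (σ t) = t) (hx : T.card % 2 = 0 → 1 ≤ d x)
    (hpos : ∀ t ∈ T, 1 ≤ d t) (hK : K ⊆ T) (hK' : K' ⊆ T) (hKK' : Disjoint K K')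
    (hKc : K.card = 3) (hKc' : K'.card = 3)
    (hz : ∀ t ∈ K, ∀ v ∈ nbr G t, v ≠ x → d v = 0 ∨ v ∈ T → v ∈ K)
    (hz' : ∀ t ∈ K', ∀ v ∈ nbr G t, v ≠ x → d v = 0 ∨ v ∈ T → v ∈ K') :
    Selectable G x T d σ := by
  classical
  have := card_fixed_mod_two hσ
  have h1 : 1 ≤ d x + (T.filter fun t => σ t = t).card := by omega
  by_cases hc : ∃ p ∈ K, σ p ∉ K
  · obtain ⟨p, hp, hpσ⟩ := hc
    exact Selectable.of_triple hσ h1 hpos hK hKc hz hp hpσ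
  by_cases hc' : ∃ p ∈ K', σ p ∉ K'
  · obtain ⟨p, hp, hpσ⟩ := hc'
    exact Selectable.of_triple hσ h1 hpos hK' hKc' hz' hp hpσ
  push Not at hc hc'
  have e1 := card_fixed_mod_two fun t ht => ⟨hc t ht, (hσ t (hK ht)).2⟩
  have e2 := card_fixed_mod_two fun t ht => ⟨hc' t ht, (hσ t (hK' ht)).2⟩
  have e3 : (K.filter fun t => σ t = t) ∪ (K'.filter fun t => σ t = t) ⊆
      T.filter fun t => σ t = t :=
    Finset.union_subset (Finset.filter_subset_filter _ hK) (Finset.filter_subset_filter _ hK')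
  have e4 := Finset.card_le_card e3
  rw [Finset.card_union_of_disjoint (Finset.disjoint_filter_filter hKK')] at e4
  left
  omega

end Star

theorem three_le_card_of_mem {A : Finset V} {x y z : V} (hx : x ∈ A) (hy : y ∈ A) (hz : z ∈ A)
    (hxy : x ≠ y) (hxz : x ≠ z) (hyz : y ≠ z) : 3 ≤ A.card := by
  classical
  rw [← Finset.card_eq_three.mpr ⟨x, y, z, hxy, hxz, hyz, rfl⟩]
  refine Finset.card_le_card ?_
  intro v hv
  simp only [Finset.mem_insert, Finset.mem_singleton] at hv
  rcases hv with rfl | rfl | rfl <;> assumption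

section EvenNeighbours
variable [Fintype V]

/-- `v` has even degree in `G`. -/
def Ev (G : SimpleGraph V) (v : V) : Prop := Even (nbr G v).card

open Classical in
/-- The neighbours of `v` of even degree. -/
noncomputable def EN (G : SimpleGraph V) (v : V) : Finset V := (nbr G v).filter fun w => Ev G w

theorem mem_EN {G : SimpleGraph V} {v w : V} : w ∈ EN G v ↔ G.Adj v w ∧ Ev G w := by
  simp [EN, mem_nbr]

theorem EN_subset_nbr {G : SimpleGraph V} {v : V} : EN G v ⊆ nbr G v :=
  fun _ h => mem_nbr.mpr (mem_EN.mp h).1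

theorem HasEnds.pos_of_odd {G : SimpleGraph V} {d : V → ℕ} (h : HasEnds G d) {v : V}
    (hv : ¬ Ev G v) : 1 ≤ d v := by
  by_contra h0
  have := h.even v
  have h1 : d v = 0 := by omega
  rw [h1, zero_add] at this
  exact hv this

theorem Ev.congr {G H : SimpleGraph V} {v : V} (h : nbr H v = nbr G v) : Ev H v ↔ Ev G v := by
  rw [Ev, Ev, h]

theorem ev_cut_mem {G : SimpleGraph V} {x t : V} {T : Finset V} (hT : T ⊆ nbr G x) (ht : t ∈ T) :
    Ev (cut G x T) t ↔ ¬ Ev G t := by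
  have := card_nbr_cut_mem hT ht
  rw [Ev, Ev, Nat.even_iff, Nat.even_iff]
  omega

theorem ev_cut_of_notMem {G : SimpleGraph V} {x v : V} {T : Finset V} (hv : v ≠ x)
    (hvT : v ∉ T) : Ev (cut G x T) v ↔ Ev G v :=
  Ev.congr (nbr_cut_of_notMem hv hvT)

theorem ev_cut_self {G : SimpleGraph V} {x : V} {T : Finset V} (hT : T ⊆ nbr G x) :
    Ev (cut G x T) x ↔ (Ev G x ↔ Even T.card) := by
  have := card_nbr_cut_self hT
  rw [Ev, Ev, Nat.even_iff, Nat.even_iff, Nat.even_iff]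
  omega

/-- A set closed under adjacency containing three mutually adjacent vertices of even degree, all
of whose other vertices have odd degree and at least two neighbours among these three. -/
def Stuck (G : SimpleGraph V) : Prop :=
  ∃ (C : Set V) (a b c : V), a ∈ C ∧ b ∈ C ∧ c ∈ C ∧ G.Adj a b ∧ G.Adj a c ∧ G.Adj b c ∧
    Ev G a ∧ Ev G b ∧ Ev G c ∧ (∀ u ∈ C, ∀ v, G.Adj u v → v ∈ C) ∧
    ∀ v ∈ C, v ≠ a → v ≠ b → v ≠ c → ¬ Ev G v ∧
      ((G.Adj v a ∧ G.Adj v b) ∨ (G.Adj v a ∧ G.Adj v c) ∨ (G.Adj v b ∧ G.Adj v c))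

/-- The class of graphs on which the induction runs. -/
def Cls (G : SimpleGraph V) : Prop := (∀ v, Ev G v → (EN G v).card ≤ 3) ∧ ¬ Stuck G

/-- Every edge removed from `G` ends at vertices that interact with no pair of adjacent vertices
of even degree of `H`. -/
def Reduces (G H : SimpleGraph V) : Prop :=
  H ≤ G ∧ ∀ u, (nbr H u ≠ nbr G u) →
    (¬ Ev H u ∧ ∀ p q r, H.Adj p q → H.Adj p r → H.Adj q r → Ev H p → Ev H q → Ev H r →
      H.Adj u p → H.Adj u q → False) ∨ (Ev H u ∧ EN H u = ∅)

theorem Reduces.nbr_eq {G H : SimpleGraph V} (h : Reduces G H) {v w : V} (hv : Ev H v)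
    (hw : w ∈ EN H v) : nbr H v = nbr G v := by
  by_contra hne
  rcases h.2 v hne with h | h
  · exact h.1 hv
  · rw [h.2] at hw
    simp at hw

theorem Reduces.EN_subset {G H : SimpleGraph V} (h : Reduces G H) {v : V} (hv : Ev H v) :
    EN H v = ∅ ∨ (Ev G v ∧ EN H v ⊆ EN G v) := by
  rcases Finset.eq_empty_or_nonempty (EN H v) with h0 | ⟨w, hw⟩
  · exact Or.inl h0
  · right
    have e := h.nbr_eq hv hw
    refine ⟨(Ev.congr e).mp hv, ?_⟩
    intro u hu
    rw [mem_EN] at hu ⊢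
    refine ⟨h.1 hu.1, (Ev.congr (h.nbr_eq hu.2 (w := v) ?_)).mp hu.2⟩
    exact mem_EN.mpr ⟨hu.1.symm, hv⟩

theorem Reduces.card_EN_le {G H : SimpleGraph V} (h : Reduces G H) {k : ℕ}
    (hk : ∀ v, Ev G v → (EN G v).card ≤ k) : ∀ v, Ev H v → (EN H v).card ≤ k := by
  intro v hv
  rcases h.EN_subset hv with h | h
  · simp [h]
  · exact (Finset.card_le_card h.2).trans (hk v h.1)

theorem Reduces.cls {G H : SimpleGraph V} (h : Reduces G H) (hG : Cls G) : Cls H := by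
  refine ⟨h.card_EN_le hG.1, ?_⟩
  rintro ⟨C, a, b, c, ha, hb, hc, hab, hac, hbc, ea, eb, ec, hC, hv⟩
  refine hG.2 ⟨C, a, b, c, ha, hb, hc, h.1 hab, h.1 hac, h.1 hbc, ?_⟩
  have na := h.nbr_eq ea (mem_EN.mpr ⟨hab, eb⟩)
  have nb := h.nbr_eq eb (mem_EN.mpr ⟨hbc, ec⟩)
  have nc := h.nbr_eq ec (mem_EN.mpr ⟨hac.symm, ea⟩)
  have nall : ∀ v ∈ C, nbr H v = nbr G v := by
    intro v hvC
    by_cases hva : v = a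
    · rw [hva, na]
    by_cases hvb : v = b
    · rw [hvb, nb]
    by_cases hvc : v = c
    · rw [hvc, nc]
    obtain ⟨h1, h2⟩ := hv v hvC hva hvb hvc
    by_contra hne
    rcases h.2 v hne with h3 | h3
    · rcases h2 with h2 | h2 | h2
      · exact h3.2 a b c hab hac hbc ea eb ec h2.1 h2.2
      · exact h3.2 a c b hac hab hbc.symm ea ec eb h2.1 h2.2
      · exact h3.2 b c a hbc hab.symm hac.symm eb ec ea h2.1 h2.2
    · exact h1 h3.1
  refine ⟨(Ev.congr na).mp ea, (Ev.congr nb).mp eb, (Ev.congr nc).mp ec, ?_, ?_⟩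
  · intro u hu v huv
    refine hC u hu v ?_
    rw [← mem_nbr, nall u hu]
    exact mem_nbr.mpr huv
  · intro v hvC hva hvb hvc
    obtain ⟨h1, h2⟩ := hv v hvC hva hvb hvc
    refine ⟨fun h' => h1 ((Ev.congr (nall v hvC)).mpr h'), ?_⟩
    exact h2.imp (And.imp (@h.1 _ _) (@h.1 _ _))
      (Or.imp (And.imp (@h.1 _ _) (@h.1 _ _)) (And.imp (@h.1 _ _) (@h.1 _ _)))

/-- `G` has a path decomposition (trivial paths allowed) into at most `|V| / 2` paths. -/
def Good (G : SimpleGraph V) : Prop := ∃ d, HasEnds G d ∧ ∑ v, d v ≤ Fintype.card V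

theorem cut_touched {G : SimpleGraph V} {x u : V} {T : Finset V}
    (h : nbr (cut G x T) u ≠ nbr G u) : u = x ∨ u ∈ T := by
  by_contra hcon
  rw [not_or] at hcon
  exact h (nbr_cut_of_notMem hcon.1 hcon.2)

/-- In `cut G x (EN G x)`, the vertex `x` has no neighbour of even degree. -/
theorem EN_cut_EN {G : SimpleGraph V} {x : V} : EN (cut G x (EN G x)) x = ∅ := by
  rw [Finset.eq_empty_iff_forall_notMem]
  intro v hv
  rw [mem_EN, cut_adj_self] at hv
  obtain ⟨⟨h1, h2⟩, h3⟩ := hv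
  rw [ev_cut_of_notMem h1.ne' h2] at h3
  exact h2 (mem_EN.mpr ⟨h1, h3⟩)

/-- Removing all edges to even neighbours of `x` stays in the class, provided no even neighbour
of `x` sees two vertices of an even triangle away from it. -/
theorem reduces_cut_EN {G : SimpleGraph V} {x : V}
    (h : ∀ s ∈ EN G x, ∀ p q r, p ∉ EN G x → q ∉ EN G x → r ∉ EN G x → p ≠ x → q ≠ x → r ≠ x →
      G.Adj p q → G.Adj p r → G.Adj q r → Ev G p → Ev G q → Ev G r → G.Adj s p → G.Adj s q →
      False) : Reduces G (cut G x (EN G x)) := by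
  refine ⟨cut_le, fun u hu => ?_⟩
  have hodd : ∀ t ∈ EN G x, ¬ Ev (cut G x (EN G x)) t := by
    intro t ht
    rw [ev_cut_mem EN_subset_nbr ht, not_not]
    exact (mem_EN.mp ht).2
  rcases cut_touched hu with rfl | hu
  · by_cases hx : Ev (cut G u (EN G u)) u
    · exact Or.inr ⟨hx, EN_cut_EN⟩
    · left
      refine ⟨hx, ?_⟩
      intro p q r _ _ _ hp _ _ hup _
      have : p ∈ EN (cut G u (EN G u)) u := mem_EN.mpr ⟨hup, hp⟩
      rw [EN_cut_EN] at this
      simp at this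
  · left
    refine ⟨hodd u hu, ?_⟩
    intro p q r hpq hpr hqr hp hq hr hup huq
    have key : ∀ v w, Ev (cut G x (EN G x)) v → Ev (cut G x (EN G x)) w →
        (cut G x (EN G x)).Adj v w → v ∉ EN G x ∧ v ≠ x ∧ Ev G v := by
      intro v w hv hw hvw
      have h1 : v ∉ EN G x := fun h => hodd v h hv
      have h2 : v ≠ x := by
        rintro rfl
        have : w ∈ EN (cut G v (EN G v)) v := mem_EN.mpr ⟨hvw, hw⟩
        rw [EN_cut_EN] at this
        simp at this
      exact ⟨h1, h2, (ev_cut_of_notMem h2 h1).mp hv⟩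
    obtain ⟨p1, p2, p3⟩ := key p q hp hq hpq
    obtain ⟨q1, q2, q3⟩ := key q p hq hp hpq.symm
    obtain ⟨r1, r2, r3⟩ := key r p hr hp hpr.symm
    exact h u hu p q r p1 q1 r1 p2 q2 r2 hpq.1 hpr.1 hqr.1 p3 q3 r3 hup.1 huq.1

theorem reduces_cut_EN_of_le_two {G : SimpleGraph V} {x : V}
    (h2 : ∀ v, Ev G v → (EN G v).card ≤ 2) : Reduces G (cut G x (EN G x)) := by
  refine reduces_cut_EN ?_
  intro s hs p q r p1 q1 r1 p2 q2 r2 hpq hpr hqr hp hq hr hsp hsq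
  have := three_le_card_of_mem (mem_EN.mpr ⟨hpq, hq⟩) (mem_EN.mpr ⟨hpr, hr⟩)
    (mem_EN.mpr ⟨hsp.symm, (mem_EN.mp hs).2⟩) hqr.ne (fun h => q1 (h ▸ hs)) (fun h => r1 (h ▸ hs))
  have := h2 p hp
  omega

/-- Adding an edge `ab` at `a` when paths end at all neighbours of `a`. -/
theorem HasEnds.aug_of_pos {G : SimpleGraph V} {a b : V} {d : V → ℕ} (hab : G.Adj a b)
    (hd : HasEnds (cut G a {b}) d) (hpos : ∀ v ∈ nbr G a, 1 ≤ d v) :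
    ∃ d', HasEnds G d' ∧ d' a = d a + 1 ∧ d' b + 1 = d b ∧
      (∀ v, v ≠ a → v ≠ b → d' v = d v) ∧ ∑ v, d' v = ∑ v, d v := by
  classical
  refine hd.aug hab ?_
  have h0 : (nbr G a).filter (fun v => v ≠ b ∧ d v = 0) = ∅ := by
    refine Finset.filter_eq_empty_iff.mpr ?_
    rintro v hv ⟨_, h⟩
    have := hpos v hv
    omega
  rw [h0, Finset.card_empty]
  exact hpos b (mem_nbr.mpr hab)

end EvenNeighbours

theorem four_le_card_of_mem {A : Finset V} {x y z w : V} (hx : x ∈ A) (hy : y ∈ A) (hz : z ∈ A)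
    (hw : w ∈ A) (hxy : x ≠ y) (hxz : x ≠ z) (hxw : x ≠ w) (hyz : y ≠ z) (hyw : y ≠ w)
    (hzw : z ≠ w) : 4 ≤ A.card := by
  classical
  have h3 : 3 ≤ (A.erase x).card :=
    three_le_card_of_mem (Finset.mem_erase.mpr ⟨hxy.symm, hy⟩)
      (Finset.mem_erase.mpr ⟨hxz.symm, hz⟩) (Finset.mem_erase.mpr ⟨hxw.symm, hw⟩) hyz hyw hzw
  have := Finset.card_erase_add_one hx
  omega

section AdjacentEven
variable [Fintype V]

open Classical in
theorem zcount_le_card {G : SimpleGraph V} {x t : V} {T : Finset V} {d : V → ℕ}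
    (h : ∀ v, v ≠ x → d v = 0 ∨ v ∈ T → Ev G v) : zcount G x T d t ≤ ((EN G t).erase x).card := by
  refine Finset.card_le_card ?_
  intro v hv
  rw [Finset.mem_filter, mem_nbr] at hv
  rw [Finset.mem_erase, mem_EN]
  exact ⟨hv.2.1, hv.1, h v hv.2.1 hv.2.2⟩

theorem esize_cut_lt {G : SimpleGraph V} {x t : V} {T : Finset V} (ht : t ∈ T)
    (h : G.Adj x t) : esize (cut G x T) < esize G :=
  esize_lt cut_le h fun h' => (cut_adj_self.mp h').2 ht

/-- A vertex of even degree with three even neighbours can be split off if the class is kept. -/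
theorem good_of_reduces_of_card_three {G : SimpleGraph V} {x : V} (hG : Cls G)
    (IH : ∀ H : SimpleGraph V, esize H < esize G → Cls H → Good H) (hx : Ev G x)
    (h3 : (EN G x).card = 3) (hred : Reduces G (cut G x (EN G x))) : Good G := by
  classical
  obtain ⟨t₀, ht₀⟩ : (EN G x).Nonempty := Finset.card_pos.mp (by omega)
  obtain ⟨d, hd, hsum⟩ := IH _ (esize_cut_lt ht₀ (mem_EN.mp ht₀).1) (hred.cls hG)
  have hT : EN G x ⊆ nbr G x := EN_subset_nbr
  have hxo : ¬ Ev (cut G x (EN G x)) x := by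
    rw [ev_cut_self hT, h3]
    simp only [hx, true_iff]
    decide
  have hodd : ∀ t ∈ EN G x, ¬ Ev (cut G x (EN G x)) t := by
    intro t ht
    rw [ev_cut_mem hT ht, not_not]
    exact (mem_EN.mp ht).2
  have hzero : ∀ v, v ≠ x → d v = 0 ∨ v ∈ EN G x → Ev G v := by
    rintro v hvx (hv | hv)
    · by_contra hcon
      by_cases hvT : v ∈ EN G x
      · exact hcon (mem_EN.mp hvT).2
      · have := hd.pos_of_odd (v := v) (by rwa [ev_cut_of_notMem hvx hvT])
        omega
    · exact (mem_EN.mp hv).2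
  have hpos : ∀ v ∈ nbr G x, 1 ≤ d v := by
    intro v hv
    refine hd.pos_of_odd ?_
    by_cases hvT : v ∈ EN G x
    · exact hodd v hvT
    · rw [ev_cut_of_notMem (ne_of_mem_nbr hv) hvT]
      exact fun h => hvT (mem_EN.mpr ⟨mem_nbr.mp hv, h⟩)
  obtain ⟨d', h1, -, -, h4⟩ := HasEnds.star_of_selectable hT hd hpos (by
    intro t ht
    refine (zcount_le_card (G := G) (x := x) (t := t) hzero).trans ?_
    have h1 := Finset.card_erase_add_one (mem_EN.mpr ⟨(mem_EN.mp ht).1.symm, hx⟩)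
    have h2 := hG.1 t (mem_EN.mp ht).2
    omega) (fun σ hσ => Selectable.of_odd hσ (by omega) (hd.pos_of_odd hxo))
  exact ⟨d', h1, by omega⟩

theorem good_of_card_EN_eq_three {G : SimpleGraph V} {x : V} (hG : Cls G)
    (IH : ∀ H : SimpleGraph V, esize H < esize G → Cls H → Good H) (hx : Ev G x)
    (h3 : (EN G x).card = 3) : Good G := by
  by_cases hred : Reduces G (cut G x (EN G x))
  · exact good_of_reduces_of_card_three hG IH hx h3 hred
  have hw := mt reduces_cut_EN hred
  push Not at hw
  obtain ⟨s, hs, p, q, r, hp, hq, hr, hpx, hqx, hrx, hpq, hpr, hqr, ep, eq, er, hsp, hsq, -⟩ := hw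
  have es := (mem_EN.mp hs).2
  have hqs : q ≠ s := fun h => hq (h ▸ hs)
  have hrs : r ≠ s := fun h => hr (h ▸ hs)
  have mq : q ∈ EN G p := mem_EN.mpr ⟨hpq, eq⟩
  have mr : r ∈ EN G p := mem_EN.mpr ⟨hpr, er⟩
  have ms : s ∈ EN G p := mem_EN.mpr ⟨hsp.symm, es⟩
  have c3 := three_le_card_of_mem mq mr ms hqr.ne hqs hrs
  have c3' := hG.1 p ep
  refine good_of_reduces_of_card_three hG IH ep (by omega) (reduces_cut_EN ?_)
  intro s' hs' p' q' r' hp' hq' hr' hp'p hq'p _ hpq' _ _ ep' eq' _ hsp' hsq'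
  have ne : ∀ v w, v ∈ EN G p → w ∉ EN G p → v ≠ w := fun v w hv hw h => hw (h ▸ hv)
  have cases : s' = q ∨ s' = r ∨ s' = s := by
    by_contra hcon
    push Not at hcon
    have := four_le_card_of_mem hs' mq mr ms hcon.1 hcon.2.1 hcon.2.2 hqr.ne hqs hrs
    omega
  rcases cases with rfl | rfl | rfl
  · have := four_le_card_of_mem (mem_EN.mpr ⟨hpq.symm, ep⟩) (mem_EN.mpr ⟨hqr, er⟩)
      (mem_EN.mpr ⟨hsq.symm, es⟩) (mem_EN.mpr ⟨hsp', ep'⟩) hpr.ne hsp.ne' hp'p.symm hrs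
      (ne _ _ mr hp') (ne _ _ ms hp')
    have := hG.1 s' eq
    omega
  · have := four_le_card_of_mem (mem_EN.mpr ⟨hpr.symm, ep⟩) (mem_EN.mpr ⟨hqr.symm, eq⟩)
      (mem_EN.mpr ⟨hsp', ep'⟩) (mem_EN.mpr ⟨hsq', eq'⟩) hpq.ne hp'p.symm hq'p.symm
      (ne _ _ mq hp') (ne _ _ mq hq') hpq'.ne
    have := hG.1 s' er
    omega
  · have key : ∀ v, v ≠ p → v ∉ EN G p → G.Adj s' v → Ev G v → v = x := by
      intro v hvp hv hsv ev
      by_contra hvx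
      have := four_le_card_of_mem (mem_EN.mpr ⟨(mem_EN.mp hs).1.symm, hx⟩)
        (mem_EN.mpr ⟨hsp, ep⟩) (mem_EN.mpr ⟨hsq, eq⟩) (mem_EN.mpr ⟨hsv, ev⟩) hpx.symm hqx.symm
        (Ne.symm hvx) hpq.ne hvp.symm (ne _ _ mq hv)
      have := hG.1 s' es
      omega
    exact hpq'.ne ((key p' hp'p hp' hsp' ep').trans (key q' hq'p hq' hsq' eq').symm)

/-- An even vertex with exactly one even neighbour can be reduced. -/
theorem good_of_EN_eq_singleton {G : SimpleGraph V} {x s : V} (hG : Cls G)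
    (IH : ∀ H : SimpleGraph V, esize H < esize G → Cls H → Good H)
    (h2 : ∀ v, Ev G v → (EN G v).card ≤ 2) (hs : EN G x = {s}) : Good G := by
  have hs' : s ∈ EN G x := by simp [hs]
  have hadj := (mem_EN.mp hs').1
  have hT : EN G x ⊆ nbr G x := EN_subset_nbr
  obtain ⟨d, hd, hsum⟩ := IH _ (esize_cut_lt hs' hadj)
    ((reduces_cut_EN_of_le_two (x := x) h2).cls hG)
  have hpos : ∀ v ∈ nbr G x, 1 ≤ d v := by
    intro v hv
    refine hd.pos_of_odd ?_
    by_cases hvT : v ∈ EN G x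
    · rw [ev_cut_mem hT hvT, not_not]
      exact (mem_EN.mp hvT).2
    · rw [ev_cut_of_notMem (ne_of_mem_nbr hv) hvT]
      exact fun h => hvT (mem_EN.mpr ⟨mem_nbr.mp hv, h⟩)
  rw [hs] at hd
  obtain ⟨d', h1, -, -, -, h5⟩ := hd.aug_of_pos hadj hpos
  exact ⟨d', h1, by omega⟩

end AdjacentEven

section EvenPath
variable [Fintype V]

/-- A path `v₁ v₂ v₃ v₄` of even vertices whose inner vertices have no further even neighbours can
be reduced by removing its two outer edges. -/
theorem good_of_even_path {G : SimpleGraph V} {v₁ v₂ v₃ v₄ : V} (hG : Cls G)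
    (IH : ∀ H : SimpleGraph V, esize H < esize G → Cls H → Good H)
    (h2 : ∀ v, Ev G v → (EN G v).card ≤ 2)
    (m21 : v₁ ∈ EN G v₂) (m23 : v₃ ∈ EN G v₂) (m32 : v₂ ∈ EN G v₃) (m34 : v₄ ∈ EN G v₃)
    (n13 : v₁ ≠ v₃) (n14 : v₁ ≠ v₄) (n24 : v₂ ≠ v₄) : Good G := by
  obtain ⟨a21, e1⟩ := mem_EN.mp m21
  obtain ⟨a23, e3⟩ := mem_EN.mp m23
  obtain ⟨-, e2⟩ := mem_EN.mp m32
  obtain ⟨a34, e4⟩ := mem_EN.mp m34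
  have h23 : ∀ v, v ∈ EN G v₂ → v = v₁ ∨ v = v₃ := by
    intro v hv
    by_contra hcon
    push Not at hcon
    have := three_le_card_of_mem hv m21 m23 hcon.1 hcon.2 n13
    have := h2 v₂ e2
    omega
  have h32 : ∀ v, v ∈ EN G v₃ → v = v₂ ∨ v = v₄ := by
    intro v hv
    by_contra hcon
    push Not at hcon
    have := three_le_card_of_mem hv m32 m34 hcon.1 hcon.2 n24
    have := h2 v₃ e3
    omega
  set G₁ := cut G v₃ {v₄} with hG₁
  set G₂ := cut G₁ v₂ {v₁} with hG₂
  have s1 : ({v₄} : Finset V) ⊆ nbr G v₃ := by simpa [mem_nbr] using a34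
  have a21' : G₁.Adj v₂ v₁ := (cut_adj_of_ne a23.ne n13).mpr a21
  have s2 : ({v₁} : Finset V) ⊆ nbr G₁ v₂ := by simpa [mem_nbr] using a21'
  have keep : ∀ v, v ≠ v₁ → v ≠ v₂ → v ≠ v₃ → v ≠ v₄ → nbr G₂ v = nbr G v := by
    intro v k1 k2 k3 k4
    rw [hG₂, nbr_cut_of_notMem k2 (by simpa using k1), hG₁,
      nbr_cut_of_notMem k3 (by simpa using k4)]
  have o1 : ¬ Ev G₂ v₁ := by
    rw [hG₂, ev_cut_mem s2 (by simp), not_not, hG₁, ev_cut_of_notMem n13 (by simpa using n14)]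
    exact e1
  have o2 : ¬ Ev G₂ v₂ := by
    rw [hG₂, ev_cut_self s2, hG₁, ev_cut_of_notMem a23.ne (by simpa using n24)]
    simp [e2]
  have o3 : ¬ Ev G₂ v₃ := by
    rw [hG₂, ev_cut_of_notMem a23.ne' (by simpa using n13.symm), hG₁, ev_cut_self s1]
    simp [e3]
  have o4 : ¬ Ev G₂ v₄ := by
    rw [hG₂, ev_cut_of_notMem n24.symm (by simpa using n14.symm), hG₁,
      ev_cut_mem s1 (by simp), not_not]
    exact e4
  have hle : G₂ ≤ G := cut_le.trans cut_le
  have even_of : ∀ v, Ev G₂ v → Ev G v ∧ v ≠ v₁ ∧ v ≠ v₂ ∧ v ≠ v₃ ∧ v ≠ v₄ := by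
    intro v hv
    have k1 : v ≠ v₁ := fun h => o1 (h ▸ hv)
    have k2 : v ≠ v₂ := fun h => o2 (h ▸ hv)
    have k3 : v ≠ v₃ := fun h => o3 (h ▸ hv)
    have k4 : v ≠ v₄ := fun h => o4 (h ▸ hv)
    exact ⟨(Ev.congr (keep v k1 k2 k3 k4)).mp hv, k1, k2, k3, k4⟩
  have hred : Reduces G G₂ := by
    refine ⟨hle, fun u hu => Or.inl ?_⟩
    have hcases : u = v₁ ∨ u = v₂ ∨ u = v₃ ∨ u = v₄ := by
      by_contra hcon
      push Not at hcon
      exact hu (keep u hcon.1 hcon.2.1 hcon.2.2.1 hcon.2.2.2)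
    refine ⟨by rcases hcases with rfl | rfl | rfl | rfl <;> assumption, ?_⟩
    intro p q r hpq _ _ hp hq _ hup huq
    obtain ⟨ep, p1, p2, p3, p4⟩ := even_of p hp
    obtain ⟨eq, q1, q2, q3, q4⟩ := even_of q hq
    have mp : p ∈ EN G u := mem_EN.mpr ⟨hle hup, ep⟩
    have mq : q ∈ EN G u := mem_EN.mpr ⟨hle huq, eq⟩
    rcases hcases with rfl | rfl | rfl | rfl
    · have := three_le_card_of_mem mp mq (mem_EN.mpr ⟨a21.symm, e2⟩) hpq.ne p2 q2
      have := h2 u e1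
      omega
    · exact (h23 p mp).elim p1 p3
    · exact (h32 p mp).elim p2 p4
    · have := three_le_card_of_mem mp mq (mem_EN.mpr ⟨a34.symm, e3⟩) hpq.ne p3 q3
      have := h2 u e4
      omega
  obtain ⟨d, hd, hsum⟩ := IH G₂ (esize_lt hle a34 fun h =>
    (cut_adj_self.mp ((cut_le : G₂ ≤ G₁) h)).2 (by simp)) (hred.cls hG)
  obtain ⟨d₁, k1, k2, k3, k4, k5⟩ := HasEnds.aug_of_pos a21' hd (by
    intro v hv
    refine hd.pos_of_odd fun hev => ?_
    obtain ⟨ev, n1, n2, n3, n4⟩ := even_of v hev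
    exact (h23 v (mem_EN.mpr ⟨cut_le (mem_nbr.mp hv), ev⟩)).elim n1 n3)
  obtain ⟨d₂, j1, -, -, -, j5⟩ := HasEnds.aug_of_pos a34 k1 (by
    intro v hv
    rw [mem_nbr] at hv
    have hv1 : v ≠ v₁ := by
      rintro rfl
      exact (h32 v (mem_EN.mpr ⟨hv, e1⟩)).elim a21.ne' n14
    by_cases hv2 : v = v₂
    · rw [hv2, k2]
      omega
    rw [k4 v hv2 hv1]
    refine hd.pos_of_odd fun hev => ?_
    obtain ⟨ev, n1, n2, n3, n4⟩ := even_of v hev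
    exact (h32 v (mem_EN.mpr ⟨hv, ev⟩)).elim n2 n4)
  exact ⟨d₂, j1, by omega⟩

/-- `a`, `b`, `c` are mutually adjacent even vertices without further even neighbours. -/
structure Tri (G : SimpleGraph V) (a b c : V) : Prop where
  ab : G.Adj a b
  ac : G.Adj a c
  bc : G.Adj b c
  ea : Ev G a
  eb : Ev G b
  ec : Ev G c
  na : ∀ v ∈ EN G a, v = b ∨ v = c
  nb : ∀ v ∈ EN G b, v = a ∨ v = c
  nc : ∀ v ∈ EN G c, v = a ∨ v = b

theorem Tri.rotate {G : SimpleGraph V} {a b c : V} (h : Tri G a b c) : Tri G b c a :=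
  ⟨h.bc, h.ab.symm, h.ac.symm, h.eb, h.ec, h.ea, fun v hv => (h.nb v hv).symm,
    fun v hv => (h.nc v hv).symm, h.na⟩

theorem Tri.swap {G : SimpleGraph V} {a b c : V} (h : Tri G a b c) : Tri G a c b :=
  ⟨h.ac, h.ab, h.bc.symm, h.ea, h.ec, h.eb, fun v hv => (h.na v hv).symm, h.nc, h.nb⟩

/-- Every even vertex is isolated among even vertices or lies in an even triangle. -/
def TriOrIso (G : SimpleGraph V) : Prop := ∀ v, Ev G v → EN G v = ∅ ∨ ∃ b c, Tri G v b c

theorem TriOrIso.card_le_two {G : SimpleGraph V} (h : TriOrIso G) :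
    ∀ v, Ev G v → (EN G v).card ≤ 2 := by
  classical
  intro v hv
  rcases h v hv with h | ⟨b, c, h⟩
  · simp [h]
  · refine le_trans (Finset.card_le_card (t := {b, c}) fun u hu => ?_) (Finset.card_le_two)
    simpa using h.na u hu

/-- In a graph of the class that is not of the special shape, the induction step applies. -/
theorem good_or_triOrIso {G : SimpleGraph V} (hG : Cls G)
    (IH : ∀ H : SimpleGraph V, esize H < esize G → Cls H → Good H) : Good G ∨ TriOrIso G := by
  by_cases hgood : Good G
  · exact Or.inl hgood
  right
  have h2 : ∀ v, Ev G v → (EN G v).card ≤ 2 := by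
    intro v hv
    by_contra hcon
    have := hG.1 v hv
    exact hgood (good_of_card_EN_eq_three hG IH hv (by omega))
  have hcard : ∀ v, Ev G v → EN G v = ∅ ∨ (EN G v).card = 2 := by
    intro v hv
    have := h2 v hv
    have h1 : (EN G v).card ≠ 1 := by
      intro h
      obtain ⟨s, hs⟩ := Finset.card_eq_one.mp h
      exact hgood (good_of_EN_eq_singleton hG IH h2 hs)
    by_cases h0 : (EN G v).card = 0
    · exact Or.inl (Finset.card_eq_zero.mp h0)
    · right; omega
  classical
  have hpath : ∀ v b c, Ev G v → EN G v = {b, c} → b ≠ c → EN G b = {v, c} := by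
    intro v b c hv hbc hne
    have hb : b ∈ EN G v := by simp [hbc]
    have hc : c ∈ EN G v := by simp [hbc]
    have hv' : v ∈ EN G b := mem_EN.mpr ⟨(mem_EN.mp hb).1.symm, hv⟩
    have hcb : c ∈ EN G b := by
      rcases hcard b (mem_EN.mp hb).2 with h | h
      · rw [h] at hv'
        simp at hv'
      · obtain ⟨w, hw, hwv⟩ := Finset.exists_mem_ne (s := EN G b) (by omega) v
        by_cases hwc : w = c
        · exact hwc ▸ hw
        · exact absurd (good_of_even_path hG IH h2 hc hb hv' hw hne.symm (Ne.symm hwc)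
            (Ne.symm hwv)) hgood
    have hvc : v ≠ c := (mem_EN.mp hc).1.ne
    refine (Finset.eq_of_subset_of_card_le ?_ ?_).symm
    · intro u hu
      simp only [Finset.mem_insert, Finset.mem_singleton] at hu
      rcases hu with rfl | rfl <;> assumption
    · rw [Finset.card_pair hvc]
      exact h2 b (mem_EN.mp hb).2
  intro v hv
  rcases hcard v hv with h | h
  · exact Or.inl h
  right
  obtain ⟨b, c, hne, hbc⟩ := Finset.card_eq_two.mp h
  have hb := hpath v b c hv hbc hne
  have hc := hpath v c b hv (by rw [hbc, Finset.pair_comm]) hne.symm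
  have mb : b ∈ EN G v := by simp [hbc]
  have mc : c ∈ EN G v := by simp [hbc]
  have mbc : c ∈ EN G b := by simp [hb]
  exact ⟨b, c, (mem_EN.mp mb).1, (mem_EN.mp mc).1, (mem_EN.mp mbc).1, hv, (mem_EN.mp mb).2,
    (mem_EN.mp mc).2, by simp [hbc], by simp [hb], by simp [hc]⟩

end EvenPath

section TriangleEdge
variable [Fintype V]

theorem Tri.ev_cut_iff {G : SimpleGraph V} {a b c v : V} (h : Tri G a b c) :
    Ev (cut G b {c}) v ↔ Ev G v ∧ v ≠ b ∧ v ≠ c := by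
  have hs : ({c} : Finset V) ⊆ nbr G b := by simpa [mem_nbr] using h.bc
  by_cases hb : v = b
  · subst hb
    rw [ev_cut_self hs]
    simp [h.eb]
  by_cases hc : v = c
  · subst hc
    rw [ev_cut_mem hs (by simp)]
    simp [h.ec]
  rw [ev_cut_of_notMem hb (by simpa using hc)]
  simp [hb, hc]

theorem Tri.mem_EN_cut_iff {G : SimpleGraph V} {a b c v w : V} (h : Tri G a b c) :
    w ∈ EN (cut G b {c}) v ↔ w ∈ EN G v ∧ w ≠ b ∧ w ≠ c := by
  rw [mem_EN, mem_EN, h.ev_cut_iff, cut_adj]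
  simp only [Finset.mem_singleton]
  tauto

theorem Tri.EN_cut_eq_empty {G : SimpleGraph V} {a b c : V} (h : Tri G a b c) :
    EN (cut G b {c}) a = ∅ := by
  rw [Finset.eq_empty_iff_forall_notMem]
  intro v hv
  rw [h.mem_EN_cut_iff] at hv
  rcases h.na v hv.1 with h' | h'
  · exact hv.2.1 h'
  · exact hv.2.2 h'

theorem Tri.EN_cut_empty_of_empty {G : SimpleGraph V} {a b c v : V} (h : Tri G a b c)
    (hv : EN G v = ∅) : EN (cut G b {c}) v = ∅ := by
  rw [Finset.eq_empty_iff_forall_notMem]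
  intro w hw
  have := (h.mem_EN_cut_iff.mp hw).1
  rw [hv] at this
  simp at this

theorem Tri.reduces {G : SimpleGraph V} {a b c : V} (h : Tri G a b c) :
    Reduces G (cut G b {c}) := by
  refine ⟨cut_le, fun u hu => Or.inl ?_⟩
  have hcases : u = b ∨ u = c := by simpa using cut_touched hu
  refine ⟨fun hev => ?_, ?_⟩
  · rw [h.ev_cut_iff] at hev
    exact hcases.elim hev.2.1 hev.2.2
  · intro p q r hpq _ _ hp hq _ hup huq
    have key : ∀ v, Ev (cut G b {c}) v → (cut G b {c}).Adj u v → v = a := by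
      intro v hv huv
      have := h.mem_EN_cut_iff.mp (mem_EN.mpr ⟨huv, hv⟩)
      rcases hcases with rfl | rfl
      · exact (h.nb v this.1).resolve_right this.2.2
      · exact (h.nc v this.1).resolve_right this.2.1
    exact hpq.ne ((key p hp hup).trans (key q hq huq).symm)

theorem Tri.esize_lt {G : SimpleGraph V} {a b c : V} (h : Tri G a b c) :
    esize (cut G b {c}) < esize G := esize_cut_lt (by simp) h.bc

/-- Two triangles of even vertices that differ are disjoint. -/
theorem Tri.disjoint {G : SimpleGraph V} {a b c p q r : V} (h : Tri G a b c) (h' : Tri G p q r)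
    (n1 : a ≠ p) (n2 : a ≠ q) (n3 : a ≠ r) :
    b ≠ p ∧ b ≠ q ∧ b ≠ r ∧ c ≠ p ∧ c ≠ q ∧ c ≠ r := by
  have hb : a ∈ EN G b := mem_EN.mpr ⟨h.ab.symm, h.ea⟩
  have hc : a ∈ EN G c := mem_EN.mpr ⟨h.ac.symm, h.ea⟩
  refine ⟨?_, ?_, ?_, ?_, ?_, ?_⟩ <;> rintro rfl
  · exact (h'.na a hb).elim n2 n3
  · exact (h'.nb a hb).elim n1 n3
  · exact (h'.nc a hb).elim n1 n2
  · exact (h'.na a hc).elim n2 n3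
  · exact (h'.nb a hc).elim n1 n3
  · exact (h'.nc a hc).elim n1 n2

theorem Tri.cut_of_disjoint {G : SimpleGraph V} {a b c p q r : V} (h : Tri G a b c)
    (h' : Tri G p q r) (n1 : a ≠ p) (n2 : a ≠ q) (n3 : a ≠ r) : Tri (cut G b {c}) p q r := by
  obtain ⟨b1, b2, b3, c1, c2, c3⟩ := h.disjoint h' n1 n2 n3
  refine ⟨(cut_adj_of_ne b1.symm b2.symm).mpr h'.ab, (cut_adj_of_ne b1.symm b3.symm).mpr h'.ac,
    (cut_adj_of_ne b2.symm b3.symm).mpr h'.bc, h.ev_cut_iff.mpr ⟨h'.ea, b1.symm, c1.symm⟩,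
    h.ev_cut_iff.mpr ⟨h'.eb, b2.symm, c2.symm⟩, h.ev_cut_iff.mpr ⟨h'.ec, b3.symm, c3.symm⟩,
    ?_, ?_, ?_⟩
  · exact fun v hv => h'.na v (h.mem_EN_cut_iff.mp hv).1
  · exact fun v hv => h'.nb v (h.mem_EN_cut_iff.mp hv).1
  · exact fun v hv => h'.nc v (h.mem_EN_cut_iff.mp hv).1

/-- A decomposition of `G` without the edges from `x` to `T`, prepared for adding these edges;
the members of `L` are those that are easy to add. -/
structure Ready (G : SimpleGraph V) (x : V) (T : Finset V) (L : Set V) (d : V → ℕ) : Prop where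
  ends : HasEnds (cut G x T) d
  sum_le : ∑ v, d v ≤ Fintype.card V
  subset : T ⊆ EN G x
  zero : ∀ v, v ≠ x → d v = 0 → Ev G v
  pos : ∀ v ∈ nbr G x, 1 ≤ d v
  even : T.card % 2 = 0 → 1 ≤ d x
  low : ∀ t ∈ L, t ∈ T ∧ zcount G x T d t ≤ 1

theorem Ready.zero_or_mem {G : SimpleGraph V} {x : V} {T : Finset V} {L : Set V} {d : V → ℕ}
    (h : Ready G x T L d) : ∀ v, v ≠ x → d v = 0 ∨ v ∈ T → Ev G v := by
  rintro v hv (h0 | hT)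
  · exact h.zero v hv h0
  · exact (mem_EN.mp (h.subset hT)).2

theorem Ready.mono {G : SimpleGraph V} {x : V} {T : Finset V} {L L' : Set V} {d : V → ℕ}
    (h : Ready G x T L d) (hL : L' ⊆ L) : Ready G x T L' d :=
  ⟨h.ends, h.sum_le, h.subset, h.zero, h.pos, h.even, fun t ht => h.low t (hL ht)⟩

theorem Ready.good {G : SimpleGraph V} {x : V} {T : Finset V} {L : Set V} {d : V → ℕ}
    (h : Ready G x T L d) (h2 : ∀ v, Ev G v → (EN G v).card ≤ 2)
    (hsel : ∀ σ : V → V, (∀ t ∈ T, σ t ∈ T ∧ σ (σ t) = t) → Selectable G x T d σ) : Good G := by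
  classical
  obtain ⟨d', h1, -, -, h4⟩ := h.ends.star_of_selectable (h.subset.trans EN_subset_nbr) h.pos
    (fun t ht => (zcount_le_card (t := t) h.zero_or_mem).trans
      ((Finset.card_le_card (Finset.erase_subset _ _)).trans
        (h2 t (mem_EN.mp (h.subset ht)).2))) hsel
  exact ⟨d', h1, h4.trans_le h.sum_le⟩

theorem exists_ready {G : SimpleGraph V} {x : V} (hG : Cls G)
    (IH : ∀ H : SimpleGraph V, esize H < esize G → Cls H → Good H)
    (h2 : ∀ v, Ev G v → (EN G v).card ≤ 2) (hx : ¬ Ev G x) (hne : (EN G x).Nonempty) :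
    ∃ d, Ready G x (EN G x) {t | t ∈ EN G x ∧ EN G t = ∅} d := by
  obtain ⟨t₀, ht₀⟩ := hne
  obtain ⟨d, hd, hsum⟩ := IH _ (esize_cut_lt ht₀ (mem_EN.mp ht₀).1)
    ((reduces_cut_EN_of_le_two (x := x) h2).cls hG)
  have hT : EN G x ⊆ nbr G x := EN_subset_nbr
  have hzero : ∀ v, v ≠ x → d v = 0 → Ev G v := by
    intro v hvx hv
    by_contra hcon
    have := hd.pos_of_odd (v := v) (by
      rwa [ev_cut_of_notMem hvx fun h => hcon (mem_EN.mp h).2])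
    omega
  refine ⟨d, hd, hsum, subset_rfl, hzero, ?_, ?_, ?_⟩
  · intro v hv
    refine hd.pos_of_odd ?_
    by_cases hvT : v ∈ EN G x
    · rw [ev_cut_mem hT hvT, not_not]
      exact (mem_EN.mp hvT).2
    · rw [ev_cut_of_notMem (ne_of_mem_nbr hv) hvT]
      exact fun h => hvT (mem_EN.mpr ⟨mem_nbr.mp hv, h⟩)
  · intro h
    refine hd.pos_of_odd ?_
    rw [ev_cut_self hT, Nat.even_iff]
    simp [hx, h]
  · rintro t ⟨ht, ht0⟩
    classical
    refine ⟨ht, (zcount_le_card ?_).trans ?_⟩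
    · rintro v hv (h | h)
      · exact hzero v hv h
      · exact (mem_EN.mp h).2
    · simp [ht0]

open Classical in
/-- Putting back a removed triangle edge `bc` turns the third vertex `a` into an easy one. -/
theorem Ready.step {G : SimpleGraph V} {a b c x : V} {T : Finset V} {L : Set V} {d : V → ℕ}
    (h : Tri G a b c) (hx : ¬ Ev G x) (haT : a ∈ T) (hcx : ¬ G.Adj x c)
    (hb : ¬ G.Adj x b ∨ T.card % 2 = 0) (R : Ready (cut G b {c}) x T L d) :
    ∃ d', Ready G x T (insert a L) d' := by
  have hbx : b ≠ x := fun e => hx (e ▸ h.eb)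
  have hcx' : c ≠ x := fun e => hx (e ▸ h.ec)
  have hR := R.ends
  rw [cut_comm] at hR
  have hda : 1 ≤ d a := R.pos a (EN_subset_nbr (R.subset haT))
  have hTsub : ∀ t ∈ T, t ∈ EN G x ∧ t ≠ b ∧ t ≠ c := fun t ht =>
    h.mem_EN_cut_iff.mp (R.subset ht)
  obtain ⟨d', k1, k2, k3, k4, k5⟩ := hR.aug_of_pos
    ((cut_adj_of_ne hbx hcx').mpr h.bc) (by
    intro v hv
    have hbv : G.Adj b v := cut_le (mem_nbr.mp hv)
    by_cases hvx : v = x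
    · subst hvx
      exact R.even (hb.resolve_left fun h' => h' hbv.symm)
    by_contra h0
    have hev := h.ev_cut_iff.mp (R.zero v hvx (by omega))
    rcases h.nb v (mem_EN.mpr ⟨hbv, hev.1⟩) with rfl | h'
    · exact h0 hda
    · exact hev.2.2 h')
  have hzero : ∀ v, v ≠ x → d' v = 0 → Ev G v := by
    intro v hvx hv
    by_cases h1 : v = b
    · exact h1 ▸ h.eb
    by_cases h3 : v = c
    · exact h3 ▸ h.ec
    rw [k4 v h1 h3] at hv
    exact (h.ev_cut_iff.mp (R.zero v hvx hv)).1
  have hdb : 1 ≤ d' b := by omega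
  refine ⟨d', k1, k5.trans_le R.sum_le, fun t ht => (hTsub t ht).1, hzero, ?_, ?_, ?_⟩
  · intro v hv
    rw [mem_nbr] at hv
    by_cases h1 : v = b
    · exact h1 ▸ hdb
    by_cases h3 : v = c
    · exact absurd (h3 ▸ hv) hcx
    rw [k4 v h1 h3]
    exact R.pos v (mem_nbr.mpr ((cut_adj_of_ne hbx.symm h1).mpr hv))
  · rw [k4 x hbx.symm hcx'.symm]
    exact R.even
  · intro t ht
    by_cases hta : t = a
    · subst hta
      refine ⟨haT, le_trans (Finset.card_le_card (t := {c}) ?_) (by simp)⟩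
      intro v hv
      rw [Finset.mem_filter, mem_nbr] at hv
      have hev : Ev G v := by
        rcases hv.2.2 with h' | h'
        · exact hzero v hv.2.1 h'
        · exact (mem_EN.mp (hTsub v h').1).2
      rw [Finset.mem_singleton]
      refine (h.na v (mem_EN.mpr ⟨hv.1, hev⟩)).resolve_left ?_
      rintro rfl
      rcases hv.2.2 with h' | h'
      · omega
      · exact (hTsub v h').2.1 rfl
    · obtain ⟨htT, htz⟩ := R.low t (Set.mem_of_mem_insert_of_ne ht hta)
      obtain ⟨h1, h3, h4⟩ := hTsub t htT
      refine ⟨htT, le_trans (Finset.card_le_card ?_) htz⟩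
      intro v hv
      rw [Finset.mem_filter, mem_nbr] at hv ⊢
      have hvc : v ≠ c := by
        rintro rfl
        exact (h.nc t (mem_EN.mpr ⟨hv.1.symm, (mem_EN.mp h1).2⟩)).elim hta h3
      refine ⟨cut_adj.mpr ⟨hv.1, fun h' => h3 h'.1, fun h' => h4 (by simpa using h'.2)⟩, hv.2.1, ?_⟩
      rcases hv.2.2 with h' | h'
      · left
        by_cases hvb : v = b
        · subst hvb
          omega
        · rw [← k4 v hvb hvc]
          exact h'
      · exact Or.inr h'

end TriangleEdge

section OddVertex
variable [Fintype V]

/-- An even neighbour of `x` none of whose even neighbours is adjacent to `x`. -/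
def IsLow (G : SimpleGraph V) (x t : V) : Prop :=
  t ∈ EN G x ∧ (EN G t = ∅ ∨ ∃ b c, Tri G t b c ∧ ¬ G.Adj x b ∧ ¬ G.Adj x c)

theorem Tri.EN_cut_eq {G : SimpleGraph V} {a b c x : V} (h : Tri G a b c) (hb : ¬ G.Adj x b)
    (hc : ¬ G.Adj x c) : EN (cut G b {c}) x = EN G x := by
  ext v
  rw [h.mem_EN_cut_iff]
  refine ⟨fun h => h.1, fun hv => ⟨hv, ?_, ?_⟩⟩ <;> rintro rfl
  · exact hb (mem_EN.mp hv).1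
  · exact hc (mem_EN.mp hv).1

theorem exists_ready_of_isolated {G : SimpleGraph V} {x t t' : V} (hG : Cls G)
    (IH : ∀ H : SimpleGraph V, esize H < esize G → Cls H → Good H)
    (h2 : ∀ v, Ev G v → (EN G v).card ≤ 2) (hx : ¬ Ev G x) (ht : t ∈ EN G x) (ht0 : EN G t = ∅)
    (ht' : IsLow G x t') : ∃ d, Ready G x (EN G x) {t, t'} d := by
  obtain ⟨hmem, h0 | ⟨b, c, h, hb, hc⟩⟩ := ht'
  · obtain ⟨d, hd⟩ := exists_ready hG IH h2 hx ⟨t, ht⟩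
    refine ⟨d, hd.mono ?_⟩
    rintro v (rfl | rfl)
    · exact ⟨ht, ht0⟩
    · exact ⟨hmem, h0⟩
  · have e := h.EN_cut_eq hb hc
    obtain ⟨d, hd⟩ := exists_ready (x := x) (h.reduces.cls hG)
      (fun H hH => IH H (hH.trans h.esize_lt)) (h.reduces.card_EN_le h2)
      (fun h' => hx (h.ev_cut_iff.mp h').1) (by rw [e]; exact ⟨t, ht⟩)
    rw [e] at hd
    obtain ⟨d', hd'⟩ := hd.step h hx hmem hc (Or.inl hb)
    refine ⟨d', hd'.mono ?_⟩
    rintro v (rfl | rfl)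
    · exact Set.mem_insert_of_mem _ ⟨ht, h.EN_cut_empty_of_empty ht0⟩
    · exact Set.mem_insert _ _

theorem exists_ready_of_isLow {G : SimpleGraph V} {x t t' : V} (hG : Cls G)
    (IH : ∀ H : SimpleGraph V, esize H < esize G → Cls H → Good H)
    (h2 : ∀ v, Ev G v → (EN G v).card ≤ 2) (hx : ¬ Ev G x) (ht : IsLow G x t)
    (ht' : IsLow G x t') : ∃ d, Ready G x (EN G x) {t, t'} d := by
  obtain ⟨hmem, h0 | ⟨b, c, h, hb, hc⟩⟩ := ht
  · exact exists_ready_of_isolated hG IH h2 hx hmem h0 ht'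
  · have e := h.EN_cut_eq hb hc
    have hlow : IsLow (cut G b {c}) x t' := by
      refine ⟨by rw [e]; exact ht'.1, ?_⟩
      by_cases htt : t = t'
      · left
        rw [← htt]
        exact h.EN_cut_eq_empty
      rcases ht'.2 with h0 | ⟨p, q, h', hp, hq⟩
      · exact Or.inl (h.EN_cut_empty_of_empty h0)
      · have htx := (mem_EN.mp hmem).1
        refine Or.inr ⟨p, q, h.cut_of_disjoint h' htt ?_ ?_, fun k => hp (cut_le k),
          fun k => hq (cut_le k)⟩ <;> rintro rfl
        · exact hp htx
        · exact hq htx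
    obtain ⟨d, hd⟩ := exists_ready_of_isolated (x := x) (t := t) (h.reduces.cls hG)
      (fun H hH => IH H (hH.trans h.esize_lt)) (h.reduces.card_EN_le h2)
      (fun h' => hx (h.ev_cut_iff.mp h').1) (by rw [e]; exact hmem) h.EN_cut_eq_empty hlow
    rw [e] at hd
    obtain ⟨d', hd'⟩ := hd.step h hx hmem hc (Or.inl hb)
    exact ⟨d', hd'.mono (Set.subset_insert _ _)⟩

theorem good_of_isLow_of_even {G : SimpleGraph V} {x t : V} (hG : Cls G)
    (IH : ∀ H : SimpleGraph V, esize H < esize G → Cls H → Good H)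
    (h2 : ∀ v, Ev G v → (EN G v).card ≤ 2) (hx : ¬ Ev G x) (ht : IsLow G x t)
    (heven : (EN G x).card % 2 = 0) : Good G := by
  obtain ⟨d, hd⟩ := exists_ready_of_isLow hG IH h2 hx ht ht
  obtain ⟨h1, h3⟩ := hd.low t (by simp)
  exact hd.good h2 fun σ hσ => Selectable.of_even hσ heven (hd.even heven) h1 h3

theorem good_of_two_isLow {G : SimpleGraph V} {x t t' : V} (hG : Cls G)
    (IH : ∀ H : SimpleGraph V, esize H < esize G → Cls H → Good H)
    (h2 : ∀ v, Ev G v → (EN G v).card ≤ 2) (hx : ¬ Ev G x) (ht : IsLow G x t)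
    (ht' : IsLow G x t') (hne : t ≠ t') : Good G := by
  obtain ⟨d, hd⟩ := exists_ready_of_isLow hG IH h2 hx ht ht'
  obtain ⟨h1, h3⟩ := hd.low t (by simp)
  obtain ⟨h1', h3'⟩ := hd.low t' (by simp)
  exact hd.good h2 fun σ hσ => Selectable.of_two_low hσ hd.even h1 h1' hne h3 h3'

theorem Tri.card_EN_cut {G : SimpleGraph V} {a b c x : V} (h : Tri G a b c) (hb : G.Adj x b)
    (hc : ¬ G.Adj x c) : (EN (cut G b {c}) x).card + 1 = (EN G x).card := by
  classical
  rw [← Finset.card_erase_add_one (mem_EN.mpr ⟨hb, h.eb⟩)]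
  congr 2
  ext v
  rw [h.mem_EN_cut_iff, Finset.mem_erase]
  refine ⟨fun h' => ⟨h'.2.1, h'.1⟩, fun h' => ⟨h'.2, h'.1, ?_⟩⟩
  rintro rfl
  exact hc (mem_EN.mp h'.2).1

/-- A triangle meeting the neighbourhood of `x` in two vertices, with `x` having an odd number of
even neighbours. -/
theorem good_of_two_of_odd {G : SimpleGraph V} {a b c x : V} (hG : Cls G)
    (IH : ∀ H : SimpleGraph V, esize H < esize G → Cls H → Good H)
    (h2 : ∀ v, Ev G v → (EN G v).card ≤ 2) (hx : ¬ Ev G x) (h : Tri G a b c) (ha : G.Adj x a)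
    (hb : G.Adj x b) (hc : ¬ G.Adj x c) (hodd : (EN G x).card % 2 = 1) : Good G := by
  have hmem : a ∈ EN (cut G b {c}) x :=
    h.mem_EN_cut_iff.mpr ⟨mem_EN.mpr ⟨ha, h.ea⟩, h.ab.ne, h.ac.ne⟩
  have hcard := h.card_EN_cut hb hc
  obtain ⟨d, hd⟩ := exists_ready (x := x) (h.reduces.cls hG)
    (fun H hH => IH H (hH.trans h.esize_lt)) (h.reduces.card_EN_le h2)
    (fun h' => hx (h.ev_cut_iff.mp h').1) ⟨a, hmem⟩
  obtain ⟨d', hd'⟩ := hd.step h hx hmem hc (Or.inr (by omega))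
  obtain ⟨h1, h3⟩ := hd'.low a (Set.mem_insert _ _)
  exact hd'.good h2 fun σ hσ =>
    Selectable.of_even hσ (by omega) (hd'.even (by omega)) h1 h3

/-- Two triangles meeting the neighbourhood of `x` in two vertices, with `x` having an even number
of even neighbours. -/
theorem good_of_two_two_of_even {G : SimpleGraph V} {a b c p q r x : V} (hG : Cls G)
    (IH : ∀ H : SimpleGraph V, esize H < esize G → Cls H → Good H)
    (h2 : ∀ v, Ev G v → (EN G v).card ≤ 2) (hx : ¬ Ev G x) (h : Tri G a b c) (ha : G.Adj x a)
    (hb : G.Adj x b) (hc : ¬ G.Adj x c) (h' : Tri G p q r) (hp : G.Adj x p)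
    (hq : G.Adj x q) (hr : ¬ G.Adj x r) (n1 : a ≠ p) (n2 : a ≠ q)
    (heven : (EN G x).card % 2 = 0) : Good G := by
  have n3 : a ≠ r := fun e => hr (e ▸ ha)
  obtain ⟨b1, b2, b3, c1, c2, c3⟩ := h.disjoint h' n1 n2 n3
  have k := h.cut_of_disjoint h' n1 n2 n3
  set G₁ := cut G b {c} with hG₁
  have hbx : b ≠ x := hb.ne'
  have hcx : c ≠ x := fun e => hx (e ▸ h.ec)
  have hp₁ : G₁.Adj x p := (cut_adj_of_ne hbx.symm b1.symm).mpr hp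
  have hq₁ : G₁.Adj x q := (cut_adj_of_ne hbx.symm b2.symm).mpr hq
  have ha₁ : a ∈ EN G₁ x := h.mem_EN_cut_iff.mpr ⟨mem_EN.mpr ⟨ha, h.ea⟩, h.ab.ne, h.ac.ne⟩
  have hr₁ : ¬ G₁.Adj x r := fun e => hr (cut_le e)
  have hx₁ : ¬ Ev G₁ x := fun h' => hx (h.ev_cut_iff.mp h').1
  have hcard : (EN G₁ x).card + 1 = (EN G x).card := h.card_EN_cut hb hc
  have hcard₁ := k.card_EN_cut hq₁ hr₁
  have hmem : a ∈ EN (cut G₁ q {r}) x := k.mem_EN_cut_iff.mpr ⟨ha₁, n2, n3⟩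
  have hmem' : p ∈ EN (cut G₁ q {r}) x :=
    k.mem_EN_cut_iff.mpr ⟨mem_EN.mpr ⟨hp₁, k.ea⟩, k.ab.ne, k.ac.ne⟩
  obtain ⟨d, hd⟩ := exists_ready (x := x) (k.reduces.cls (h.reduces.cls hG))
    (fun H hH => IH H (hH.trans (k.esize_lt.trans h.esize_lt)))
    (k.reduces.card_EN_le (h.reduces.card_EN_le h2))
    (fun h' => hx₁ (k.ev_cut_iff.mp h').1) ⟨a, hmem⟩
  obtain ⟨d₁, hd₁⟩ := hd.step k hx₁ hmem' hr₁ (Or.inr (by omega))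
  obtain ⟨d₂, hd₂⟩ := hd₁.step h hx hmem hc (Or.inr (by omega))
  obtain ⟨j1, j3⟩ := hd₂.low a (Set.mem_insert _ _)
  exact hd₂.good h2 fun σ hσ =>
    Selectable.of_even hσ (by omega) (hd₂.even (by omega)) j1 j3

/-- Two triangles contained in the neighbourhood of `x`. -/
theorem good_of_two_full {G : SimpleGraph V} {a b c p q r x : V} (hG : Cls G)
    (IH : ∀ H : SimpleGraph V, esize H < esize G → Cls H → Good H)
    (h2 : ∀ v, Ev G v → (EN G v).card ≤ 2) (hx : ¬ Ev G x) (h : Tri G a b c) (ha : G.Adj x a)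
    (hb : G.Adj x b) (hc : G.Adj x c) (h' : Tri G p q r) (hp : G.Adj x p)
    (hq : G.Adj x q) (hr : G.Adj x r) (n1 : a ≠ p) (n2 : a ≠ q) (n3 : a ≠ r) : Good G := by
  classical
  obtain ⟨b1, b2, b3, c1, c2, c3⟩ := h.disjoint h' n1 n2 n3
  obtain ⟨d, hd⟩ := exists_ready hG IH h2 hx ⟨a, mem_EN.mpr ⟨ha, h.ea⟩⟩
  have card : ∀ u v w, Tri G u v w → ({u, v, w} : Finset V).card = 3 := fun u v w k =>
    Finset.card_eq_three.mpr ⟨u, v, w, k.ab.ne, k.ac.ne, k.bc.ne, rfl⟩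
  have sub : ∀ u v w, Tri G u v w → G.Adj x u → G.Adj x v → G.Adj x w →
      ({u, v, w} : Finset V) ⊆ EN G x := by
    intro u v w k hu hv hw t ht
    simp only [Finset.mem_insert, Finset.mem_singleton] at ht
    rcases ht with rfl | rfl | rfl
    · exact mem_EN.mpr ⟨hu, k.ea⟩
    · exact mem_EN.mpr ⟨hv, k.eb⟩
    · exact mem_EN.mpr ⟨hw, k.ec⟩
  have clos : ∀ u v w, Tri G u v w → ∀ t ∈ ({u, v, w} : Finset V), ∀ s ∈ nbr G t, s ≠ x →
      d s = 0 ∨ s ∈ EN G x → s ∈ ({u, v, w} : Finset V) := by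
    intro u v w k t ht s hs hsx hs0
    have hs' : s ∈ EN G t := mem_EN.mpr ⟨mem_nbr.mp hs, hd.zero_or_mem s hsx hs0⟩
    simp only [Finset.mem_insert, Finset.mem_singleton] at ht ⊢
    rcases ht with rfl | rfl | rfl
    · exact Or.inr (k.na s hs')
    · exact (k.nb s hs').imp_right Or.inr
    · exact (k.nc s hs').imp_right Or.inl
  refine hd.good h2 fun σ hσ => Selectable.of_two_triples hσ hd.even
    (fun t ht => hd.pos t (EN_subset_nbr ht)) (sub a b c h ha hb hc) (sub p q r h' hp hq hr) ?_
    (card a b c h) (card p q r h') (clos a b c h) (clos p q r h')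
  simp [n1.symm, n2.symm, n3.symm, b1.symm, b2.symm, b3.symm, c1.symm, c2.symm, c3.symm]

theorem good_of_card_EN_eq_one {G : SimpleGraph V} {x : V} (hG : Cls G)
    (IH : ∀ H : SimpleGraph V, esize H < esize G → Cls H → Good H)
    (h2 : ∀ v, Ev G v → (EN G v).card ≤ 2) (hx : ¬ Ev G x) (h1 : (EN G x).card = 1) : Good G := by
  obtain ⟨d, hd⟩ := exists_ready hG IH h2 hx (Finset.card_pos.mp (by omega))
  exact hd.good h2 fun σ hσ => Selectable.of_card_one hσ h1

/-- Unless the induction step applies, the even neighbours of an odd vertex are two or three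
vertices of one triangle of even vertices. -/
theorem good_or_EN_subset_tri {G : SimpleGraph V} {x : V} (hG : Cls G)
    (IH : ∀ H : SimpleGraph V, esize H < esize G → Cls H → Good H) (hT : TriOrIso G)
    (hx : ¬ Ev G x) (hne : (EN G x).Nonempty) :
    Good G ∨ ∃ a b c, Tri G a b c ∧ G.Adj x a ∧ G.Adj x b ∧
      ∀ v ∈ EN G x, v = a ∨ v = b ∨ v = c := by
  classical
  by_cases hgood : Good G
  · exact Or.inl hgood
  right
  have h2 := hT.card_le_two
  have types : ∀ t ∈ EN G x, IsLow G x t ∨ (∃ b c, Tri G t b c ∧ G.Adj x b ∧ ¬ G.Adj x c) ∨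
      ∃ b c, Tri G t b c ∧ G.Adj x b ∧ G.Adj x c := by
    intro t ht
    rcases hT t (mem_EN.mp ht).2 with h | ⟨b, c, h⟩
    · exact Or.inl ⟨ht, Or.inl h⟩
    by_cases hb : G.Adj x b <;> by_cases hc : G.Adj x c
    · exact Or.inr (Or.inr ⟨b, c, h, hb, hc⟩)
    · exact Or.inr (Or.inl ⟨b, c, h, hb, hc⟩)
    · exact Or.inr (Or.inl ⟨c, b, h.swap, hc, hb⟩)
    · exact Or.inl ⟨ht, Or.inr ⟨b, c, h, hb, hc⟩⟩
  have adj : ∀ t ∈ EN G x, G.Adj x t := fun t ht => (mem_EN.mp ht).1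
  have same_full : ∀ a b c p q r, Tri G a b c → G.Adj x a → G.Adj x b → G.Adj x c →
      Tri G p q r → G.Adj x p → G.Adj x q → G.Adj x r → a = p ∨ a = q ∨ a = r := by
    intro a b c p q r h ha hb hc h' hp hq hr
    by_contra hcon
    push Not at hcon
    exact hgood (good_of_two_full hG IH h2 hx h ha hb hc h' hp hq hr hcon.1 hcon.2.1 hcon.2.2)
  have same_low : ∀ t t', IsLow G x t → IsLow G x t' → t = t' := by
    intro t t' h h'
    by_contra hcon
    exact hgood (good_of_two_isLow hG IH h2 hx h h' hcon)
  obtain ⟨t₀, ht₀⟩ := hne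
  rcases Nat.mod_two_eq_zero_or_one (EN G x).card with hpar | hpar
  · have no_low : ∀ t, ¬ IsLow G x t := fun t h =>
      hgood (good_of_isLow_of_even hG IH h2 hx h hpar)
    have same_two : ∀ a b c p q r, Tri G a b c → G.Adj x a → G.Adj x b → ¬ G.Adj x c →
        Tri G p q r → G.Adj x p → G.Adj x q → ¬ G.Adj x r → a = p ∨ a = q := by
      intro a b c p q r h ha hb hc h' hp hq hr
      by_contra hcon
      push Not at hcon
      exact hgood (good_of_two_two_of_even hG IH h2 hx h ha hb hc h' hp hq hr hcon.1 hcon.2 hpar)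
    by_cases hfull : ∃ a b c, Tri G a b c ∧ G.Adj x a ∧ G.Adj x b ∧ G.Adj x c
    · obtain ⟨a, b, c, h, ha, hb, hc⟩ := hfull
      refine ⟨a, b, c, h, ha, hb, ?_⟩
      intro v hv
      rcases types v hv with h' | ⟨q, r, h', hq, hr⟩ | ⟨q, r, h', hq, hr⟩
      · exact absurd h' (no_low v)
      · exfalso
        have n1 : v ≠ a := by
          rintro rfl
          exact (h.na r (mem_EN.mpr ⟨h'.ac, h'.ec⟩)).elim (fun e => hr (e ▸ hb))
            (fun e => hr (e ▸ hc))
        have n2 : v ≠ b := by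
          rintro rfl
          exact (h.nb r (mem_EN.mpr ⟨h'.ac, h'.ec⟩)).elim (fun e => hr (e ▸ ha))
            (fun e => hr (e ▸ hc))
        have n3 : v ≠ c := by
          rintro rfl
          exact (h.nc r (mem_EN.mpr ⟨h'.ac, h'.ec⟩)).elim (fun e => hr (e ▸ ha))
            (fun e => hr (e ▸ hb))
        obtain ⟨m1, m2, m3, -⟩ := h'.disjoint h n1 n2 n3
        have heq : EN G x = insert v (insert q {a, b, c}) := by
          ext u
          simp only [Finset.mem_insert, Finset.mem_singleton]
          constructor
          · intro hu
            rcases types u hu with k | ⟨s, w, k, hs, hw⟩ | ⟨s, w, k, hs, hw⟩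
            · exact absurd k (no_low u)
            · have := same_two u s w v q r k (adj u hu) hs hw h' (adj v hv) hq hr
              tauto
            · have := same_full u s w a b c k (adj u hu) hs hw h ha hb hc
              tauto
          · rintro (rfl | rfl | rfl | rfl | rfl)
            · exact hv
            · exact mem_EN.mpr ⟨hq, h'.eb⟩
            · exact mem_EN.mpr ⟨ha, h.ea⟩
            · exact mem_EN.mpr ⟨hb, h.eb⟩
            · exact mem_EN.mpr ⟨hc, h.ec⟩
        rw [heq, Finset.card_insert_of_notMem (by simp [n1, n2, n3, h'.ab.ne]),
          Finset.card_insert_of_notMem (by simp [m1, m2, m3]),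
          Finset.card_eq_three.mpr ⟨a, b, c, h.ab.ne, h.ac.ne, h.bc.ne, rfl⟩] at hpar
        omega
      · exact same_full v q r a b c h' (adj v hv) hq hr h ha hb hc
    · rcases types t₀ ht₀ with h' | ⟨q, r, h', hq, hr⟩ | ⟨q, r, h', hq, hr⟩
      · exact absurd h' (no_low t₀)
      · refine ⟨t₀, q, r, h', adj t₀ ht₀, hq, ?_⟩
        intro v hv
        rcases types v hv with k | ⟨s, w, k, hs, hw⟩ | ⟨s, w, k, hs, hw⟩
        · exact absurd k (no_low v)
        · have := same_two v s w t₀ q r k (adj v hv) hs hw h' (adj t₀ ht₀) hq hr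
          tauto
        · exact absurd ⟨v, s, w, k, adj v hv, hs, hw⟩ hfull
      · exact absurd ⟨t₀, q, r, h', adj t₀ ht₀, hq, hr⟩ hfull
  · have no_two : ∀ a b c, Tri G a b c → G.Adj x a → G.Adj x b → G.Adj x c := by
      intro a b c h ha hb
      by_contra hc
      exact hgood (good_of_two_of_odd hG IH h2 hx h ha hb hc hpar)
    by_cases hfull : ∃ a b c, Tri G a b c ∧ G.Adj x a ∧ G.Adj x b ∧ G.Adj x c
    · obtain ⟨a, b, c, h, ha, hb, hc⟩ := hfull
      refine ⟨a, b, c, h, ha, hb, ?_⟩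
      intro v hv
      by_contra hcon
      have hlow : IsLow G x v := by
        rcases types v hv with h' | ⟨q, r, h', hq, hr⟩ | ⟨q, r, h', hq, hr⟩
        · exact h'
        · exact absurd (no_two v q r h' (adj v hv) hq) hr
        · exact absurd (same_full v q r a b c h' (adj v hv) hq hr h ha hb hc) hcon
      have heq : EN G x = insert v {a, b, c} := by
        ext u
        simp only [Finset.mem_insert, Finset.mem_singleton]
        constructor
        · intro hu
          rcases types u hu with k | ⟨s, w, k, hs, hw⟩ | ⟨s, w, k, hs, hw⟩
          · exact Or.inl (same_low u v k hlow)
          · exact absurd (no_two u s w k (adj u hu) hs) hw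
          · exact Or.inr (same_full u s w a b c k (adj u hu) hs hw h ha hb hc)
        · rintro (rfl | rfl | rfl | rfl)
          · exact hv
          · exact mem_EN.mpr ⟨ha, h.ea⟩
          · exact mem_EN.mpr ⟨hb, h.eb⟩
          · exact mem_EN.mpr ⟨hc, h.ec⟩
      rw [heq, Finset.card_insert_of_notMem (by simpa using hcon),
        Finset.card_eq_three.mpr ⟨a, b, c, h.ab.ne, h.ac.ne, h.bc.ne, rfl⟩] at hpar
      omega
    · exfalso
      have all_low : ∀ v ∈ EN G x, IsLow G x v := by
        intro v hv
        rcases types v hv with h' | ⟨q, r, h', hq, hr⟩ | ⟨q, r, h', hq, hr⟩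
        · exact h'
        · exact absurd (no_two v q r h' (adj v hv) hq) hr
        · exact absurd ⟨v, q, r, h', adj v hv, hq, hr⟩ hfull
      refine hgood (good_of_card_EN_eq_one hG IH h2 hx (Finset.card_eq_one.mpr ⟨t₀, ?_⟩))
      refine Finset.eq_singleton_iff_unique_mem.mpr ⟨ht₀, fun u hu => ?_⟩
      exact same_low u t₀ (all_low u hu) (all_low t₀ ht₀)

end OddVertex

section OddEdge
variable [Fintype V]

/-- A decomposition of `G` without the edge `wy`, the edges from `w` to `S` and those from `y` to
`T`, prepared for adding these edges. -/
structure ReadyEdge (G : SimpleGraph V) (w y : V) (S T : Finset V) (d : V → ℕ) : Prop where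
  adj : G.Adj w y
  ends : HasEnds (cut (cut (cut G y T) y {w}) w S) d
  sum_le : ∑ v, d v ≤ Fintype.card V
  subset_left : S ⊆ EN G w
  subset_right : T ⊆ EN G y
  odd_left : S.card % 2 = 1
  odd_right : T = ∅ ∨ T.card % 2 = 1
  zero : ∀ v, v ≠ y → d v = 0 → Ev G v
  pos_left : ∀ v ∈ nbr G w, v ≠ y → 1 ≤ d v
  pos_right : ∀ v ∈ nbr G y, 1 ≤ d v
  disj : ∀ t ∈ S, ¬ G.Adj y t
  pos_of_nonempty : T.Nonempty → 1 ≤ d y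

theorem exists_readyEdge {G : SimpleGraph V} {w y : V} (hG : Cls G)
    (IH : ∀ H : SimpleGraph V, esize H < esize G → Cls H → Good H)
    (h2 : ∀ v, Ev G v → (EN G v).card ≤ 2) (ow : ¬ Ev G w) (oy : ¬ Ev G y) (hwy : G.Adj w y)
    (hw : (EN G w).card % 2 = 1) (hy : EN G y = ∅ ∨ (EN G y).card % 2 = 1)
    (hdisj : ∀ t ∈ EN G w, ¬ G.Adj y t) : ∃ d, ReadyEdge G w y (EN G w) (EN G y) d := by
  classical
  have hS : EN G w ⊆ nbr G w := EN_subset_nbr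
  set G₁ := cut G w (EN G w) with hG₁
  have red₁ : Reduces G G₁ := reduces_cut_EN_of_le_two h2
  have red₂ : Reduces G₁ (cut G₁ y (EN G₁ y)) :=
    reduces_cut_EN_of_le_two (red₁.card_EN_le h2)
  have hyS : y ∉ EN G w := fun h => oy (mem_EN.mp h).2
  have ew : Ev G₁ w := by
    rw [hG₁, ev_cut_self hS, Nat.even_iff, hw]
    simp [ow]
  have oy₁ : ¬ Ev G₁ y := by rwa [hG₁, ev_cut_of_notMem hwy.ne' hyS]
  have ewy : G₁.Adj y w := (cut_adj_self.mpr ⟨hwy, hyS⟩).symm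
  have hwT : w ∉ EN G y := fun h => ow (mem_EN.mp h).2
  have hodd₁ : ∀ v ∈ EN G w, ¬ Ev G₁ v := by
    intro v hv
    rw [hG₁, ev_cut_mem hS hv, not_not]
    exact (mem_EN.mp hv).2
  have hEN : EN G₁ y = EN G y ∪ {w} := by
    ext v
    rw [Finset.mem_union, Finset.mem_singleton]
    by_cases hvw : v = w
    · subst hvw
      simp [mem_EN, ew, ewy]
    simp only [hvw, or_false]
    by_cases hvS : v ∈ EN G w
    · exact ⟨fun h => absurd (mem_EN.mp h).2 (hodd₁ v hvS),
        fun h => absurd (mem_EN.mp h).1 (hdisj v hvS)⟩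
    · rw [mem_EN, mem_EN, hG₁, ev_cut_of_notMem hvw hvS, cut_adj_of_ne hwy.ne' hvw]
  have hT : EN G₁ y ⊆ nbr G₁ y := EN_subset_nbr
  have hwm : w ∈ EN G₁ y := mem_EN.mpr ⟨ewy, ew⟩
  obtain ⟨d, hd, hsum⟩ := IH _ ((esize_cut_lt hwm ewy).trans_le
    (by
      obtain ⟨s, hs⟩ : (EN G w).Nonempty := Finset.card_pos.mp (by omega)
      exact (esize_cut_lt hs (mem_EN.mp hs).1).le)) (red₂.cls (red₁.cls hG))
  have hev : ∀ v, v ≠ y → Ev (cut G₁ y (EN G₁ y)) v → Ev G v ∧ v ∉ EN G w ∧ v ∉ EN G y := by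
    intro v hvy hv
    have h1 : v ∉ EN G₁ y := fun h => (ev_cut_mem hT h).mp hv (mem_EN.mp h).2
    rw [ev_cut_of_notMem hvy h1] at hv
    have h3 : v ∉ EN G w := fun h => hodd₁ v h hv
    rw [hEN, Finset.mem_union, Finset.mem_singleton, not_or] at h1
    exact ⟨(ev_cut_of_notMem h1.2 h3).mp hv, h3, h1.1⟩
  have hy₂ : (EN G y).Nonempty → ¬ Ev (cut G₁ y (EN G₁ y)) y := by
    intro hne
    have hc : (EN G₁ y).card = (EN G y).card + 1 := by
      rw [hEN, Finset.card_union_of_disjoint (by simpa using hwT), Finset.card_singleton]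
    have := hy.resolve_left hne.ne_empty
    rw [ev_cut_self hT, Nat.even_iff, hc]
    simp only [oy₁, false_iff, not_not]
    omega
  have hends : cut G₁ y (EN G₁ y) = cut (cut (cut G y (EN G y)) y {w}) w (EN G w) := by
    rw [hEN, ← cut_cut_union, hG₁, cut_comm (x := w) (y := y), cut_comm (x := w) (y := y)]
  refine ⟨d, hwy, hends ▸ hd, hsum, subset_rfl, subset_rfl, hw, hy, ?_, ?_, ?_, hdisj,
    fun h => hd.pos_of_odd (hy₂ h)⟩
  · intro v hvy hv
    by_contra hcon
    have := hd.pos_of_odd (v := v) fun h => hcon (hev v hvy h).1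
    omega
  · intro v hv hvy
    refine hd.pos_of_odd fun h => ?_
    obtain ⟨k1, k2, -⟩ := hev v hvy h
    exact k2 (mem_EN.mpr ⟨mem_nbr.mp hv, k1⟩)
  · intro v hv
    refine hd.pos_of_odd fun h => ?_
    obtain ⟨k1, -, k2⟩ := hev v (ne_of_mem_nbr hv) h
    exact k2 (mem_EN.mpr ⟨mem_nbr.mp hv, k1⟩)

theorem ReadyEdge.step {G : SimpleGraph V} {a b c w y : V} {S T : Finset V} {d : V → ℕ}
    (h : Tri G a b c) (ow : ¬ Ev G w) (oy : ¬ Ev G y) (ha : a ∈ S ∨ a ∈ T)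
    (hcw : ¬ G.Adj w c) (hcy : ¬ G.Adj y c) (hby : G.Adj y b → T.Nonempty)
    (R : ReadyEdge (cut G b {c}) w y S T d) : ∃ d', ReadyEdge G w y S T d' := by
  have hbw : b ≠ w := fun e => ow (e ▸ h.eb)
  have hby' : b ≠ y := fun e => oy (e ▸ h.eb)
  have hcw' : c ≠ w := fun e => ow (e ▸ h.ec)
  have hcy' : c ≠ y := fun e => oy (e ▸ h.ec)
  have hay : a ≠ y := fun e => oy (e ▸ h.ea)
  have hR := R.ends
  rw [cut_comm (x := b) (y := y), cut_comm (x := b) (y := y), cut_comm (x := b) (y := w)] at hR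
  have hda : 1 ≤ d a := by
    rcases ha with ha | ha
    · exact R.pos_left a (EN_subset_nbr (R.subset_left ha)) hay
    · exact R.pos_right a (EN_subset_nbr (R.subset_right ha))
  have hle : cut (cut (cut G y T) y {w}) w S ≤ G := cut_le.trans (cut_le.trans cut_le)
  obtain ⟨d', k1, k2, k3, k4, k5⟩ := hR.aug_of_pos
    ((cut_adj_of_ne hbw hcw').mpr ((cut_adj_of_ne hby' hcy').mpr
      ((cut_adj_of_ne hby' hcy').mpr h.bc))) (by
    intro v hv
    have hbv : G.Adj b v := hle (mem_nbr.mp hv)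
    by_cases hvy : v = y
    · subst hvy
      exact R.pos_of_nonempty (hby hbv.symm)
    by_contra h0
    have hev := h.ev_cut_iff.mp (R.zero v hvy (by omega))
    rcases h.nb v (mem_EN.mpr ⟨hbv, hev.1⟩) with rfl | h'
    · exact h0 hda
    · exact hev.2.2 h')
  have hdb : 1 ≤ d' b := by omega
  refine ⟨d', cut_le R.adj, k1, k5.trans_le R.sum_le,
    fun t ht => (h.mem_EN_cut_iff.mp (R.subset_left ht)).1,
    fun t ht => (h.mem_EN_cut_iff.mp (R.subset_right ht)).1, R.odd_left, R.odd_right,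
    ?_, ?_, ?_, ?_, ?_⟩
  · intro v hvy hv
    by_cases h1 : v = b
    · exact h1 ▸ h.eb
    by_cases h3 : v = c
    · exact h3 ▸ h.ec
    rw [k4 v h1 h3] at hv
    exact (h.ev_cut_iff.mp (R.zero v hvy hv)).1
  · intro v hv hvy
    rw [mem_nbr] at hv
    by_cases h1 : v = b
    · exact h1 ▸ hdb
    by_cases h3 : v = c
    · exact absurd (h3 ▸ hv) hcw
    rw [k4 v h1 h3]
    exact R.pos_left v (mem_nbr.mpr ((cut_adj_of_ne hbw.symm h1).mpr hv)) hvy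
  · intro v hv
    rw [mem_nbr] at hv
    by_cases h1 : v = b
    · exact h1 ▸ hdb
    by_cases h3 : v = c
    · exact absurd (h3 ▸ hv) hcy
    rw [k4 v h1 h3]
    exact R.pos_right v (mem_nbr.mpr ((cut_adj_of_ne hby'.symm h1).mpr hv))
  · intro t ht hyt
    exact R.disj t ht ((cut_adj_of_ne hby'.symm
      (h.mem_EN_cut_iff.mp (R.subset_left ht)).2.1).mpr hyt)
  · rw [k4 y hby'.symm hcy'.symm]
    exact R.pos_of_nonempty

theorem ReadyEdge.good {G : SimpleGraph V} {w y : V} {S T : Finset V} {d : V → ℕ}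
    (ow : ¬ Ev G w) (oy : ¬ Ev G y) (h2 : ∀ v, Ev G v → (EN G v).card ≤ 2)
    (R : ReadyEdge G w y S T d) : Good G := by
  classical
  have hwy := R.adj
  have hS : ∀ t ∈ S, G.Adj w t ∧ Ev G t ∧ t ≠ y := fun t ht =>
    ⟨(mem_EN.mp (R.subset_left ht)).1, (mem_EN.mp (R.subset_left ht)).2,
      fun e => oy (e ▸ (mem_EN.mp (R.subset_left ht)).2)⟩
  have hwT : w ∉ T := fun h => ow (mem_EN.mp (R.subset_right h)).2
  have hyw : (cut G y T).Adj y w := cut_adj_self.mpr ⟨hwy.symm, hwT⟩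
  have hle : cut (cut G y T) y {w} ≤ G := cut_le.trans cut_le
  obtain ⟨d₂, k1, k2, k3, k4⟩ := R.ends.star_of_selectable (by
      intro t ht
      obtain ⟨h1, -, h3⟩ := hS t ht
      exact mem_nbr.mpr ((cut_adj_of_ne hwy.ne h3).mpr ((cut_adj_of_ne hwy.ne h3).mpr h1)))
    (by
      intro v hv
      rw [mem_nbr] at hv
      refine R.pos_left v (mem_nbr.mpr (hle hv)) ?_
      rintro rfl
      exact (cut_adj_self.mp hv.symm).2 (by simp))
    (by
      intro t ht
      refine le_trans (Finset.card_le_card ?_) (h2 t (hS t ht).2.1)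
      intro v hv
      rw [Finset.mem_filter, mem_nbr] at hv
      have hvy : v ≠ y := by
        rintro rfl
        exact R.disj t ht (hle hv.1).symm
      refine mem_EN.mpr ⟨hle hv.1, ?_⟩
      rcases hv.2.2 with h | h
      · exact R.zero v hvy h
      · exact (hS v h).2.1)
    (fun σ hσ => Selectable.of_odd hσ R.odd_left (R.pos_right w (mem_nbr.mpr hwy.symm)))
  have hw2 : 2 ≤ d₂ w := by
    have hE : Ev (cut (cut G y T) y {w}) w := by
      rw [ev_cut_mem (by simpa [mem_nbr] using hyw) (by simp), ev_cut_of_notMem hwy.ne hwT]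
      exact ow
    have h1 := k1.even w
    have h3 := R.pos_right w (mem_nbr.mpr hwy.symm)
    rw [Ev, Nat.even_iff] at hE
    rw [Nat.even_iff] at h1
    omega
  have hd2 : ∀ v ∈ nbr G y, v ≠ w → 1 ≤ d₂ v := by
    intro v hv hvw
    rw [k3 v hvw fun h => R.disj v h (mem_nbr.mp hv)]
    exact R.pos_right v hv
  obtain ⟨d₃, j1, j2, j3, j4, j5⟩ := k1.aug_of_pos hyw (by
    intro v hv
    by_cases hvw : v = w
    · rw [hvw]
      omega
    · exact hd2 v (mem_nbr.mpr (cut_le (mem_nbr.mp hv))) hvw)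
  have hsum := R.sum_le
  rcases R.odd_right with rfl | hodd
  · rw [cut_empty] at j1
    exact ⟨d₃, j1, by omega⟩
  have hzero : ∀ v, v ≠ y → d₃ v = 0 ∨ v ∈ T → Ev G v := by
    rintro v hvy (h | h)
    · by_cases hvw : v = w
      · rw [hvw] at h
        omega
      rw [j4 v hvy hvw] at h
      by_cases hvS : v ∈ S
      · exact (hS v hvS).2.1
      · rw [k3 v hvw hvS] at h
        exact R.zero v hvy h
    · exact (mem_EN.mp (R.subset_right h)).2
  obtain ⟨d₄, i1, -, -, i4⟩ := j1.star_of_selectable (R.subset_right.trans EN_subset_nbr)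
    (by
      intro v hv
      by_cases hvw : v = w
      · rw [hvw]
        omega
      · rw [j4 v (ne_of_mem_nbr hv) hvw]
        exact hd2 v hv hvw)
    (fun t ht => (zcount_le_card (t := t) hzero).trans
      ((Finset.card_le_card (Finset.erase_subset _ _)).trans
        (h2 t (mem_EN.mp (R.subset_right ht)).2)))
    (fun σ hσ => Selectable.of_odd hσ hodd (by omega))
  exact ⟨d₄, i1, by omega⟩

theorem Tri.EN_cut_eq_singleton {G : SimpleGraph V} {a b c x : V} (h : Tri G a b c)
    (ha : G.Adj x a) (hsub : ∀ v ∈ EN G x, v = a ∨ v = b ∨ v = c) :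
    EN (cut G b {c}) x = {a} := by
  ext v
  rw [h.mem_EN_cut_iff, Finset.mem_singleton]
  constructor
  · rintro ⟨h1, h2, h3⟩
    have := hsub v h1
    tauto
  · rintro rfl
    exact ⟨mem_EN.mpr ⟨ha, h.ea⟩, h.ab.ne, h.ac.ne⟩

theorem Tri.card_EN_eq_three {G : SimpleGraph V} {a b c x : V} (h : Tri G a b c)
    (ha : G.Adj x a) (hb : G.Adj x b) (hc : G.Adj x c)
    (hsub : ∀ v ∈ EN G x, v = a ∨ v = b ∨ v = c) : (EN G x).card = 3 := by
  classical
  refine Finset.card_eq_three.mpr ⟨a, b, c, h.ab.ne, h.ac.ne, h.bc.ne, ?_⟩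
  ext v
  simp only [Finset.mem_insert, Finset.mem_singleton]
  refine ⟨hsub v, ?_⟩
  rintro (rfl | rfl | rfl)
  · exact mem_EN.mpr ⟨ha, h.ea⟩
  · exact mem_EN.mpr ⟨hb, h.eb⟩
  · exact mem_EN.mpr ⟨hc, h.ec⟩

theorem exists_readyEdge_of_tri {G : SimpleGraph V} {a b c w y : V} (hG : Cls G)
    (IH : ∀ H : SimpleGraph V, esize H < esize G → Cls H → Good H)
    (h2 : ∀ v, Ev G v → (EN G v).card ≤ 2) (ow : ¬ Ev G w) (oy : ¬ Ev G y) (hwy : G.Adj w y)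
    (h : Tri G a b c) (ha : G.Adj w a) (hb : G.Adj w b)
    (hsub : ∀ v ∈ EN G w, v = a ∨ v = b ∨ v = c) (hya : ¬ G.Adj y a) (hyb : ¬ G.Adj y b)
    (hyc : ¬ G.Adj y c) (hy : EN G y = ∅ ∨ (EN G y).card % 2 = 1) :
    ∃ S d, ReadyEdge G w y S (EN G y) d := by
  by_cases hc : G.Adj w c
  · have h3 := h.card_EN_eq_three ha hb hc hsub
    refine ⟨EN G w, exists_readyEdge hG IH h2 ow oy hwy (by omega) hy ?_⟩
    intro t ht
    rcases hsub t ht with rfl | rfl | rfl <;> assumption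
  · have e := h.EN_cut_eq_singleton ha hsub
    have ey := h.EN_cut_eq hyb hyc
    have hbw : b ≠ w := hb.ne'
    have hby : b ≠ y := fun k => oy (k ▸ h.eb)
    obtain ⟨d, hd⟩ := exists_readyEdge (w := w) (y := y) (h.reduces.cls hG)
      (fun H hH => IH H (hH.trans h.esize_lt)) (h.reduces.card_EN_le h2)
      (fun h' => ow (h.ev_cut_iff.mp h').1) (fun h' => oy (h.ev_cut_iff.mp h').1)
      ((cut_adj_of_ne hbw.symm hby.symm).mpr hwy) (by rw [e, Finset.card_singleton])
      (by rwa [ey])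
      (by
        rw [e]
        intro t ht
        rw [Finset.mem_singleton.mp ht]
        exact fun k => hya (cut_le k))
    rw [e, ey] at hd
    exact ⟨{a}, hd.step h ow oy (by simp) hc hyc fun k => absurd k hyb⟩

theorem exists_readyEdge_of_tri_tri {G : SimpleGraph V} {a b c p q r w y : V} (hG : Cls G)
    (IH : ∀ H : SimpleGraph V, esize H < esize G → Cls H → Good H)
    (h2 : ∀ v, Ev G v → (EN G v).card ≤ 2) (ow : ¬ Ev G w) (oy : ¬ Ev G y) (hwy : G.Adj w y)
    (h : Tri G a b c) (ha : G.Adj w a) (hb : G.Adj w b)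
    (hsub : ∀ v ∈ EN G w, v = a ∨ v = b ∨ v = c) (hya : ¬ G.Adj y a) (hyb : ¬ G.Adj y b)
    (hyc : ¬ G.Adj y c) (h' : Tri G p q r) (hp : G.Adj y p) (hq : G.Adj y q)
    (hsub' : ∀ v ∈ EN G y, v = p ∨ v = q ∨ v = r) : ∃ S T d, ReadyEdge G w y S T d := by
  by_cases hr : G.Adj y r
  · have h3 := h'.card_EN_eq_three hp hq hr hsub'
    obtain ⟨S, d, hd⟩ := exists_readyEdge_of_tri hG IH h2 ow oy hwy h ha hb hsub hya hyb hyc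
      (Or.inr (by omega))
    exact ⟨S, _, d, hd⟩
  have n1 : p ≠ a := fun e => hya (e ▸ hp)
  have n2 : p ≠ b := fun e => hyb (e ▸ hp)
  have n3 : p ≠ c := fun e => hyc (e ▸ hp)
  obtain ⟨q1, q2, q3, r1, r2, r3⟩ := h'.disjoint h n1 n2 n3
  have hqw : q ≠ w := fun k => ow (k ▸ h'.eb)
  have hwr : ¬ G.Adj w r := fun k => by
    have := hsub r (mem_EN.mpr ⟨k, h'.ec⟩)
    tauto
  have e := h'.EN_cut_eq_singleton hp hsub'
  obtain ⟨S, d, hd⟩ := exists_readyEdge_of_tri (w := w) (y := y) (h'.reduces.cls hG)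
    (fun H hH => IH H (hH.trans h'.esize_lt)) (h'.reduces.card_EN_le h2)
    (fun k => ow (h'.ev_cut_iff.mp k).1) (fun k => oy (h'.ev_cut_iff.mp k).1)
    ((cut_adj_of_ne hqw.symm hq.ne).mpr hwy) (h'.cut_of_disjoint h n1 n2 n3)
    ((cut_adj_of_ne hqw.symm q1.symm).mpr ha) ((cut_adj_of_ne hqw.symm q2.symm).mpr hb)
    (fun v hv => hsub v (h'.mem_EN_cut_iff.mp hv).1) (fun k => hya (cut_le k))
    (fun k => hyb (cut_le k)) (fun k => hyc (cut_le k))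
    (by rw [e, Finset.card_singleton]; exact Or.inr rfl)
  rw [e] at hd
  exact ⟨S, {p}, hd.step h' ow oy (by simp) hwr hr (by simp)⟩

end OddEdge

section Main
variable [Fintype V]

/-- Two triangles of even vertices that meet are equal. -/
theorem Tri.mem_of_meet {G : SimpleGraph V} {a b c p q r : V} (h : Tri G a b c)
    (h' : Tri G p q r) (hm : a = p ∨ a = q ∨ a = r) :
    (p = a ∨ p = b ∨ p = c) ∧ (q = a ∨ q = b ∨ q = c) ∧ (r = a ∨ r = b ∨ r = c) := by
  have key : ∀ p q r, Tri G p q r → (a = p ∨ a = q ∨ a = r) → p = a ∨ p = b ∨ p = c := by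
    intro p q r h' hm
    by_contra hcon
    push Not at hcon
    obtain ⟨q1, -, -, r1, -⟩ := h'.disjoint h hcon.1 hcon.2.1 hcon.2.2
    rcases hm with hm | hm | hm
    · exact hcon.1 hm.symm
    · exact q1 hm.symm
    · exact r1 hm.symm
  exact ⟨key p q r h' hm, key q r p h'.rotate (by tauto), key r p q h'.rotate.rotate (by tauto)⟩

theorem good_of_no_tri {G : SimpleGraph V} (hG : Cls G)
    (IH : ∀ H : SimpleGraph V, esize H < esize G → Cls H → Good H) (hT : TriOrIso G)
    (hno : ∀ a b c, ¬ Tri G a b c) : Good G := by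
  classical
  by_contra hgood
  have hiso : ∀ v, Ev G v → ¬ (nbr G v).Nonempty := by
    rintro v hv ⟨u, hu⟩
    rw [mem_nbr] at hu
    by_cases hev : Ev G u
    · rcases hT v hv with h | ⟨b, c, h⟩
      · have : u ∈ EN G v := mem_EN.mpr ⟨hu, hev⟩
        rw [h] at this
        simp at this
      · exact hno v b c h
    · rcases good_or_EN_subset_tri hG IH hT hev ⟨v, mem_EN.mpr ⟨hu.symm, hv⟩⟩ with
        h | ⟨a, b, c, h, -⟩
      · exact hgood h
      · exact hno a b c h
  refine hgood ⟨fun v => if Ev G v then 0 else 1, hasEnds_of_parity ?_ ?_, ?_⟩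
  · intro v
    by_cases hv : Ev G v
    · have : Even (nbr G v).card := hv
      simpa only [hv, if_true, zero_add] using this
    · simp only [hv, if_false]
      rw [Ev, Nat.even_iff] at hv
      rw [Nat.even_iff]
      omega
  · intro u v hu _ hnu _
    by_cases h : Ev G u
    · exact absurd hnu (hiso u h)
    · simp [h] at hu
  · rw [← Finset.card_univ, Finset.card_eq_sum_ones]
    refine Finset.sum_le_sum fun v _ => ?_
    split_ifs <;> simp

/-- Odd vertices adjacent to a triangle of even vertices see at least two of its vertices, and no
other even vertices. -/
theorem adj_two_of_adj {G : SimpleGraph V} {a b c v u : V} (hG : Cls G)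
    (IH : ∀ H : SimpleGraph V, esize H < esize G → Cls H → Good H) (hT : TriOrIso G)
    (hgood : ¬ Good G) (h : Tri G a b c) (hv : ¬ Ev G v) (hu : u = a ∨ u = b ∨ u = c)
    (hvu : G.Adj v u) :
    ((G.Adj v a ∧ G.Adj v b) ∨ (G.Adj v a ∧ G.Adj v c) ∨ (G.Adj v b ∧ G.Adj v c)) ∧
      ∀ t ∈ EN G v, t = a ∨ t = b ∨ t = c := by
  have eu : Ev G u := by
    rcases hu with rfl | rfl | rfl
    exacts [h.ea, h.eb, h.ec]
  have hmem : u ∈ EN G v := mem_EN.mpr ⟨hvu, eu⟩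
  obtain ⟨p, q, r, h', hp, hq, hsub⟩ :=
    (good_or_EN_subset_tri hG IH hT hv ⟨u, hmem⟩).resolve_left hgood
  have hm : (p = a ∨ p = b ∨ p = c) ∧ (q = a ∨ q = b ∨ q = c) ∧ (r = a ∨ r = b ∨ r = c) := by
    have hup := hsub u hmem
    rcases hu with rfl | rfl | rfl
    · exact h.mem_of_meet h' hup
    · obtain ⟨k₁, k₂, k₃⟩ := h.rotate.mem_of_meet h' hup
      exact ⟨or_rotate.mpr k₁, or_rotate.mpr k₂, or_rotate.mpr k₃⟩
    · obtain ⟨k₁, k₂, k₃⟩ := h.rotate.rotate.mem_of_meet h' hup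
      exact ⟨or_rotate.mp k₁, or_rotate.mp k₂, or_rotate.mp k₃⟩
  constructor
  · have hpq := h'.ab.ne
    rcases hm.1 with e₁ | e₁ | e₁ <;> rcases hm.2.1 with e₂ | e₂ | e₂ <;> rw [e₁] at hp <;>
      rw [e₂] at hq <;> first | exact absurd (e₁.trans e₂.symm) hpq | simp [hp, hq]
  · intro t ht
    rcases hsub t ht with rfl | rfl | rfl
    exacts [hm.1, hm.2.1, hm.2.2]

theorem good_of_odd_edge {G : SimpleGraph V} {a b c w y : V} (hG : Cls G)
    (IH : ∀ H : SimpleGraph V, esize H < esize G → Cls H → Good H) (hT : TriOrIso G)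
    (ow : ¬ Ev G w) (oy : ¬ Ev G y) (hwy : G.Adj w y) (h : Tri G a b c) (ha : G.Adj w a)
    (hb : G.Adj w b) (hsub : ∀ v ∈ EN G w, v = a ∨ v = b ∨ v = c) (hya : ¬ G.Adj y a)
    (hyb : ¬ G.Adj y b) (hyc : ¬ G.Adj y c) : Good G := by
  have h2 := hT.card_le_two
  rcases Finset.eq_empty_or_nonempty (EN G y) with h0 | hne
  · obtain ⟨S, d, hd⟩ := exists_readyEdge_of_tri hG IH h2 ow oy hwy h ha hb hsub hya hyb hyc
      (Or.inl h0)
    exact hd.good ow oy h2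
  · rcases good_or_EN_subset_tri hG IH hT oy hne with hg | ⟨p, q, r, h', hp, hq, hsub'⟩
    · exact hg
    · obtain ⟨S, T, d, hd⟩ := exists_readyEdge_of_tri_tri hG IH h2 ow oy hwy h ha hb hsub hya hyb
        hyc h' hp hq hsub'
      exact hd.good ow oy h2

theorem good_of_tri {G : SimpleGraph V} {a b c : V} (hG : Cls G)
    (IH : ∀ H : SimpleGraph V, esize H < esize G → Cls H → Good H) (hT : TriOrIso G)
    (h : Tri G a b c) : Good G := by
  by_contra hgood
  refine hG.2 ⟨{v | v = a ∨ v = b ∨ v = c ∨ (¬ Ev G v ∧ ((G.Adj v a ∧ G.Adj v b) ∨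
    (G.Adj v a ∧ G.Adj v c) ∨ (G.Adj v b ∧ G.Adj v c)))}, a, b, c, by simp, by simp, by simp,
    h.ab, h.ac, h.bc, h.ea, h.eb, h.ec, ?_, ?_⟩
  · intro u hu y huy
    have near : ∀ t, (t = a ∨ t = b ∨ t = c) → ¬ Ev G y → G.Adj y t → y = a ∨ y = b ∨ y = c ∨
        (¬ Ev G y ∧ ((G.Adj y a ∧ G.Adj y b) ∨ (G.Adj y a ∧ G.Adj y c) ∨
          (G.Adj y b ∧ G.Adj y c))) := fun t ht hy hyt =>
      Or.inr (Or.inr (Or.inr ⟨hy, (adj_two_of_adj hG IH hT hgood h hy ht hyt).1⟩))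
    by_cases hut : u = a ∨ u = b ∨ u = c
    · by_cases hy : Ev G y
      · have hm : y ∈ EN G u := mem_EN.mpr ⟨huy, hy⟩
        rcases hut with rfl | rfl | rfl
        · have := h.na y hm
          simp only [Set.mem_ofPred_eq]
          tauto
        · have := h.nb y hm
          simp only [Set.mem_ofPred_eq]
          tauto
        · have := h.nc y hm
          simp only [Set.mem_ofPred_eq]
          tauto
      · exact near u hut hy huy.symm
    · obtain ⟨ou, htwo⟩ : ¬ Ev G u ∧ ((G.Adj u a ∧ G.Adj u b) ∨ (G.Adj u a ∧ G.Adj u c) ∨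
          (G.Adj u b ∧ G.Adj u c)) := by
        simp only [Set.mem_ofPred_eq] at hu
        tauto
      have hsub : ∀ t ∈ EN G u, t = a ∨ t = b ∨ t = c := by
        rcases htwo with k | k | k
        · exact (adj_two_of_adj hG IH hT hgood h ou (Or.inl rfl) k.1).2
        · exact (adj_two_of_adj hG IH hT hgood h ou (Or.inl rfl) k.1).2
        · exact (adj_two_of_adj hG IH hT hgood h ou (Or.inr (Or.inl rfl)) k.1).2
      by_cases hy : Ev G y
      · have := hsub y (mem_EN.mpr ⟨huy, hy⟩)
        simp only [Set.mem_ofPred_eq]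
        tauto
      by_contra hcon
      have hya : ¬ G.Adj y a := fun k => hcon (near a (by simp) hy k)
      have hyb : ¬ G.Adj y b := fun k => hcon (near b (by simp) hy k)
      have hyc : ¬ G.Adj y c := fun k => hcon (near c (by simp) hy k)
      refine hgood ?_
      rcases htwo with k | k | k
      · exact good_of_odd_edge hG IH hT ou hy huy h k.1 k.2 hsub hya hyb hyc
      · exact good_of_odd_edge hG IH hT ou hy huy h.swap k.1 k.2
          (fun v hv => by have := hsub v hv; tauto) hya hyc hyb
      · exact good_of_odd_edge hG IH hT ou hy huy h.rotate k.1 k.2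
          (fun v hv => by have := hsub v hv; tauto) hyb hyc hya
  · intro v hv na nb nc
    simp only [Set.mem_ofPred_eq] at hv
    tauto

/-- Every graph of the class decomposes into at most `|V| / 2` paths. -/
theorem Cls.good {G : SimpleGraph V} (hG : Cls G) : Good G := by
  induction hn : esize G using Nat.strong_induction_on generalizing G with
  | _ n ih =>
    subst hn
    have IH : ∀ H : SimpleGraph V, esize H < esize G → Cls H → Good H := fun H hH hcls =>
      ih (esize H) hH hcls rfl
    rcases good_or_triOrIso hG IH with h | hT
    · exact h
    by_cases hex : ∃ a b c, Tri G a b c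
    · obtain ⟨a, b, c, h⟩ := hex
      exact good_of_tri hG IH hT h
    · push Not at hex
      exact good_of_no_tri hG IH hT hex

/-- A connected graph whose even vertices have at most three even neighbours has a decomposition
with at most `|V| + 1` path ends. -/
theorem exists_hasEnds_of_connected {G : SimpleGraph V} (hconn : G.Connected)
    (h3 : ∀ v, Ev G v → (EN G v).card ≤ 3) :
    ∃ d, HasEnds G d ∧ ∑ v, d v ≤ Fintype.card V + 1 := by
  classical
  by_cases hS : Stuck G
  · obtain ⟨C, a, b, c, ha, hb, hc, hab, hac, hbc, ea, eb, ec, hC, hodd⟩ := hS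
    have hall : ∀ v, v ∈ C := by
      intro v
      obtain ⟨p⟩ := hconn.preconnected a v
      have hwalk : ∀ {u w : V} (p : G.Walk u w), u ∈ C → w ∈ C := by
        intro u w p
        induction p with
        | nil => exact id
        | cons hadj p ih => exact fun hu => ih (hC _ hu _ hadj)
      exact hwalk p ha
    refine ⟨fun v => if v = a then 0 else if v = b ∨ v = c then 2 else 1,
      hasEnds_of_parity ?_ ?_, ?_⟩
    · intro v
      by_cases h1 : v = a
      · subst h1
        have : Even (nbr G v).card := ea
        simpa using this
      by_cases h2 : v = b
      · subst h2
        have : Even (nbr G v).card := eb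
        simpa [h1, Nat.even_add] using this
      by_cases h4 : v = c
      · subst h4
        have : Even (nbr G v).card := ec
        simpa [h1, Nat.even_add] using this
      have := (hodd v (hall v) h1 h2 h4).1
      rw [Ev, Nat.even_iff] at this
      simp only [h1, h2, h4, or_self, if_false]
      rw [Nat.even_iff]
      omega
    · intro u v hu hv _ _
      have key : ∀ t, (if t = a then 0 else if t = b ∨ t = c then 2 else 1) = 0 → t = a := by
        intro t ht
        split_ifs at ht
        assumption
      rw [key u hu, key v hv]
    · have hsum : ∑ v, ((if v = a then 0 else if v = b ∨ v = c then 2 else 1) +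
          if v = a then 1 else 0) =
          ∑ v, ((1 + if v = b then 1 else 0) + if v = c then 1 else 0) := by
        refine Finset.sum_congr rfl fun v _ => ?_
        have := hab.ne
        have := hac.ne
        have := hbc.ne
        by_cases h1 : v = a
        · subst h1
          simp [*]
        by_cases h2 : v = b
        · subst h2
          simp [*]
        by_cases h4 : v = c
        · subst h4
          simp [h1, h2]
        · simp [h1, h2, h4]
      simp only [Finset.sum_add_distrib, Finset.sum_ite_eq', Finset.mem_univ, if_true,
        Finset.sum_const, Finset.card_univ, smul_eq_mul, mul_one] at hsum
      beta_reduce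
      omega
  · obtain ⟨d, h1, h2⟩ := Cls.good ⟨h3, hS⟩
    exact ⟨d, h1, by omega⟩

end Main

section Walks

/-- A nonempty list whose consecutive vertices are adjacent is the support of a walk. -/
theorem exists_walk_of_list {G : SimpleGraph V} {x : V} {l : List V}
    (h : ∀ e ∈ listEdges (x :: l), e ∈ G.edgeSet) :
    ∃ (y : V) (p : G.Walk x y), p.support = x :: l ∧
      (p.edges : Multiset (Sym2 V)) = listEdges (x :: l) := by
  induction l generalizing x with
  | nil => exact ⟨x, Walk.nil, by simp, by simp [listEdges, headEdge]⟩
  | cons z l ih =>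
    have hxz : G.Adj x z := h s(x, z) (by simp [listEdges, headEdge])
    obtain ⟨y, p, hs, he⟩ := ih fun e he => h e (by
      rw [listEdges, Multiset.mem_add]
      exact Or.inr he)
    refine ⟨y, Walk.cons hxz p, by simp [hs], ?_⟩
    rw [Walk.edges_cons, ← Multiset.cons_coe, he, ← Multiset.singleton_add]
    rfl

theorem HasEnds.pn_le [Fintype V] {G : SimpleGraph V} {d : V → ℕ} (h : HasEnds G d) :
    2 * pn G ≤ ∑ v, d v := by
  classical
  obtain ⟨k, p, hp, he, hd⟩ := h
  have hk : ∑ v, d v = 2 * k := by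
    simp only [← hd]
    rw [Finset.sum_comm, Finset.sum_congr rfl fun i _ => sum_endCount (hp i).1]
    simp [mul_comm]
  have hmem : ∀ i, ∀ e ∈ listEdges (p i), e ∈ G.edgeSet := by
    intro i e hi
    by_contra hne
    have h0 := he e
    rw [if_neg hne, Finset.sum_eq_zero_iff] at h0
    exact Multiset.count_ne_zero.mpr hi (h0 i (Finset.mem_univ i))
  have hwalk : ∀ i, ∃ q : Σ a b : V, G.Walk a b, q.2.2.support = p i ∧
      (q.2.2.edges : Multiset (Sym2 V)) = listEdges (p i) := by
    intro i
    obtain ⟨x, l, hl⟩ := List.exists_cons_of_ne_nil (hp i).1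
    have hm := hmem i
    rw [hl] at hm ⊢
    obtain ⟨y, q, hq⟩ := exists_walk_of_list hm
    exact ⟨⟨x, y, q⟩, hq⟩
  choose q hqs hqe using hwalk
  have hedge : ∀ i e, e ∈ (q i).2.2.edges ↔ e ∈ listEdges (p i) := fun i e => by
    rw [← hqe i, Multiset.mem_coe]
  have hdisj : ∀ i j, i ≠ j → ∀ e, e ∈ (q i).2.2.edges → e ∉ (q j).2.2.edges := by
    intro i j hij e hi hj
    rw [hedge, ← Multiset.count_pos] at hi hj
    have hle : ∑ t ∈ {i, j}, (listEdges (p t)).count e ≤ ∑ t, (listEdges (p t)).count e :=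
      Finset.sum_le_sum_of_subset (Finset.subset_univ _)
    rw [he e, Finset.sum_pair hij] at hle
    split_ifs at hle <;> omega
  let D : PathDecomp G :=
    { paths := ((List.finRange k).map q).filter fun w => 0 < w.2.2.length
      nontrivial := fun w hw => by simpa using (List.mem_filter.mp hw).2
      isPath := fun w hw => by
        obtain ⟨i, -, rfl⟩ := List.mem_map.mp (List.mem_filter.mp hw).1
        rw [Walk.isPath_def, hqs]
        exact (hp i).2
      edgeDisjoint := by
        refine List.Pairwise.filter _ (List.pairwise_map.mpr ?_)
        exact (List.nodup_finRange k).imp fun {i j} hij => hdisj i j hij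
      covers := fun e hG => by
        have h1 := he e
        rw [if_pos hG] at h1
        obtain ⟨i, -, hi⟩ := Finset.exists_ne_zero_of_sum_ne_zero (h1.trans_ne one_ne_zero)
        have hi' := (hedge i e).mpr (Multiset.count_ne_zero.mp hi)
        refine ⟨q i, List.mem_filter.mpr ⟨List.mem_map_of_mem (List.mem_finRange i), ?_⟩, hi'⟩
        rw [decide_eq_true_iff, ← Walk.length_edges]
        exact List.length_pos_of_mem hi' }
  have hD : pdCard D ≤ k := (List.length_filter_le _ _).trans (by simp)
  have hpn : pn G ≤ pdCard D := Nat.sInf_le ⟨D, rfl⟩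
  omega

end Walks

theorem nbr_card_eq_ndeg [Fintype V] (G : SimpleGraph V) (v : V) : (nbr G v).card = ndeg G v := by
  rw [ndeg, ← Set.ncard_coe_finset]
  congr 1
  ext w
  simp [mem_nbr]

theorem EN_card_eq_ncard [Fintype V] (G : SimpleGraph V) (v : V) :
    (EN G v).card = {w | G.Adj v w ∧ Even (ndeg G w)}.ncard := by
  rw [← Set.ncard_coe_finset]
  congr 1
  ext w
  simp [mem_EN, Ev, nbr_card_eq_ndeg]

theorem gallai_conjecture_max_edegree_three [Fintype V] (G : SimpleGraph V)
    (hconn : G.Connected)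
    (h : ∀ v : V, Even (ndeg G v) → {w | G.Adj v w ∧ Even (ndeg G w)}.ncard ≤ 3) :
    pn G ≤ (Fintype.card V + 1) / 2 := by
  obtain ⟨d, hd, hle⟩ := exists_hasEnds_of_connected hconn fun v hv => by
    rw [EN_card_eq_ncard]
    exact h v (by rwa [Ev, nbr_card_eq_ndeg] at hv)
  have := hd.pn_le
  omega
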